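/- With the counting function N(l_1, l_2, g) as in the sieving setup, suppose l | q^m − 1, g | x^m − 1, c is a prime dividing q^m − 1 but not l, and e is a monic irreducible polynomial dividing x^m − 1 but not g. Then |N(cl, l, g) − θ(c)·N(l, l, g)| ≤ (n+2)·θ(c)·θ(l)^2·Θ(g)·W(l)^2·W(g)·q^{m/2}, where θ(u) = φ(u)/u and Θ(g) = Φ_q(g)/q^{deg g}; and the analogous bounds hold for |N(l, cl, g) − θ(c)N(l, l, g)| and for |N(l, l, eg) − Θ(e)N(l, l, g)| (with Θ(e) in place of θ(c)). -/

import Mathlib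

open Polynomial UniqueFactorizationMonoid Classical

/-- `w ∈ F_{q^m}ˣ` is `u`-free: `w ≠ 0` and `w = v ^ d` with `d` a positive divisor of `u`
implies `d = 1`. -/
def IsUFree {F : Type*} [Field F] (u : ℕ) (w : F) : Prop :=
  w ≠ 0 ∧ ∀ v : F, ∀ d : ℕ, 0 < d → d ∣ u → w = v ^ d → d = 1

/-- The `F_q[x]`-module action on `F_{q^m}`: `f ∘ α = ∑ aᵢ α^{q^i}`. -/
def polyAct {K F : Type*} [Field K] [Field F] [Algebra K F] (q : ℕ)
    (f : K[X]) (α : F) : F :=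
  f.sum fun i a => a • α ^ q ^ i

/-- `α` is `g`-free: `α = h ∘ β` with `h` a monic divisor of `g` implies `h = 1`. -/
def IsGFree {K F : Type*} [Field K] [Field F] [Algebra K F] (q : ℕ)
    (g : K[X]) (α : F) : Prop :=
  ∀ h : K[X], h.Monic → h ∣ g → (∃ β : F, α = polyAct q h β) → h = 1

/-- A rational function `f ∈ F(x)` is exceptional if `f = c·xⁱ·hᵈ` for some `d > 1` dividing
`|F| − 1`, or `f = xⁱ` with `gcd(|F| − 1, i) ≠ 1`. -/
def ExceptionalRatFunc {F : Type*} [Field F] [Fintype F] (f : RatFunc F) : Prop :=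
  (∃ (c : F) (i : ℤ) (h : RatFunc F) (d : ℕ), 1 < d ∧ d ∣ Fintype.card F - 1 ∧
      f = RatFunc.C c * RatFunc.X ^ i * h ^ d) ∨
  (∃ i : ℤ, f = RatFunc.X ^ i ∧ Nat.gcd (Fintype.card F - 1) i.natAbs ≠ 1)

/-- The counting function `N_{f,a,n}(l₁, l₂, g)`. -/
noncomputable def Ncount {K F : Type*} [Field K] [Field F] [Fintype F] [Algebra K F]
    (q : ℕ) (f : RatFunc F) (a : K) (l₁ l₂ : ℕ) (g : K[X]) : ℕ :=
  Nat.card {α : F // IsUFree l₁ α ∧ IsGFree q g α ∧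
    IsUFree l₂ (RatFunc.eval (RingHom.id F) α f) ∧ Algebra.trace K F α⁻¹ = a}

/-- The polynomial analogue `Φ_q(g)` of Euler's totient over `F_q[x]`. -/
noncomputable def polyTotient {K : Type*} [Field K] (g : K[X]) : ℕ :=
  Nat.card (K[X] ⧸ Ideal.span {g})ˣ

namespace WB

/-- exponential sums with growth bounded by `ρ^j` have no large frequencies. -/
theorem coeff_zero_of_growth (s : Finset ℂ) (c : ℂ → ℂ) (ρ C : ℝ) (hρ : 0 < ρ)
    (h : ∀ j : ℕ, 1 ≤ j → ‖∑ z ∈ s, c z * z ^ j‖ ≤ C * ρ ^ j)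
    (w : ℂ) (hw : w ∈ s) (hwρ : ρ < ‖w‖) : c w = 0 := by
  set L : ℂ[X] := Lagrange.basis s id w with hL
  have key : ∀ j : ℕ, 1 ≤ j → c w * w ^ j =
      ∑ t ∈ L.support, L.coeff t * ∑ z ∈ s, c z * z ^ (j + t) := by
    intro j _
    have h1 : ∀ z ∈ s, L.eval z = if z = w then 1 else 0 := by
      intro z hz
      split_ifs with hzw
      · rw [hzw, hL]
        exact Lagrange.eval_basis_self (Set.injOn_id _) hw
      · rw [hL]
        exact Lagrange.eval_basis_of_ne (v := id) (i := w) (j := z) (Ne.symm hzw) hz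
    calc c w * w ^ j = ∑ z ∈ s, c z * z ^ j * L.eval z := by
          rw [Finset.sum_congr rfl (fun z hz => by rw [h1 z hz])]
          simp [hw]
      _ = ∑ z ∈ s, ∑ t ∈ L.support, L.coeff t * (c z * z ^ (j + t)) := by
          refine Finset.sum_congr rfl (fun z _ => ?_)
          rw [Polynomial.eval_eq_sum, Polynomial.sum, Finset.mul_sum]
          refine Finset.sum_congr rfl (fun t _ => ?_)
          ring
      _ = _ := by
          rw [Finset.sum_comm]
          refine Finset.sum_congr rfl (fun t _ => ?_)
          rw [Finset.mul_sum]
  set C' : ℝ := ∑ t ∈ L.support, ‖L.coeff t‖ * (C * ρ ^ t) with hC'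
  have bound : ∀ j : ℕ, 1 ≤ j → ‖c w‖ * ‖w‖ ^ j ≤ C' * ρ ^ j := by
    intro j hj
    rw [← norm_pow, ← norm_mul, key j hj]
    refine (norm_sum_le _ _).trans ?_
    rw [hC', Finset.sum_mul]
    refine Finset.sum_le_sum (fun t _ => ?_)
    rw [norm_mul, mul_assoc]
    refine mul_le_mul_of_nonneg_left ?_ (norm_nonneg _)
    refine (h (j + t) (by omega)).trans (le_of_eq ?_)
    ring
  by_contra hne
  have hpos : 0 < ‖c w‖ := norm_pos_iff.mpr hne
  have hr : 1 < ‖w‖ / ρ := by rwa [one_lt_div hρ]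
  obtain ⟨n, hn⟩ := pow_unbounded_of_one_lt (C' / ‖c w‖) hr
  have hb := bound (n + 1) (by omega)
  have hn' : (‖w‖ / ρ) ^ n ≤ (‖w‖ / ρ) ^ (n + 1) := pow_le_pow_right₀ hr.le (by omega)
  have h3 : C' / ‖c w‖ < (‖w‖ / ρ) ^ (n + 1) := lt_of_lt_of_le hn hn'
  rw [div_pow, div_lt_div_iff₀ hpos (by positivity)] at h3
  nlinarith

/-- if `∑ ω_i^r - η^r = O(ρ^r)` with `|η| > ρ`, then `|∑ ω_i - η| ≤ (#ω - 1) ρ`. -/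
theorem powersum_bound (Ω : Multiset ℂ) (η : ℂ) (ρ C : ℝ) (hρ : 0 < ρ) (hη : ρ < ‖η‖)
    (h : ∀ j : ℕ, 1 ≤ j → ‖(Ω.map (fun z => z ^ j)).sum - η ^ j‖ ≤ C * ρ ^ j) :
    ‖Ω.sum - η‖ ≤ (Ω.card - 1 : ℝ) * ρ := by
  set s : Finset ℂ := insert η Ω.toFinset with hs
  set c : ℂ → ℂ := fun z => (Ω.count z : ℂ) - if z = η then 1 else 0 with hc
  have hsum : ∀ j : ℕ, (Ω.map (fun z => z ^ j)).sum - η ^ j = ∑ z ∈ s, c z * z ^ j := by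
    intro j
    have h1 : (Ω.map (fun z => z ^ j)).sum = ∑ z ∈ s, (Ω.count z : ℂ) * z ^ j := by
      rw [Finset.sum_multiset_map_count]
      rw [hs]
      simp only [nsmul_eq_mul]
      refine Finset.sum_subset (Finset.subset_insert _ _) ?_
      intro x _ hx
      have : Ω.count x = 0 := by
        rw [Multiset.count_eq_zero]; simpa using hx
      simp [this]
    rw [h1]
    simp only [hc, sub_mul, Finset.sum_sub_distrib]
    congr 1
    simp [hs]
  have hz : ∀ z ∈ s, ρ < ‖z‖ → c z = 0 := fun z hzs hzρ =>
    coeff_zero_of_growth s c ρ C hρ (fun j hj => by rw [← hsum]; exact h j hj) z hzs hzρ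
  have hη1 : Ω.count η = 1 := by
    have := hz η (by simp [hs]) hη
    simp only [hc, if_true, sub_eq_zero] at this
    exact_mod_cast this
  have hmem : η ∈ Ω := by
    rw [← Multiset.one_le_count_iff_mem]; omega
  obtain ⟨Ω', hΩ'⟩ := Multiset.exists_cons_of_mem hmem
  have hsmall : ∀ z ∈ Ω', ‖z‖ ≤ ρ := by
    intro z hzm
    by_contra hcon
    push Not at hcon
    have hzΩ : z ∈ Ω := by rw [hΩ']; exact Multiset.mem_cons_of_mem hzm
    have h0 := hz z (by simp [hs, hzΩ]) hcon
    by_cases hze : z = η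
    · subst hze
      rw [hΩ', Multiset.count_cons_self] at hη1
      have := Multiset.one_le_count_iff_mem.mpr hzm
      omega
    · simp only [hc, hze, if_false, sub_zero] at h0
      have h1 : Ω.count z = 0 := by exact_mod_cast h0
      rw [Multiset.count_eq_zero] at h1
      exact h1 hzΩ
  have h2 : ‖Ω'.sum‖ ≤ (Ω'.card : ℝ) * ρ := by
    clear hΩ'
    induction Ω' using Multiset.induction_on with
    | empty => simp
    | cons a t ih =>
      rw [Multiset.sum_cons, Multiset.card_cons]
      have h3 := ih (fun z hz => hsmall z (Multiset.mem_cons_of_mem hz))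
      have h4 := hsmall a (Multiset.mem_cons_self a t)
      have h5 := norm_add_le a t.sum
      push_cast
      linarith
  rw [hΩ']
  simpa using h2

end WB

namespace WB

/-- the power series `∑_{r ≥ 1} (∑ ω^r) T^r`. -/
noncomputable def psSeries (Ω : Multiset ℂ) : PowerSeries ℂ :=
  PowerSeries.mk (fun r => if r = 0 then 0 else (Ω.map (fun z => z ^ r)).sum)

noncomputable def prodSeries (Ω : Multiset ℂ) : PowerSeries ℂ :=
  (Ω.map (fun z => 1 - PowerSeries.C z * PowerSeries.X)).prod

theorem psSeries_single (w : ℂ) :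
    (1 - PowerSeries.C w * PowerSeries.X) * psSeries {w} = PowerSeries.C w * PowerSeries.X := by
  ext n
  rw [sub_mul, one_mul, mul_assoc, map_sub, PowerSeries.coeff_C_mul, PowerSeries.coeff_C_mul]
  rcases n with _ | n
  · simp [psSeries]
  · rw [PowerSeries.coeff_succ_X_mul]
    rcases n with _ | n
    · simp [psSeries]
    · simp [psSeries, PowerSeries.coeff_X, pow_succ]
      ring

theorem psSeries_cons (w : ℂ) (Ω : Multiset ℂ) :
    psSeries (w ::ₘ Ω) = psSeries {w} + psSeries Ω := by
  ext n
  by_cases h : n = 0 <;> simp [psSeries, h]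

theorem deriv_prodSeries (Ω : Multiset ℂ) :
    PowerSeries.X * PowerSeries.derivative ℂ (prodSeries Ω) = - (prodSeries Ω * psSeries Ω) := by
  induction Ω using Multiset.induction_on with
  | empty =>
    have : psSeries 0 = 0 := by ext n; simp [psSeries]
    simp [prodSeries, this]
  | cons w t ih =>
    have h1 : prodSeries (w ::ₘ t) =
        (1 - PowerSeries.C w * PowerSeries.X) * prodSeries t := by
      simp [prodSeries]
    have hd : PowerSeries.derivative ℂ (1 - PowerSeries.C w * PowerSeries.X) = - PowerSeries.C w := by
      ext n
      rw [PowerSeries.coeff_derivative]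
      simp [PowerSeries.coeff_X, PowerSeries.coeff_one, PowerSeries.coeff_C]
      split_ifs with h <;> simp [h]
    rw [h1, Derivation.leibniz, hd, psSeries_cons]
    have h2 := psSeries_single w
    simp only [smul_eq_mul]
    linear_combination (1 - PowerSeries.C w * PowerSeries.X) * ih + prodSeries t * h2

theorem exists_roots (a T : ℕ → ℂ) (η : ℂ) (M : ℕ) (ha : a 0 = 1)
    (hrec : ∀ N : ℕ, (N : ℂ) * a N = ∑ r ∈ Finset.Icc 1 N, T r * a (N - r))
    (hη : ∀ N, M ≤ N → a (N + 1) = η * a N) :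
    ∃ Ω : Multiset ℂ, Ω.card = M ∧
      ∀ r, 1 ≤ r → T r = η ^ r - (Ω.map (fun z => z ^ r)).sum := by
  set L : PowerSeries ℂ := PowerSeries.mk a with hL
  set TS : PowerSeries ℂ := PowerSeries.mk (fun r => if r = 0 then 0 else T r) with hTS
  have hLT : PowerSeries.X * PowerSeries.derivative ℂ L = L * TS := by
    ext n
    rw [mul_comm L TS, PowerSeries.coeff_mul n TS L, Finset.Nat.sum_antidiagonal_eq_sum_range_succ_mk]
    have h1 : PowerSeries.coeff n (PowerSeries.X * PowerSeries.derivative ℂ L) = (n : ℂ) * a n := by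
      rcases n with _ | n
      · simp
      · rw [PowerSeries.coeff_succ_X_mul, PowerSeries.coeff_derivative, hL, PowerSeries.coeff_mk]
        push_cast; ring
    rw [h1, hrec n]
    symm
    rw [Finset.sum_range_succ' , ]
    simp only [hTS, hL, PowerSeries.coeff_mk]
    simp only [if_true, zero_mul, add_zero]
    rw [Finset.range_eq_Ico, Finset.sum_Ico_add' (fun r => (if r = 0 then 0 else T r) * a (n - r)) 0 n 1]
    have : Finset.Ico (0 + 1) (n + 1) = Finset.Icc 1 n := by
      ext x; simp
    rw [this]
    refine Finset.sum_congr rfl (fun x hx => ?_)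
    have : x ≠ 0 := by have := (Finset.mem_Icc.mp hx).1; omega
    simp [this]
  set b : ℕ → ℂ := fun i => if i = 0 then 1 else a i - η * a (i - 1) with hb
  set Q : ℂ[X] := ∑ i ∈ Finset.range (M + 1), C (b i) * X ^ (M - i) with hQ
  have hQcoeff : ∀ j, Q.coeff j = if j ≤ M then b (M - j) else 0 := by
    intro j
    rw [hQ, finsetSum_coeff]
    simp only [coeff_C_mul, coeff_X_pow]
    split_ifs with hj
    · rw [Finset.sum_eq_single (M - j)]
      · have : j = M - (M - j) := by omega
        simp [← this]
      · intro i hi hne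
        have : j ≠ M - i := by have := Finset.mem_range.mp hi; omega
        simp [this]
      · intro h; exfalso; apply h; simp
    · refine Finset.sum_eq_zero (fun i hi => ?_)
      have : j ≠ M - i := by omega
      simp [this]
  have hdeg : Q.natDegree ≤ M := by
    rw [natDegree_le_iff_coeff_eq_zero]
    intro N hN
    rw [hQcoeff, if_neg (by omega)]
  have hmonic : Q.Monic := monic_of_natDegree_le_of_coeff_eq_one M hdeg (by simp [hQcoeff, hb])
  have hnd : Q.natDegree = M := by
    refine le_antisymm hdeg ?_
    apply le_natDegree_of_ne_zero
    simp [hQcoeff, hb]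
  have hsplit : Q.Splits := IsAlgClosed.splits Q
  have hcard : Q.roots.card = M := by rw [← hnd]; exact hsplit.natDegree_eq_card_roots.symm
  have hprod : (Q.roots.map (fun z => X - C z)).prod = Q :=
    (hsplit.eq_prod_roots_of_monic hmonic).symm
  have hrev : (Q.reverse : PowerSeries ℂ) = prodSeries Q.roots := by
    have aux : ∀ Ω : Multiset ℂ, (((Ω.map (fun z => X - C z)).prod.reverse : ℂ[X]) : PowerSeries ℂ)
        = prodSeries Ω := by
      intro Ω
      induction Ω using Multiset.induction_on with
      | empty =>
        have : (1 : ℂ[X]).reverse = 1 := by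
          rw [← C_1, reverse_C]
        simp [prodSeries, this]
      | cons w t ih =>
        have h1 : (X - C w : ℂ[X]).reverse = 1 - C w * X := by
          ext n
          rw [coeff_reverse, natDegree_X_sub_C]
          rcases n with _ | _ | n
          · simp [revAt_le, coeff_X, coeff_C]
          · simp [revAt_le, coeff_X, coeff_C, coeff_one]
          · rw [revAt_eq_self_of_lt (by omega)]
            simp [coeff_X, coeff_C, coeff_one]
        rw [Multiset.map_cons, Multiset.prod_cons, reverse_mul_of_domain, Polynomial.coe_mul, ih, h1]
        simp [prodSeries]
    rw [← aux, hprod]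
  have hP : (Q.reverse : PowerSeries ℂ) = (1 - PowerSeries.C η * PowerSeries.X) * L := by
    ext n
    rw [Polynomial.coeff_coe, coeff_reverse, hnd, hQcoeff, sub_mul, one_mul, mul_assoc, map_sub,
      PowerSeries.coeff_C_mul]
    have hR : PowerSeries.coeff n L - η * PowerSeries.coeff n (PowerSeries.X * L) = b n := by
      rcases n with _ | n
      · simp [hb, hL, ha]
      · rw [PowerSeries.coeff_succ_X_mul]; simp [hb, hL]
    rw [hR]
    by_cases hn : n ≤ M
    · rw [revAt_le hn]; simp [Nat.sub_sub_self hn]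
    · rw [revAt_eq_self_of_lt (by omega), if_neg hn]
      obtain ⟨k, rfl⟩ : ∃ k, n = k + 1 := ⟨n - 1, by omega⟩
      simp [hb, hη k (by omega)]
  refine ⟨Q.roots, hcard, fun r hr => ?_⟩
  have hd := deriv_prodSeries Q.roots
  rw [← hrev, hP, Derivation.leibniz] at hd
  have hdη : PowerSeries.derivative ℂ (1 - PowerSeries.C η * PowerSeries.X) = - PowerSeries.C η := by
      ext n
      rw [PowerSeries.coeff_derivative]
      simp [PowerSeries.coeff_X, PowerSeries.coeff_one, PowerSeries.coeff_C]
      split_ifs with h <;> simp [h]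
  rw [hdη] at hd
  simp only [smul_eq_mul] at hd
  have hne : (1 - PowerSeries.C η * PowerSeries.X) * L ≠ 0 := by
    intro h0
    have := congrArg (PowerSeries.coeff 0) h0
    simp [hL, ha] at this
  have hfin : ((1 - PowerSeries.C η * PowerSeries.X) * L) * (TS - psSeries {η} + psSeries Q.roots) = 0 := by
    have h2 := psSeries_single η
    linear_combination hd - (1 - PowerSeries.C η * PowerSeries.X) * hLT - L * h2
  have h0 := (mul_eq_zero.mp hfin).resolve_left hne
  have := congrArg (PowerSeries.coeff r) h0
  have hr0 : r ≠ 0 := by omega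
  simp [hTS, psSeries, hr0] at this
  linear_combination this

end WB

namespace WB

variable {F : Type*} [Field F] [Finite F]

theorem finite_monic (N : ℕ) : {g : F[X] | g.Monic ∧ g.natDegree = N}.Finite := by
  have e := Polynomial.monicEquivDegreeLT (R := F) N
  have : Finite (degreeLT F N) := Finite.of_equiv _ (degreeLTEquiv F N).symm.toEquiv
  exact Finite.of_equiv _ e.symm

/-- monic polynomials of degree `N`. -/
noncomputable def MP (F : Type*) [Field F] [Finite F] (N : ℕ) : Finset F[X] :=
  (finite_monic (F := F) N).toFinset

theorem mem_MP {N : ℕ} {g : F[X]} : g ∈ MP F N ↔ g.Monic ∧ g.natDegree = N := by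
  simp [MP]

/-- monic irreducible polynomials of degree `N`. -/
noncomputable def IP (F : Type*) [Field F] [Finite F] (N : ℕ) : Finset F[X] :=
  (MP F N).filter Irreducible

theorem mem_IP {N : ℕ} {g : F[X]} : g ∈ IP F N ↔ g.Monic ∧ g.natDegree = N ∧ Irreducible g := by
  simp [IP, mem_MP, and_assoc]

theorem degree_count (N : ℕ) (g : F[X]) (hg : g ∈ MP F N) :
    N = ∑ d ∈ Finset.Icc 1 N, ∑ P ∈ IP F d, ∑ j ∈ Finset.Icc 1 N, if P ^ j ∣ g then d else 0 := by
  obtain ⟨hmon, hdeg⟩ := mem_MP.mp hg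
  have hg0 : g ≠ 0 := hmon.ne_zero
  have h1 : N = ∑ P ∈ (normalizedFactors g).toFinset, (normalizedFactors g).count P * P.natDegree := by
    have hp : (normalizedFactors g).prod = g := by
      have := prod_normalizedFactors_eq (a := g) hg0
      rw [this]; exact hmon.normalize_eq_self
    have h2 : g.natDegree = ((normalizedFactors g).map natDegree).sum := by
      conv_lhs => rw [← hp]
      refine natDegree_multiset_prod _ ?_
      exact zero_notMem_normalizedFactors g
    rw [← hdeg, h2, Finset.sum_multiset_map_count]
    simp
  have hmem : ∀ P : F[X], P ∈ normalizedFactors g ↔ P.Monic ∧ Irreducible P ∧ P ∣ g := by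
    intro P
    rw [Polynomial.mem_normalizedFactors_iff hg0]
    tauto
  have hcount : ∀ P : F[X], P.Monic → Irreducible P →
      ∀ M, g.natDegree ≤ M → (normalizedFactors g).count P =
        ((Finset.Icc 1 M).filter (fun j => P ^ j ∣ g)).card := by
    intro P hPm hP M hM
    have hiff : ∀ j, P ^ j ∣ g ↔ j ≤ (normalizedFactors g).count P := by
      intro j
      rw [pow_dvd_iff_le_emultiplicity, emultiplicity_eq_count_normalizedFactors hP hg0,
        hPm.normalize_eq_self]
      exact_mod_cast Iff.rfl
    have hle : (normalizedFactors g).count P ≤ M := by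
      have := (hiff _).mpr le_rfl
      have h3 := natDegree_le_of_dvd this hg0
      rw [natDegree_pow] at h3
      have h4 := hP.natDegree_pos
      nlinarith
    have : ((Finset.Icc 1 M).filter (fun j => P ^ j ∣ g)) = Finset.Icc 1 ((normalizedFactors g).count P) := by
      ext j
      simp only [Finset.mem_filter, Finset.mem_Icc, hiff]
      omega
    rw [this]; simp
  conv_lhs => rw [h1]
  have h5 : ∀ d ∈ Finset.Icc 1 N, ∑ P ∈ IP F d, ∑ j ∈ Finset.Icc 1 N, (if P ^ j ∣ g then d else 0)
      = ∑ P ∈ IP F d, (normalizedFactors g).count P * P.natDegree := by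
    intro d hd
    refine Finset.sum_congr rfl (fun P hP => ?_)
    obtain ⟨hPm, hPd, hPi⟩ := mem_IP.mp hP
    rw [hcount P hPm hPi N hdeg.le, ← Finset.sum_filter, Finset.sum_const, smul_eq_mul, hPd]
  rw [Finset.sum_congr rfl h5, ← Finset.sum_biUnion]
  · refine Finset.sum_subset ?_ ?_
    · intro P hP
      rw [Multiset.mem_toFinset, hmem] at hP
      obtain ⟨hPm, hPi, hPg⟩ := hP
      rw [Finset.mem_biUnion]
      refine ⟨P.natDegree, ?_, mem_IP.mpr ⟨hPm, rfl, hPi⟩⟩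
      rw [Finset.mem_Icc]
      exact ⟨hPi.natDegree_pos, hdeg ▸ natDegree_le_of_dvd hPg hg0⟩
    · intro P _ hP
      rw [Multiset.mem_toFinset] at hP
      rw [Multiset.count_eq_zero_of_notMem hP, zero_mul]
  · intro d _ d' _ hne
    rw [Function.onFun, Finset.disjoint_left]
    intro P hP hP'
    exact hne ((mem_IP.mp hP).2.1.symm.trans (mem_IP.mp hP').2.1)

theorem sum_dvd (Λ : F[X] → ℂ) (h1 : Λ 1 = 1)
    (hmul : ∀ g h : F[X], g.Monic → h.Monic → Λ (g * h) = Λ g * Λ h)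
    (N j d : ℕ) (P : F[X]) (hP : P ∈ IP F d) :
    ∑ g ∈ MP F N, (if P ^ j ∣ g then Λ g else 0) =
      if d * j ≤ N then Λ P ^ j * ∑ g ∈ MP F (N - d * j), Λ g else 0 := by
  obtain ⟨hPm, hPd, hPi⟩ := mem_IP.mp hP
  have hpow : Λ (P ^ j) = Λ P ^ j := by
    induction j with
    | zero => simp [h1]
    | succ j ih => rw [pow_succ, hmul _ _ (hPm.pow j) hPm, ih, pow_succ]
  have hdj : (P ^ j).natDegree = d * j := by rw [natDegree_pow, hPd, mul_comm]
  rw [← Finset.sum_filter]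
  split_ifs with h
  · rw [Finset.mul_sum]
    symm
    refine Finset.sum_bij (fun g _ => P ^ j * g) ?_ ?_ ?_ ?_
    · intro g hg
      obtain ⟨hgm, hgd⟩ := mem_MP.mp hg
      rw [Finset.mem_filter, mem_MP]
      refine ⟨⟨(hPm.pow j).mul hgm, ?_⟩, dvd_mul_right _ _⟩
      rw [(hPm.pow j).natDegree_mul hgm, hdj, hgd]; omega
    · intro g _ g' _ he
      exact mul_left_cancel₀ (hPm.pow j).ne_zero he
    · intro g hg
      rw [Finset.mem_filter, mem_MP] at hg
      obtain ⟨⟨hgm, hgd⟩, ⟨g', rfl⟩⟩ := hg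
      have hg'm := (hPm.pow j).of_mul_monic_left hgm
      refine ⟨g', ?_, rfl⟩
      rw [mem_MP]
      refine ⟨hg'm, ?_⟩
      rw [(hPm.pow j).natDegree_mul hg'm, hdj] at hgd
      omega
    · intro g hg
      rw [hmul _ _ (hPm.pow j) (mem_MP.mp hg).1, hpow]
  · refine Finset.sum_eq_zero (fun g hg => ?_)
    exfalso
    rw [Finset.mem_filter, mem_MP] at hg
    have := natDegree_le_of_dvd hg.2 hg.1.1.ne_zero
    rw [hdj, hg.1.2] at this
    exact h this

/-- von Mangoldt type sums. -/
noncomputable def mangoldt (Λ : F[X] → ℂ) (N r : ℕ) : ℂ :=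
  ∑ d ∈ Finset.Icc 1 N, ∑ j ∈ Finset.Icc 1 N,
    if d * j = r then ∑ P ∈ IP F d, (d : ℂ) * Λ P ^ j else 0

theorem mangoldt_identity (Λ : F[X] → ℂ) (h1 : Λ 1 = 1)
    (hmul : ∀ g h : F[X], g.Monic → h.Monic → Λ (g * h) = Λ g * Λ h) (N : ℕ) :
    (N : ℂ) * ∑ g ∈ MP F N, Λ g =
      ∑ r ∈ Finset.Icc 1 N, mangoldt Λ N r * ∑ g ∈ MP F (N - r), Λ g := by
  have hL : (N : ℂ) * ∑ g ∈ MP F N, Λ g = ∑ d ∈ Finset.Icc 1 N, ∑ P ∈ IP F d,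
      ∑ j ∈ Finset.Icc 1 N, (d : ℂ) *
        (if d * j ≤ N then Λ P ^ j * ∑ g ∈ MP F (N - d * j), Λ g else 0) := by
    calc (N : ℂ) * ∑ g ∈ MP F N, Λ g
        = ∑ g ∈ MP F N, ∑ d ∈ Finset.Icc 1 N, ∑ P ∈ IP F d, ∑ j ∈ Finset.Icc 1 N,
            (d : ℂ) * (if P ^ j ∣ g then Λ g else 0) := by
          rw [Finset.mul_sum]
          refine Finset.sum_congr rfl (fun g hg => ?_)
          have := degree_count N g hg
          have h2 : (N : ℂ) = ∑ d ∈ Finset.Icc 1 N, ∑ P ∈ IP F d, ∑ j ∈ Finset.Icc 1 N,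
              if P ^ j ∣ g then (d : ℂ) else 0 := by
            conv_lhs => rw [this]
            push_cast
            rfl
          rw [h2]
          simp only [Finset.sum_mul]
          refine Finset.sum_congr rfl (fun d _ => Finset.sum_congr rfl (fun P _ =>
            Finset.sum_congr rfl (fun j _ => ?_)))
          split_ifs <;> simp
      _ = _ := by
          rw [Finset.sum_comm]
          refine Finset.sum_congr rfl (fun d _ => ?_)
          rw [Finset.sum_comm]
          refine Finset.sum_congr rfl (fun P hP => ?_)
          rw [Finset.sum_comm]
          refine Finset.sum_congr rfl (fun j _ => ?_)
          rw [← Finset.mul_sum, sum_dvd Λ h1 hmul N j d P hP]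
  rw [hL]
  simp only [mangoldt, Finset.sum_mul]
  rw [Finset.sum_comm]
  refine Finset.sum_congr rfl (fun d hd => ?_)
  rw [Finset.sum_comm, Finset.sum_comm (s := Finset.Icc 1 N) (t := Finset.Icc 1 N)]
  refine Finset.sum_congr rfl (fun j hj => ?_)
  rw [Finset.mem_Icc] at hd hj
  have hpos : 1 ≤ d * j := Nat.mul_pos hd.1 hj.1
  by_cases h : d * j ≤ N
  · rw [Finset.sum_eq_single (d * j)]
    · simp only [if_true, h, Finset.sum_mul]
      refine Finset.sum_congr rfl (fun P _ => by ring)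
    · intro r _ hr
      rw [if_neg (fun h => hr h.symm), zero_mul]
    · intro hn; exact absurd (Finset.mem_Icc.mpr ⟨hpos, h⟩) hn
  · simp only [h, if_false, mul_zero, Finset.sum_const_zero]
    symm
    refine Finset.sum_eq_zero (fun r hr => ?_)
    rw [Finset.mem_Icc] at hr
    rw [if_neg (by omega), zero_mul]

/-- the von Mangoldt sum as a sum over the points of the extension of degree `r`. -/
theorem mangoldt_eq_sum {k : Type*} [Field k] [Algebra F k] [Fintype k] (Λ : F[X] → ℂ) (h1 : Λ 1 = 1)
    (hmul : ∀ g h : F[X], g.Monic → h.Monic → Λ (g * h) = Λ g * Λ h) (N r : ℕ) (hr : 1 ≤ r)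
    (hrN : r ≤ N) (hk : Module.finrank F k = r) :
    mangoldt Λ N r = ∑ x : k, Λ (minpoly F x) ^ (r / (minpoly F x).natDegree) := by
  have hfin : Module.Finite F k := Module.finite_of_finrank_pos (by omega)
  have hdeg : ∀ x : k, (minpoly F x).natDegree ∣ r := fun x => by
    rw [← hk]; exact minpoly.degree_dvd (IsIntegral.of_finite F x)
  have hirr : ∀ x : k, Irreducible (minpoly F x) := fun x =>
    minpoly.irreducible (IsIntegral.of_finite F x)
  have hmon : ∀ x : k, (minpoly F x).Monic := fun x =>
    minpoly.monic (IsIntegral.of_finite F x)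
  have hcard : Nat.card k = Nat.card F ^ r := by
    rw [← hk]; exact Module.natCard_eq_pow_finrank
  -- group by the minimal polynomial
  have hfib : ∀ d, d ∣ r → ∀ P ∈ IP F d,
      ((Finset.univ : Finset k).filter (fun x => minpoly F x = P)).card = d := by
    intro d hd P hP
    obtain ⟨hPm, hPd, hPi⟩ := mem_IP.mp hP
    have hdvd : P ∣ X ^ (Nat.card F) ^ r - X := by
      rw [← hPi.natDegree_dvd_iff_dvd_X_pow_card_pow_sub_X, hPd]; exact hd
    have hsplit : (P.map (algebraMap F k)).Splits := by
      have h3 : (((X : F[X]) ^ (Nat.card F) ^ r - X).map (algebraMap F k)).Splits := by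
        have := FiniteField.isSplittingField_sub k F
        rw [← hcard, Nat.card_eq_fintype_card]
        exact this.splits
      refine h3.of_dvd ?_ (Polynomial.map_dvd _ hdvd)
      refine Polynomial.map_ne_zero (FiniteField.X_pow_card_pow_sub_X_ne_zero F (by omega) ?_)
      exact Finite.one_lt_card
    have hsep : (P.map (algebraMap F k)).Separable := by
      have : P.Separable := PerfectField.separable_of_irreducible hPi
      exact this.map
    have heq : ((Finset.univ : Finset k).filter (fun x => minpoly F x = P)) =
        (P.map (algebraMap F k)).roots.toFinset := by
      ext x
      rw [Finset.mem_filter, Multiset.mem_toFinset, mem_roots (Polynomial.map_ne_zero hPm.ne_zero)]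
      simp only [Finset.mem_univ, true_and, IsRoot.def, eval_map_algebraMap]
      constructor
      · rintro rfl; exact minpoly.aeval F x
      · intro h; exact (minpoly.eq_of_irreducible_of_monic hPi h hPm).symm
    rw [heq, Multiset.toFinset_card_of_nodup (nodup_roots hsep), ← hsplit.natDegree_eq_card_roots,
      natDegree_map, hPd]
  have hL : ∑ x : k, Λ (minpoly F x) ^ (r / (minpoly F x).natDegree) =
      ∑ d ∈ Nat.divisors r, ∑ P ∈ IP F d, (d : ℂ) * Λ P ^ (r / d) := by
    have hmaps : ∀ x ∈ (Finset.univ : Finset k), minpoly F x ∈ (Nat.divisors r).biUnion (IP F) := by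
      intro x _
      rw [Finset.mem_biUnion]
      exact ⟨_, Nat.mem_divisors.mpr ⟨hdeg x, by omega⟩, mem_IP.mpr ⟨hmon x, rfl, hirr x⟩⟩
    rw [← Finset.sum_fiberwise_of_maps_to hmaps, Finset.sum_biUnion]
    · refine Finset.sum_congr rfl (fun d hd => Finset.sum_congr rfl (fun P hP => ?_))
      rw [← hfib d (Nat.mem_divisors.mp hd).1 P hP, ← nsmul_eq_mul, ← Finset.sum_const]
      refine Finset.sum_congr rfl (fun x hx => ?_)
      rw [(Finset.mem_filter.mp hx).2, hfib d (Nat.mem_divisors.mp hd).1 P hP, (mem_IP.mp hP).2.1]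
    · intro d _ d' _ hne
      rw [Function.onFun, Finset.disjoint_left]
      intro P hP hP'
      exact hne ((mem_IP.mp hP).2.1.symm.trans (mem_IP.mp hP').2.1)
  rw [hL, mangoldt]
  have hsub : Nat.divisors r ⊆ Finset.Icc 1 N := by
    intro d hd
    rw [Finset.mem_Icc]
    exact ⟨Nat.pos_of_mem_divisors hd, (Nat.divisor_le hd).trans hrN⟩
  symm
  rw [← Finset.sum_subset hsub]
  · refine Finset.sum_congr rfl (fun d hd => ?_)
    have hd' := Nat.mem_divisors.mp hd
    have hdpos := Nat.pos_of_mem_divisors hd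
    rw [Finset.sum_eq_single (r / d)]
    · rw [if_pos (Nat.mul_div_cancel' hd'.1)]
    · intro j _ hj
      rw [if_neg]
      rintro rfl
      exact hj (Nat.mul_div_cancel_left j hdpos).symm
    · intro hn
      exfalso; apply hn
      rw [Finset.mem_Icc]
      exact ⟨Nat.div_pos (Nat.le_of_dvd (by omega) hd'.1) hdpos, (Nat.div_le_self r d).trans hrN⟩
  · intro d _ hd
    refine Finset.sum_eq_zero (fun j _ => ?_)
    rw [if_neg]
    rintro rfl
    exact hd (Nat.mem_divisors.mpr ⟨dvd_mul_right _ _, by omega⟩)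

end WB

namespace WB

theorem prod_emb {F k E : Type*} [Field F] [Field k] [Algebra F k] [FiniteDimensional F k]
    [Algebra.IsSeparable F k] [Field E] [Algebra F E] [IsAlgClosed E] (x : k) (h : E → E) :
    ∏ σ : k →ₐ[F] E, h (σ x) =
      (((minpoly F x).aroots E).map h).prod ^ Module.finrank (IntermediateField.adjoin F {x}) k := by
  have hx := Algebra.IsSeparable.isIntegral F x
  let L := IntermediateField.adjoin F {x}
  let pb : PowerBasis F L := IntermediateField.adjoin.powerBasis hx
  have : FiniteDimensional L k := FiniteDimensional.right F L k
  have : Algebra.IsSeparable L k := Algebra.isSeparable_tower_top_of_isSeparable F L k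
  have hsepL := Algebra.isSeparable_tower_bot_of_isSeparable F L k
  let : Fintype (L →ₐ[F] E) := PowerBasis.AlgHom.fintype pb
  have hgen : algebraMap L k pb.gen = x := by
    have : pb.gen = IntermediateField.AdjoinSimple.gen F x := IntermediateField.adjoin.powerBasis_gen hx
    rw [this]; rfl
  have hmin : minpoly F pb.gen = minpoly F x := by
    rw [← hgen]; exact (minpoly.algebraMap_eq (algebraMap L k).injective _).symm
  rw [Fintype.prod_equiv algHomEquivSigma (fun σ : k →ₐ[F] E => _) fun σ => h (σ.1 pb.gen),
    ← Finset.univ_sigma_univ, Finset.prod_sigma]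
  · have h1 : ∀ σ : L →ₐ[F] E, ∏ _s : (@AlgHom L k E _ _ _ _ σ.toRingHom.toAlgebra), h (σ pb.gen) =
        h (σ pb.gen) ^ Module.finrank L k := by
      intro σ
      let : Algebra L E := σ.toRingHom.toAlgebra
      simp_rw [Finset.prod_const]
      congr
      exact AlgHom.card L k E
    rw [Finset.prod_congr rfl (fun σ _ => h1 σ), Finset.prod_pow]
    congr 1
    rw [@Fintype.prod_equiv (L →ₐ[F] E) _ _ (PowerBasis.AlgHom.fintype pb) _ _ pb.liftEquiv'
      (fun σ => h (σ pb.gen)) (fun x => h x) ?_]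
    · rw [Finset.prod_mem_multiset _ _ h, Finset.prod_eq_multiset_prod, Multiset.toFinset_val,
        Multiset.dedup_eq_self.mpr, hmin]
      · exact nodup_roots (.map (Algebra.IsSeparable.isSeparable F _))
      · intro x; rfl
    · intro σ; simp only [PowerBasis.liftEquiv'_apply_coe]
  · intro σ
    simp only [algHomEquivSigma, Equiv.coe_fn_mk, AlgHom.domRestrict, AlgHom.comp_apply,
      IsScalarTower.coe_toAlgHom', hgen]

/-- resultant -/
noncomputable def Rs {F : Type*} [Field F] (u g : F[X]) : F := resultant u g

theorem Rs_mul {F : Type*} [Field F] (u g h : F[X]) (hg : g.Monic) (hh : h.Monic) :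
    Rs u (g * h) = Rs u g * Rs u h := by
  unfold Rs
  rw [hg.natDegree_mul hh]
  exact resultant_mul_right _ _ _ _ le_rfl

theorem Rs_one {F : Type*} [Field F] (u : F[X]) : Rs u 1 = 1 := by
  unfold Rs; simp

theorem Rs_X {F : Type*} [Field F] (g : F[X]) : Rs X g = g.coeff 0 := by
  unfold Rs
  have := resultant_X_pow_left g 1 g.natDegree le_rfl
  rw [pow_one, pow_one] at this
  rw [natDegree_X]; exact this

theorem Rs_congr {F : Type*} [Field F] (u g g' : F[X]) (hu : u.Monic)
    (hd : g'.natDegree = g.natDegree + 1) (hdeg : u.natDegree ≤ g.natDegree) (h : u ∣ g' - g) :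
    Rs u g' = Rs u g := by
  unfold Rs
  obtain ⟨p, hp⟩ := h
  have e : g' = g + u * p := by rw [← hp]; ring
  have hdp : p.natDegree + u.natDegree ≤ g.natDegree + 1 := by
    have h1 : (u * p).natDegree ≤ g.natDegree + 1 := by
      rw [← hp]
      refine (natDegree_sub_le _ _).trans ?_
      rw [hd]; simp
    by_cases hp0 : p = 0
    · subst hp0; simp; omega
    rw [hu.natDegree_mul' hp0] at h1
    omega
  rw [hd]
  conv_lhs => rw [e]
  rw [resultant_add_mul_right _ _ _ _ _ hdp le_rfl, resultant_add_right_deg _ _ _ _ _ le_rfl]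
  simp [hu.coeff_natDegree]

theorem Rs_minpoly {F k : Type*} [Field F] [Field k] [Algebra F k] [Finite F] [Finite k]
    (u : F[X]) (x : k) :
    Rs u (minpoly F x) ^ (Module.finrank F k / (minpoly F x).natDegree) =
      ((-1) ^ u.natDegree) ^ Module.finrank F k * Algebra.norm F (aeval x u) := by
  have : FiniteDimensional F k := Module.Finite.of_finite
  have hx := Algebra.IsSeparable.isIntegral F x
  set L := IntermediateField.adjoin F {x} with hL
  have hdeg : Module.finrank F L = (minpoly F x).natDegree := IntermediateField.adjoin.finrank hx
  have htow : Module.finrank F L * Module.finrank L k = Module.finrank F k := Module.finrank_mul_finrank F L k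
  have hpos : 0 < Module.finrank F L := Module.finrank_pos
  have hq : Module.finrank F k / (minpoly F x).natDegree = Module.finrank L k := by
    rw [← htow, ← hdeg, Nat.mul_div_cancel_left _ hpos]
  let E := AlgebraicClosure k
  have hinj : Function.Injective (algebraMap F E) := (algebraMap F E).injective
  apply hinj
  rw [hq, map_mul, Algebra.norm_eq_prod_embeddings]
  have h1 : ∀ σ : k →ₐ[F] E, σ (aeval x u) = (u.map (algebraMap F E)).eval (σ x) := by
    intro σ
    rw [← aeval_algHom_apply, aeval_def, eval_map]
  rw [Finset.prod_congr rfl (fun σ _ => h1 σ), prod_emb x (fun z => (u.map (algebraMap F E)).eval z)]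
  unfold Rs
  rw [resultant_comm]
  simp only [map_pow, map_mul, map_neg, map_one]
  rw [← resultant_map_map]
  have hm : (minpoly F x).Monic := minpoly.monic hx
  have h2 := resultant_eq_prod_eval ((minpoly F x).map (algebraMap F E)) (u.map (algebraMap F E)) u.natDegree
    (natDegree_map_le) (IsAlgClosed.splits _)
  rw [natDegree_map] at h2
  rw [h2, (hm.map _).leadingCoeff, one_pow, one_mul, mul_pow, ← htow, hdeg]
  rw [← pow_mul, ← pow_mul, mul_assoc]

theorem trace_inv {F k : Type*} [Field F] [Field k] [Algebra F k] [Finite F] [Finite k]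
    (x : k) (hx0 : x ≠ 0) :
    Algebra.trace F k x⁻¹ = (Module.finrank F k / (minpoly F x).natDegree : ℕ) *
      -((minpoly F x).coeff 1 / (minpoly F x).coeff 0) := by
  have : FiniteDimensional F k := Module.Finite.of_finite
  have hx := Algebra.IsSeparable.isIntegral F x
  set L := IntermediateField.adjoin F {x} with hL
  have hdeg : Module.finrank F L = (minpoly F x).natDegree := IntermediateField.adjoin.finrank hx
  have htow : Module.finrank F L * Module.finrank L k = Module.finrank F k := Module.finrank_mul_finrank F L k
  have hpos : 0 < Module.finrank F L := Module.finrank_pos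
  have hq : Module.finrank F k / (minpoly F x).natDegree = Module.finrank L k := by
    rw [← htow, ← hdeg, Nat.mul_div_cancel_left _ hpos]
  have hLL : IntermediateField.adjoin F {x⁻¹} = L := by
    apply le_antisymm
    · rw [IntermediateField.adjoin_le_iff, Set.singleton_subset_iff]
      exact (inv_mem (IntermediateField.mem_adjoin_simple_self F x))
    · rw [hL, IntermediateField.adjoin_le_iff, Set.singleton_subset_iff]
      have := (inv_mem (IntermediateField.mem_adjoin_simple_self F x⁻¹))
      simpa using this
  rw [trace_eq_finrank_mul_minpoly_nextCoeff, hLL, hq]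
  congr 1
  congr 1
  have hc0 : (minpoly F x).coeff 0 ≠ 0 := minpoly.coeff_zero_ne_zero hx hx0
  set g := minpoly F x with hg
  have hgd : (minpoly F x⁻¹).natDegree = g.natDegree := by
    rw [← hdeg, ← hLL, IntermediateField.adjoin.finrank (Algebra.IsSeparable.isIntegral F x⁻¹)]
  have hgpos : 0 < g.natDegree := minpoly.natDegree_pos hx
  have hntd : g.natTrailingDegree = 0 := by
    rw [natTrailingDegree_eq_zero]; right; exact hc0
  have hlc : g.reverse.leadingCoeff = g.coeff 0 := by
    rw [reverse_leadingCoeff, trailingCoeff, hntd]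
  have hnd : g.reverse.natDegree = g.natDegree := by
    rw [reverse_natDegree, hntd]; simp
  have hqq : minpoly F x⁻¹ = C (g.coeff 0)⁻¹ * g.reverse := by
    symm
    refine eq_of_monic_of_dvd_of_natDegree_le (minpoly.monic (Algebra.IsSeparable.isIntegral F x⁻¹)) ?_ ?_ ?_
    · rw [Monic, leadingCoeff_mul, hlc, leadingCoeff_C, inv_mul_cancel₀ hc0]
    · apply minpoly.dvd
      have h1 : aeval x⁻¹ g.reverse = 0 := by
        have h2 : aeval x g = 0 := minpoly.aeval F x
        let : Invertible x := invertibleOfNonzero hx0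
        have := eval₂_reverse_eq_zero_iff (algebraMap F k) x g
        rw [invOf_eq_inv] at this
        exact this.mpr h2
      simp [h1]
    · rw [natDegree_C_mul (inv_ne_zero hc0), hnd, hgd]
  rw [nextCoeff_of_natDegree_pos (by rw [hgd]; exact hgpos), hgd, hqq, coeff_C_mul, coeff_reverse]
  rw [revAt_le (by omega), show g.natDegree - (g.natDegree - 1) = 1 by omega]
  field_simp

end WB

namespace WB

variable {F : Type*} [Field F] [Fintype F]

/-- mixed character sum over an extension -/
noncomputable def mixSum (χ₁ χ₂ χ₃ : MulChar F ℂ) (ψ : AddChar F ℂ) (u v : F[X]) (β γ : F)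
    (k : Type*) [Field k] [Fintype k] [Algebra F k] : ℂ :=
  ∑ x : k, χ₁ (Algebra.norm F x) * χ₂ (Algebra.norm F (aeval x u)) *
    χ₃ (Algebra.norm F (aeval x v)) *
    ψ (β * Algebra.trace F k x + γ * Algebra.trace F k x⁻¹)

noncomputable def Lam (χ₁ χ₂ χ₃ : MulChar F ℂ) (ψ : AddChar F ℂ) (u v : F[X]) (β γ : F)
    (g : F[X]) : ℂ :=
  χ₁ (Rs X g) * χ₂ (Rs u g) * χ₃ (Rs v g) *
    ψ (β * -g.nextCoeff + γ * -(g.coeff 1 / g.coeff 0))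

variable (χ₁ χ₂ χ₃ : MulChar F ℂ) (ψ : AddChar F ℂ) (u v : F[X]) (β γ : F)

theorem Lam_one : Lam χ₁ χ₂ χ₃ ψ u v β γ 1 = 1 := by
  have : nextCoeff (1 : F[X]) = 0 := by simp [nextCoeff]
  simp [Lam, Rs_one, coeff_one, this]

theorem Lam_mul (g h : F[X]) (hg : g.Monic) (hh : h.Monic) :
    Lam χ₁ χ₂ χ₃ ψ u v β γ (g * h) = Lam χ₁ χ₂ χ₃ ψ u v β γ g * Lam χ₁ χ₂ χ₃ ψ u v β γ h := by
  by_cases h0 : g.coeff 0 = 0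
  · have : (g * h).coeff 0 = 0 := by simp [mul_coeff_zero, h0]
    simp [Lam, Rs_X, h0, this, MulChar.map_zero]
  by_cases h1 : h.coeff 0 = 0
  · have : (g * h).coeff 0 = 0 := by simp [mul_coeff_zero, h1]
    simp [Lam, Rs_X, h1, this, MulChar.map_zero]
  have e1 : β * -(g * h).nextCoeff + γ * -((g * h).coeff 1 / (g * h).coeff 0) =
      (β * -g.nextCoeff + γ * -(g.coeff 1 / g.coeff 0)) +
      (β * -h.nextCoeff + γ * -(h.coeff 1 / h.coeff 0)) := by
    rw [hg.nextCoeff_mul hh, mul_coeff_zero, mul_coeff_one]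
    field_simp
    ring
  unfold Lam
  rw [e1, Rs_mul _ _ _ hg hh, Rs_mul _ _ _ hg hh, Rs_mul _ _ _ hg hh, AddChar.map_add_eq_mul]
  simp only [map_mul]
  ring

theorem Lam_minpoly {k : Type*} [Field k] [Fintype k] [Algebra F k] (x : k) :
    Lam χ₁ χ₂ χ₃ ψ u v β γ (minpoly F x) ^ (Module.finrank F k / (minpoly F x).natDegree) =
    (χ₁ (-1) * χ₂ ((-1) ^ u.natDegree) * χ₃ ((-1) ^ v.natDegree)) ^ Module.finrank F k *
     (χ₁ (Algebra.norm F x) * χ₂ (Algebra.norm F (aeval x u)) *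
    χ₃ (Algebra.norm F (aeval x v)) *
    ψ (β * Algebra.trace F k x + γ * Algebra.trace F k x⁻¹)) := by
  have : FiniteDimensional F k := Module.Finite.of_finite
  have hx := Algebra.IsSeparable.isIntegral F x
  have hq : Module.finrank F k / (minpoly F x).natDegree =
      Module.finrank (IntermediateField.adjoin F {x}) k := by
    rw [← Module.finrank_mul_finrank F (IntermediateField.adjoin F {x}) k,
      ← IntermediateField.adjoin.finrank hx, Nat.mul_div_cancel_left _ Module.finrank_pos]
  set r := Module.finrank F k / (minpoly F x).natDegree with hr
  have h1 := Rs_minpoly (X : F[X]) x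
  have h2 := Rs_minpoly u x
  have h3 := Rs_minpoly v x
  rw [← hr] at h1 h2 h3
  rw [natDegree_X, pow_one, aeval_X] at h1
  unfold Lam
  by_cases hx0 : x = 0
  · have hr0 : r ≠ 0 := by
      rw [hq]; have : FiniteDimensional (IntermediateField.adjoin F {x}) k := FiniteDimensional.right F _ k
      exact Module.finrank_pos.ne'
    subst hx0
    have : Rs X (minpoly F (0:k)) = 0 := by rw [Rs_X]; simp [minpoly.zero]
    rw [this]
    rw [Algebra.norm_zero, MulChar.map_zero]; simp [hr0]
  have hxp : ψ (β * -(minpoly F x).nextCoeff + γ * -((minpoly F x).coeff 1 / (minpoly F x).coeff 0)) ^ r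
      = ψ (β * Algebra.trace F k x + γ * Algebra.trace F k x⁻¹) := by
    rw [← AddChar.map_nsmul_eq_pow, trace_inv x hx0, ← hr, trace_eq_finrank_mul_minpoly_nextCoeff, ← hq]
    congr 1
    rw [nsmul_eq_mul]; ring
  rw [mul_pow, mul_pow, mul_pow, hxp, ← map_pow χ₁, ← map_pow χ₂, ← map_pow χ₃, h1, h2, h3]
  simp only [map_mul, map_pow, mul_pow]
  ring

theorem mangoldt_Lam {k : Type*} [Field k] [Fintype k] [Algebra F k] (N r : ℕ) (hr : 1 ≤ r)
    (hrN : r ≤ N) (hk : Module.finrank F k = r) :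
    mangoldt (Lam χ₁ χ₂ χ₃ ψ u v β γ) N r =
    (χ₁ (-1) * χ₂ ((-1) ^ u.natDegree) * χ₃ ((-1) ^ v.natDegree)) ^ r *
      mixSum χ₁ χ₂ χ₃ ψ u v β γ k := by
  rw [mangoldt_eq_sum _ (Lam_one χ₁ χ₂ χ₃ ψ u v β γ) (Lam_mul χ₁ χ₂ χ₃ ψ u v β γ) N r hr hrN hk]
  subst hk
  rw [Finset.sum_congr rfl (fun x _ => Lam_minpoly χ₁ χ₂ χ₃ ψ u v β γ x), ← Finset.mul_sum]
  rfl

theorem Lam_congr (hu : u.Monic) (hv : v.Monic) (g g' : F[X]) (hg : g.Monic) (hg' : g'.Monic)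
    (hd : g'.natDegree = g.natDegree + 1) (hN : u.natDegree + v.natDegree + 3 ≤ g.natDegree)
    (hdvd : u * v * X ^ 2 ∣ g' - g) (hnext : g'.nextCoeff = g.nextCoeff) :
    Lam χ₁ χ₂ χ₃ ψ u v β γ g' = Lam χ₁ χ₂ χ₃ ψ u v β γ g := by
  have hX2 : (X ^ 2 : F[X]) ∣ g' - g := (Dvd.intro_left _ rfl).trans hdvd
  have hc : ∀ i, i < 2 → g'.coeff i = g.coeff i := by
    intro i hi
    have := (X_pow_dvd_iff.mp hX2) i hi
    rw [coeff_sub] at this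
    exact sub_eq_zero.mp this
  unfold Lam
  rw [Rs_X, Rs_X, hc 0 (by omega), hc 1 (by omega), hnext,
    Rs_congr u g g' hu hd (by omega) (((Dvd.intro _ rfl : u ∣ u * v).trans (Dvd.intro _ rfl)).trans hdvd),
    Rs_congr v g g' hv hd (by omega) (((Dvd.intro_left _ rfl : v ∣ u * v).trans (Dvd.intro _ rfl)).trans hdvd)]

theorem divX_monic (w : F[X]) (hw : w.Monic) (t : ℕ) (hd : w.natDegree = t + 1) :
   w.divX.Monic ∧ w.divX.natDegree = t := by
  have h := divX_mul_X_add w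
  have hd' : w.divX.natDegree = t := by rw [natDegree_divX_eq_natDegree_tsub_one]; omega
  refine ⟨?_, hd'⟩
  rw [Monic, leadingCoeff, hd', coeff_divX, ← hd]
  exact hw

theorem sum_Lam_succ (hu : u.Monic) (hv : v.Monic) (N : ℕ) (hN : u.natDegree + v.natDegree + 3 ≤ N) :
    ∑ g ∈ MP F (N+1), Lam χ₁ χ₂ χ₃ ψ u v β γ g =
      (Fintype.card F : ℂ) * ∑ g ∈ MP F N, Lam χ₁ χ₂ χ₃ ψ u v β γ g := by
  set M := u * v * X ^ 2 with hM
  have hMm : M.Monic := (hu.mul hv).mul (monic_X_pow 2)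
  have hMd : M.natDegree = u.natDegree + v.natDegree + 2 := by
    rw [hM, (hu.mul hv).natDegree_mul (monic_X_pow 2), hu.natDegree_mul hv, natDegree_X_pow]
  have hMdeg : 0 < M.natDegree := by omega
  have key : (Fintype.card F : ℂ) * ∑ g ∈ MP F N, Lam χ₁ χ₂ χ₃ ψ u v β γ g =
      ∑ gc ∈ (MP F N) ×ˢ (Finset.univ : Finset F), Lam χ₁ χ₂ χ₃ ψ u v β γ gc.1 := by
    rw [Finset.sum_product, Finset.mul_sum]
    refine Finset.sum_congr rfl fun g _ => ?_
    simp
  rw [key]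
  symm
  -- facts about division
  have hdiv : ∀ g : F[X], g.Monic → M.natDegree ≤ g.natDegree → (g /ₘ M).Monic ∧
      (g /ₘ M).natDegree = g.natDegree - M.natDegree := by
    intro g hg hdeg
    refine ⟨?_, natDegree_divByMonic _ hMm⟩
    rw [Monic, leadingCoeff_divByMonic_of_monic hMm, hg]
    rw [degree_eq_natDegree hMm.ne_zero, degree_eq_natDegree hg.ne_zero]
    exact_mod_cast hdeg
  have hbuild : ∀ (w ρ : F[X]), w.Monic → ρ.degree < M.degree → 1 ≤ w.natDegree →
      (M * w + ρ).Monic ∧ (M * w + ρ).natDegree = M.natDegree + w.natDegree ∧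
      (M * w + ρ).nextCoeff = M.nextCoeff + w.nextCoeff ∧ (M * w + ρ) /ₘ M = w ∧ (M * w + ρ) %ₘ M = ρ := by
    intro w ρ hw hρ hwd
    have hnd : (M * w).natDegree = M.natDegree + w.natDegree := hMm.natDegree_mul hw
    have hρd : ρ.natDegree < M.natDegree := (by
      rcases eq_or_ne ρ 0 with h | h
      · rw [h, natDegree_zero]; exact hMdeg
      · exact natDegree_lt_natDegree h hρ)
    have hlt : ρ.degree < (M * w).degree := by
      refine hρ.trans_le ?_
      rw [degree_eq_natDegree hMm.ne_zero, degree_eq_natDegree (hMm.mul hw).ne_zero, hnd]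
      exact_mod_cast Nat.le_add_right _ _
    have h2 : (M * w + ρ).natDegree = M.natDegree + w.natDegree := by
      rw [natDegree_add_eq_left_of_degree_lt hlt, hnd]
    refine ⟨(hMm.mul hw).add_of_left hlt, h2, ?_, ?_⟩
    · rw [← hMm.nextCoeff_mul hw, nextCoeff_of_natDegree_pos (by omega),
        nextCoeff_of_natDegree_pos (by omega), h2, hnd, coeff_add,
        coeff_eq_zero_of_natDegree_lt (p := ρ) (by omega), add_zero]
    · have := div_modByMonic_unique (f := M * w + ρ) w ρ hMm ⟨by ring, hρ⟩
      exact this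
  have hmodlt : ∀ g : F[X], (g %ₘ M).degree < M.degree := fun g => degree_modByMonic_lt _ hMm
  refine Finset.sum_bij' (fun gc _ => M * ((gc.1 /ₘ M) * X + C gc.2) + gc.1 %ₘ M)
    (fun g _ => (M * (g /ₘ M).divX + g %ₘ M, (g /ₘ M).coeff 0)) ?_ ?_ ?_ ?_ ?_
  · rintro ⟨g, c⟩ hg
    simp only [Finset.mem_product, mem_MP, Finset.mem_univ, and_true] at hg
    obtain ⟨hw, hwd⟩ := hdiv g hg.1 (by omega)
    have hwX : ((g /ₘ M) * X + C c).Monic ∧ ((g /ₘ M) * X + C c).natDegree = (g /ₘ M).natDegree + 1 := by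
      refine ⟨?_, ?_⟩
      · apply (hw.mul monic_X).add_of_left
        refine degree_C_le.trans_lt ?_
        rw [degree_mul_X, degree_eq_natDegree hw.ne_zero]
        exact_mod_cast Nat.succ_pos _
      · rw [natDegree_add_C, hw.natDegree_mul monic_X, natDegree_X]
    have := hbuild _ _ hwX.1 (hmodlt g) (by omega)
    rw [mem_MP]
    refine ⟨this.1, ?_⟩
    simp only
    rw [this.2.1]; omega
  · intro g hg
    rw [mem_MP] at hg
    obtain ⟨hw, hwd⟩ := hdiv g hg.1 (by omega)
    have h1 := divX_monic (g /ₘ M) hw (N - M.natDegree) (by omega)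
    have := hbuild _ _ h1.1 (hmodlt g) (by omega)
    simp only [Finset.mem_product, mem_MP, Finset.mem_univ, and_true]
    refine ⟨this.1, ?_⟩
    rw [this.2.1]; omega
  · rintro ⟨g, c⟩ hg
    simp only [Finset.mem_product, mem_MP, Finset.mem_univ, and_true] at hg
    obtain ⟨hw, hwd⟩ := hdiv g hg.1 (by omega)
    have hwX : ((g /ₘ M) * X + C c).Monic ∧ ((g /ₘ M) * X + C c).natDegree = (g /ₘ M).natDegree + 1 := by
      refine ⟨?_, ?_⟩
      · apply (hw.mul monic_X).add_of_left
        refine degree_C_le.trans_lt ?_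
        rw [degree_mul_X, degree_eq_natDegree hw.ne_zero]
        exact_mod_cast Nat.succ_pos _
      · rw [natDegree_add_C, hw.natDegree_mul monic_X, natDegree_X]
    have := hbuild _ _ hwX.1 (hmodlt g) (by omega)
    simp only [this.2.2.2.1, this.2.2.2.2]
    have hdx : ((g /ₘ M) * X + C c).divX = g /ₘ M := by
      ext i; simp [coeff_divX]
    rw [hdx]
    simp only [Prod.mk.injEq]
    refine ⟨?_, by simp⟩
    conv_rhs => rw [← modByMonic_add_div g M]
    ring
  · intro g hg
    rw [mem_MP] at hg
    obtain ⟨hw, hwd⟩ := hdiv g hg.1 (by omega)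
    have h1 := divX_monic (g /ₘ M) hw (N - M.natDegree) (by omega)
    have := hbuild _ _ h1.1 (hmodlt g) (by omega)
    simp only [this.2.2.2.1, this.2.2.2.2]
    rw [divX_mul_X_add]
    conv_rhs => rw [← modByMonic_add_div g M]
    ring
  · rintro ⟨g, c⟩ hg
    simp only [Finset.mem_product, mem_MP, Finset.mem_univ, and_true] at hg
    obtain ⟨hw, hwd⟩ := hdiv g hg.1 (by omega)
    have hwX : ((g /ₘ M) * X + C c).Monic ∧ ((g /ₘ M) * X + C c).natDegree = (g /ₘ M).natDegree + 1 := by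
      refine ⟨?_, ?_⟩
      · apply (hw.mul monic_X).add_of_left
        refine degree_C_le.trans_lt ?_
        rw [degree_mul_X, degree_eq_natDegree hw.ne_zero]
        exact_mod_cast Nat.succ_pos _
      · rw [natDegree_add_C, hw.natDegree_mul monic_X, natDegree_X]
    have := hbuild _ _ hwX.1 (hmodlt g) (by omega)
    have h0 := hbuild _ _ hw (hmodlt g) (by omega)
    have hgeq : M * (g /ₘ M) + g %ₘ M = g := by
      conv_rhs => rw [← modByMonic_add_div g M]
      ring
    rw [hgeq] at h0
    simp only
    symm
    refine Lam_congr χ₁ χ₂ χ₃ ψ u v β γ hu hv _ _ hg.1 this.1 ?_ (by omega) ?_ ?_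
    · rw [this.2.1, hwX.2]; omega
    · refine ⟨(g /ₘ M) * X + C c - g /ₘ M, ?_⟩
      rw [← hM]
      linear_combination hgeq
    · rw [this.2.2.1, h0.2.2.1]
      congr 1
      rw [nextCoeff_of_natDegree_pos (by omega), nextCoeff_of_natDegree_pos (by omega), hwX.2]
      obtain ⟨j, hj⟩ : ∃ j, (g /ₘ M).natDegree = j + 1 := ⟨(g /ₘ M).natDegree - 1, by omega⟩
      rw [hj]
      simp [coeff_C]

theorem mixSum_bound (hu : u.Monic) (hv : v.Monic) (n : ℕ) (hn : u.natDegree + v.natDegree = n) (C : ℝ)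
    (H : ∀ (k : Type) [Field k] [Fintype k] [Algebra F k],
      ‖mixSum χ₁ χ₂ χ₃ ψ u v β γ k‖ ≤ C * Real.sqrt (Fintype.card k)) :
    ‖mixSum χ₁ χ₂ χ₃ ψ u v β γ F‖ ≤ (n + 2) * Real.sqrt (Fintype.card F) := by
  set Λ := Lam χ₁ χ₂ χ₃ ψ u v β γ with hΛ
  set κ : ℂ := χ₁ (-1) * χ₂ ((-1) ^ u.natDegree) * χ₃ ((-1) ^ v.natDegree) with hκ
  have hnorm : ∀ (χ : MulChar F ℂ) (x : Fˣ), ‖χ x‖ = 1 := by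
    intro χ x
    exact Complex.norm_eq_one_of_mem_rootsOfUnity (χ.apply_mem_rootsOfUnity x)
  have hκ1 : ‖κ‖ = 1 := by
    have h1 := hnorm χ₁ (-1)
    have h2 := hnorm χ₂ ((-1) ^ u.natDegree)
    have h3 := hnorm χ₃ ((-1) ^ v.natDegree)
    push_cast at h1 h2 h3
    rw [hκ, norm_mul, norm_mul, h1, h2, h3]; norm_num
  obtain ⟨p, hp⟩ := CharP.exists F
  have hpp : Fact p.Prime := ⟨CharP.char_is_prime F p⟩
  have hext : ∀ r : ℕ, 1 ≤ r → ∃ (k : Type) (_ : Field k) (_ : Fintype k) (_ : Algebra F k),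
      Module.finrank F k = r ∧ Fintype.card k = Fintype.card F ^ r := by
    intro r hr
    have : NeZero r := ⟨by omega⟩
    have hfin : Finite (FiniteField.Extension F p r) := inferInstance
    let hft : Fintype (FiniteField.Extension F p r) := Fintype.ofFinite _
    refine ⟨FiniteField.Extension F p r, inferInstance, hft, inferInstance,
      FiniteField.finrank_extension F p r, ?_⟩
    rw [← Nat.card_eq_fintype_card, FiniteField.natCard_extension, Nat.card_eq_fintype_card]
  set Q : ℝ := (Fintype.card F : ℝ) with hQ
  have hQ1 : (1:ℝ) < Q := by rw [hQ]; exact_mod_cast Fintype.one_lt_card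
  set T : ℕ → ℂ := fun r => mangoldt Λ r r with hT
  have hTind : ∀ N r, 1 ≤ r → r ≤ N → mangoldt Λ N r = T r := by
    intro N r hr hrN
    obtain ⟨k, _, _, _, hk, _⟩ := hext r hr
    simp only [hT, hΛ]
    rw [mangoldt_Lam (k := k) χ₁ χ₂ χ₃ ψ u v β γ N r hr hrN hk,
      mangoldt_Lam (k := k) χ₁ χ₂ χ₃ ψ u v β γ r r hr le_rfl hk]
  obtain ⟨Ω, hΩ, hTΩ⟩ := exists_roots (fun N => ∑ g ∈ MP F N, Λ g) T (Fintype.card F : ℂ) (n + 3)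
    (by
      have : MP F 0 = {1} := by
        ext g
        rw [mem_MP, Finset.mem_singleton]
        constructor
        · rintro ⟨h1, h2⟩; exact eq_one_of_monic_natDegree_zero h1 h2
        · rintro rfl; simp
      simp only [this, Finset.sum_singleton]
      exact Lam_one χ₁ χ₂ χ₃ ψ u v β γ)
    (by
      intro N
      rw [mangoldt_identity Λ (Lam_one χ₁ χ₂ χ₃ ψ u v β γ) (Lam_mul χ₁ χ₂ χ₃ ψ u v β γ) N]
      refine Finset.sum_congr rfl fun r hr => ?_
      rw [Finset.mem_Icc] at hr
      rw [hTind N r hr.1 hr.2])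
    (by
      intro N hN
      exact sum_Lam_succ χ₁ χ₂ χ₃ ψ u v β γ hu hv N (by omega))
  have hmain := powersum_bound Ω (Fintype.card F : ℂ) (Real.sqrt Q) C (by positivity)
    (by
      simp only [Complex.norm_natCast]
      rw [← hQ, Real.sqrt_lt' (by linarith)]
      nlinarith)
    (by
      intro r hr
      obtain ⟨k, _, _, _, hk, hcard⟩ := hext r hr
      have h1 := hTΩ r hr
      have h2 : T r = κ ^ r * mixSum χ₁ χ₂ χ₃ ψ u v β γ k :=
        mangoldt_Lam (k := k) χ₁ χ₂ χ₃ ψ u v β γ r r hr le_rfl hk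
      rw [norm_sub_rev, ← h1, h2, norm_mul, norm_pow, hκ1, one_pow, one_mul]
      refine (H k).trans (le_of_eq ?_)
      rw [hcard, Nat.cast_pow, ← hQ]
      congr 1
      rw [Real.sqrt_eq_rpow, Real.sqrt_eq_rpow, ← Real.rpow_natCast, ← Real.rpow_natCast,
        ← Real.rpow_mul (by linarith), ← Real.rpow_mul (by linarith), mul_comm])
  have h1 := hTΩ 1 le_rfl
  have h2 : T 1 = κ ^ 1 * mixSum χ₁ χ₂ χ₃ ψ u v β γ F :=
        mangoldt_Lam (k := F) χ₁ χ₂ χ₃ ψ u v β γ 1 1 le_rfl le_rfl (Module.finrank_self F)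
  have h3 : ‖mixSum χ₁ χ₂ χ₃ ψ u v β γ F‖ = ‖Ω.sum - (Fintype.card F : ℂ)‖ := by
    rw [norm_sub_rev]
    have : (Fintype.card F : ℂ) - Ω.sum = T 1 := by rw [h1]; simp
    rw [this, h2, norm_mul, pow_one, hκ1, one_mul]
  rw [h3]
  refine hmain.trans (le_of_eq ?_)
  rw [hΩ]; push_cast; ring

end WB

namespace WB

section Stepanov

set_option linter.unusedSectionVars false

variable {k R ι Γ : Type*} [Field k] [Fintype k] [CommRing R] [IsDomain R] [Algebra k[X] R]
  [Fintype ι] [Fintype Γ]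

/-- coordinates of degree at most `A` -/
def VV (b : Module.Basis ι k[X] R) (A : ℕ) (r : R) : Prop := ∀ i, (b.repr r i).natDegree ≤ A

variable {b : Module.Basis ι k[X] R}

theorem VV.mono {A A' : ℕ} {r : R} (h : VV b A r) (hA : A ≤ A') : VV b A' r :=
  fun i => (h i).trans hA

theorem VV.add {A : ℕ} {r r' : R} (h : VV b A r) (h' : VV b A r') : VV b A (r + r') := by
  intro i
  rw [map_add, Finsupp.add_apply]
  exact (natDegree_add_le _ _).trans (max_le (h i) (h' i))

theorem VV.zero {A : ℕ} : VV b A 0 := by intro i; simp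

theorem VV.sum {A : ℕ} {J : Type*} (s : Finset J) (f : J → R) (h : ∀ j ∈ s, VV b A (f j)) :
    VV b A (∑ j ∈ s, f j) := by
  refine Finset.sum_induction f (VV b A) (fun _ _ h h' => h.add h') VV.zero h

theorem VV.smul {A B : ℕ} {r : R} (h : VV b A r) (f : k[X]) (hf : f.natDegree ≤ B) : VV b (B + A) (f • r) := by
  intro i
  rw [map_smul, Finsupp.smul_apply, smul_eq_mul]
  exact natDegree_mul_le_of_le hf (h i)

theorem VV.mul {c : ℕ} (hmul : ∀ i A r, VV b A r → VV b (A + c) (b i * r)) {A B : ℕ} {r r' : R}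
    (h : VV b A r) (h' : VV b B r') : VV b (A + B + c) (r * r') := by
  rw [← b.sum_repr r, Finset.sum_mul]
  refine VV.sum _ _ fun i _ => ?_
  rw [smul_mul_assoc, add_assoc]
  exact (hmul i B r' h').smul _ (h i)

theorem VV.pow {c : ℕ} (hmul : ∀ i A r, VV b A r → VV b (A + c) (b i * r)) {A : ℕ} {r : R}
    (h : VV b A r) (n : ℕ) (hn : 1 ≤ n) : VV b (n * (A + c)) (r ^ n) := by
  induction n, hn using Nat.le_induction with
  | base => rw [pow_one]; exact h.mono (by omega)
  | succ n hn ih =>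
    rw [pow_succ]
    exact (VV.mul hmul ih h).mono (by rw [Nat.succ_mul]; omega)

theorem VV.prod {c : ℕ} (hmul : ∀ i A r, VV b A r → VV b (A + c) (b i * r)) {A : ℕ} {J : Type*}
    (s : Finset J) (hs : s.Nonempty) (f : J → R)
    (h : ∀ j ∈ s, VV b A (f j)) : VV b (s.card * (A + c)) (∏ j ∈ s, f j) := by
  induction hs using Finset.Nonempty.cons_induction with
  | singleton a =>
    simp only [Finset.prod_singleton, Finset.card_singleton]
    exact (h a (by simp)).mono (by omega)
  | cons a s ha hs ih =>
    rw [Finset.prod_cons, Finset.card_cons]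
    have h1 := ih fun j hj => h j (by simp [hj])
    exact (VV.mul hmul (h a (by simp)) h1).mono (by rw [Nat.succ_mul]; omega)

theorem stepanov (p s t : ℕ) [Fact p.Prime] [CharP k p] [CharP R p]
    (hcard : Fintype.card k = p ^ t * p ^ s) (c : ℕ)
    (hmul : ∀ i A r, VV b A r → VV b (A + c) (b i * r))
    (hb : ∀ i, VV b 0 (b i))
    (σ : Γ → R →ₐ[k[X]] R) (hσinj : ∀ g, Function.Injective (σ g))
    (hσV : ∀ g A r, VV b A r → VV b (A + c) (σ g r))
    (htrans : ∀ g g', ∃ τ, ∀ r, σ g' (σ τ r) = σ g r)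
    (𝒳 : Finset k) (φ : k → R →+* k) (hφ : ∀ x ∈ 𝒳, ∀ f : k[X], φ x (algebraMap k[X] R f) = f.eval x)
    (hsplit : ∀ x ∈ 𝒳, ∀ r, (∀ g, φ x (σ g r) = 0) → ∀ i, (b.repr r i).eval x = 0)
    (A B : ℕ) (h1 : A * p ^ s + p ^ s * c + B + c + 1 < Fintype.card ι * ((A + 1) * (B + 1)))
    (h2 : Fintype.card Γ * (A + 2 * c) < p ^ t) :
    𝒳.card ≤ A + c + p ^ t * (B + c) := by
  by_cases hBX : 𝒳.card ≤ B
  · have : 1 ≤ p ^ t := Nat.one_le_pow _ _ (Fact.out : p.Prime).pos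
    nlinarith
  have hι : Nonempty ι := by
    by_contra hc
    rw [not_nonempty_iff] at hc
    simp at h1
  -- the family of unknowns
  set S := Fin (A + 1) × ι with hS
  set v : S → R := fun s => ((X : k[X]) ^ (s.1 : ℕ)) • b s.2 with hv
  have hps : 1 ≤ p ^ s := Nat.one_le_pow _ _ (Fact.out : p.Prime).pos
  have hpt : 1 ≤ p ^ t := Nat.one_le_pow _ _ (Fact.out : p.Prime).pos
  have hvV : ∀ s, VV b A (v s) := by
    intro s
    have := (hb s.2).smul ((X : k[X]) ^ (s.1 : ℕ)) (B := A) (by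
      rw [natDegree_X_pow]; have := s.1.2; omega)
    exact this
  set M := A * p ^ s + p ^ s * c + B + c with hM
  have hBV : ∀ u : ι → degreeLT k (B + 1), VV b B (∑ j, (u j : k[X]) • b j) := by
    intro u i
    rw [map_sum, Finsupp.finsetSum_apply]
    simp only [map_smul, Finsupp.smul_apply, Module.Basis.repr_self, smul_eq_mul]
    rw [Finset.sum_eq_single i (by intro j _ hj; simp [Finsupp.single_apply, hj]) (by simp)]
    simp
    have := (u i).2
    rw [mem_degreeLT] at this
    by_cases h0 : ((u i : k[X])) = 0
    · simp [h0]
    · exact Nat.lt_succ_iff.mp ((natDegree_lt_iff_degree_lt h0).mpr this)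
  have hΨV : ∀ u : S → ι → degreeLT k (B + 1),
      VV b M (∑ s', v s' ^ p ^ s * ∑ j, (u s' j : k[X]) • b j) := by
    intro u
    refine VV.sum _ _ fun s' _ => ?_
    exact (VV.mul hmul ((hvV s').pow hmul (p ^ s) hps) (hBV (u s'))).mono (by
      rw [hM]; apply le_of_eq; ring)
  letI hinst : ∀ N, Fintype (degreeLT k N) := fun N => Fintype.ofEquiv _ (degreeLTEquiv k N).symm.toEquiv
  have hfin : ∀ N, Fintype.card (degreeLT k N) = Fintype.card k ^ N := by
    intro N
    rw [Fintype.card_congr (degreeLTEquiv k N).toEquiv]; simp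
  obtain ⟨u1, u2, hne, heq⟩ : ∃ u1 u2 : S → ι → degreeLT k (B + 1), u1 ≠ u2 ∧
      (∑ s', v s' ^ p ^ s * ∑ j, (u1 s' j : k[X]) • b j) = (∑ s', v s' ^ p ^ s * ∑ j, (u2 s' j : k[X]) • b j) := by
    have hmem : ∀ (r : R), VV b M r → ∀ i, b.repr r i ∈ degreeLT k (M + 1) := by
      intro r hr i
      rw [mem_degreeLT]
      refine (degree_le_of_natDegree_le (hr i)).trans_lt ?_
      exact_mod_cast Nat.lt_succ_self M
    let f : (S → ι → degreeLT k (B + 1)) → (ι → degreeLT k (M + 1)) := fun u i =>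
      ⟨_, hmem _ (hΨV u) i⟩
    obtain ⟨u1, u2, h, h'⟩ := Fintype.exists_ne_map_eq_of_card_lt f (by
      simp only [Fintype.card_fun, hfin, hS, Fintype.card_prod, Fintype.card_fin]
      rw [← pow_mul, ← pow_mul, ← pow_mul]
      apply Nat.pow_lt_pow_right Fintype.one_lt_card
      rw [mul_comm]
      calc Fintype.card ι * (M + 1) < Fintype.card ι * (Fintype.card ι * ((A + 1) * (B + 1))) := by
            apply Nat.mul_lt_mul_of_pos_left h1 Fintype.card_pos
        _ = _ := by ring)
    refine ⟨u1, u2, h, ?_⟩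
    apply b.repr.injective
    ext1 i
    have := congrFun h' i
    exact congrArg Subtype.val this
  set y : S → R := fun s' => ∑ j, ((u1 s' j - u2 s' j : degreeLT k (B + 1)) : k[X]) • b j with hy
  have hyV : ∀ s', VV b B (y s') := fun s' => hBV _
  have hΨ0 : ∑ s', v s' ^ p ^ s * y s' = 0 := by
    rw [← sub_eq_zero, ← Finset.sum_sub_distrib] at heq
    rw [← heq]
    refine Finset.sum_congr rfl fun s' _ => ?_
    rw [← mul_sub, ← Finset.sum_sub_distrib]
    congr 1
    refine Finset.sum_congr rfl fun j _ => ?_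
    rw [← sub_smul]; rfl
  obtain ⟨s0, i0, hs0⟩ : ∃ s0 i0, b.repr (y s0) i0 ≠ 0 := by
    by_contra hcon
    push Not at hcon
    apply hne
    ext1 s'; ext1 j
    have := hcon s' j
    rw [hy] at this
    simp only at this
    rw [map_sum, Finsupp.finsetSum_apply] at this
    simp only [map_smul, Finsupp.smul_apply, Module.Basis.repr_self, smul_eq_mul] at this
    rw [Finset.sum_eq_single j (by intro j' _ hj; simp [Finsupp.single_apply, hj]) (by simp)] at this
    simp at this
    apply Subtype.ext
    exact sub_eq_zero.mp this
  set G : R := ∑ s', v s' * y s' ^ p ^ t with hG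
  have hGV : VV b (A + c + p ^ t * (B + c)) G := by
    refine VV.sum _ _ fun s' _ => ?_
    exact (VV.mul hmul (hvV s') ((hyV s').pow hmul (p ^ t) hpt)).mono (by omega)
  -- vanishing
  have hvan : ∀ x ∈ 𝒳, ∀ i, (b.repr G i).eval x = 0 := by
    intro x hx
    refine hsplit x hx G fun g => ?_
    have h3 : (φ x (σ g G)) ^ p ^ s = 0 := by
      rw [hG, map_sum, map_sum, sum_pow_char_pow p s]
      have : ∀ s', (φ x (σ g (v s' * y s' ^ p ^ t))) ^ p ^ s = φ x (σ g (v s' ^ p ^ s * y s')) := by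
        intro s'
        simp only [map_mul, map_pow, mul_pow]
        rw [← pow_mul, ← hcard, FiniteField.pow_card]
      rw [Finset.sum_congr rfl fun s' _ => this s', ← map_sum, ← map_sum, hΨ0, map_zero, map_zero]
    exact pow_eq_zero_iff (by omega) |>.mp h3
  -- nonvanishing
  have hG0 : G ≠ 0 := by
    intro hG0
    obtain ⟨x, hx, hxne⟩ : ∃ x ∈ 𝒳, (b.repr (y s0) i0).eval x ≠ 0 := by
      by_contra hcon
      push Not at hcon
      have : 𝒳 ⊆ (b.repr (y s0) i0).roots.toFinset := by
        intro x hx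
        rw [Multiset.mem_toFinset, mem_roots hs0]
        exact hcon x hx
      have h3 := Finset.card_le_card this
      have h4 := Multiset.toFinset_card_le (b.repr (y s0) i0).roots
      have h5 := card_roots' (b.repr (y s0) i0)
      have h6 := hyV s0 i0
      omega
    obtain ⟨g, hg⟩ : ∃ g, φ x (σ g (y s0)) ≠ 0 := by
      by_contra hcon
      push Not at hcon
      exact hxne (hsplit x hx _ hcon i0)
    set cs : S → k := fun s' => φ x (σ g (y s')) with hcs
    set ts : S → R := fun s' => algebraMap k[X] R (C (cs s')) - y s' with hts
    have hts0 : ∀ s', φ x (σ g (ts s')) = 0 := by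
      intro s'
      rw [hts]
      simp only [map_sub, AlgHom.commutes]
      rw [hφ x hx, eval_C, hcs, sub_self]
    set V := ∑ s', v s' * ts s' ^ p ^ t with hV
    have hVeq : V = ∑ s', C (cs s' ^ p ^ t) • v s' := by
      have : ∀ s', v s' * ts s' ^ p ^ t = C (cs s' ^ p ^ t) • v s' - v s' * y s' ^ p ^ t := by
        intro s'
        rw [hts]
        simp only
        rw [sub_pow_char_pow, mul_sub, Algebra.smul_def, map_pow, map_pow, mul_comm]
      rw [hV, Finset.sum_congr rfl fun s' _ => this s', Finset.sum_sub_distrib, ← hG, hG0, sub_zero]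
    have hVV : VV b A V := by
      rw [hVeq]
      refine VV.sum _ _ fun s' _ => ?_
      have := (hvV s').smul (C (cs s' ^ p ^ t)) (B := 0) (by simp)
      exact this.mono (by omega)
    have hVne : V ≠ 0 := by
      intro hV0
      have h3 : (b.repr V s0.2).coeff (s0.1 : ℕ) = cs s0 ^ p ^ t := by
        rw [hVeq, map_sum, Finsupp.finsetSum_apply, finsetSum_coeff]
        rw [Finset.sum_eq_single s0]
        · simp only [hv, map_smul, Finsupp.smul_apply, Module.Basis.repr_self, smul_eq_mul, Finsupp.single_eq_same]
          rw [coeff_C_mul]; simp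
        · rintro ⟨i, j⟩ _ hne'
          simp only [hv, map_smul, Finsupp.smul_apply, Module.Basis.repr_self, smul_eq_mul]
          by_cases hj : j = s0.2
          · subst hj
            have : (s0.1 : ℕ) ≠ i := by
              intro h; apply hne'; ext <;> simp [h]
            rw [coeff_C_mul]; simp [coeff_X_pow, this]
          · simp [Finsupp.single_apply, hj]
        · simp
      rw [hV0] at h3
      simp at h3
      have := h3.symm
      rw [pow_eq_zero_iff (by omega)] at this
      exact hg this
    set w := ∏ τ : Γ, σ τ V with hw
    have hΓ : Nonempty Γ := ⟨g⟩
    have hwne : w ≠ 0 := by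
      rw [hw, Finset.prod_ne_zero_iff]
      intro τ _ h
      exact hVne (hσinj τ (by rw [h, map_zero]))
    have hwV : VV b (Fintype.card Γ * (A + 2 * c)) w := by
      have := VV.prod hmul (A := A + c) (Finset.univ : Finset Γ) Finset.univ_nonempty (fun τ => σ τ V)
        (fun τ _ => hσV τ A V hVV)
      rw [Finset.card_univ] at this
      exact this.mono (by apply le_of_eq; ring)
    have hdvd : algebraMap k[X] R ((X - C x) ^ p ^ t) ∣ w := by
      have hw2 : w = ∑ f ∈ Fintype.piFinset (fun _ : Γ => (Finset.univ : Finset S)),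
          ∏ τ, (σ τ (v (f τ)) * (σ τ (ts (f τ))) ^ p ^ t) := by
        rw [hw]
        refine Eq.trans ?_ (Finset.prod_univ_sum (fun _ : Γ => (Finset.univ : Finset S))
          (fun τ s' => σ τ (v s') * (σ τ (ts s')) ^ p ^ t))
        refine Finset.prod_congr rfl fun τ _ => ?_
        rw [hV, map_sum]
        refine Finset.sum_congr rfl fun s' _ => ?_
        simp
      rw [hw2]
      refine Finset.dvd_sum fun f _ => ?_
      rw [Finset.prod_mul_distrib, Finset.prod_pow, map_pow]
      apply Dvd.dvd.mul_left
      apply pow_dvd_pow_of_dvd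
      have h3 : ∀ i, (b.repr (∏ τ, σ τ (ts (f τ))) i).eval x = 0 := by
        refine hsplit x hx _ fun g' => ?_
        obtain ⟨τ, hτ⟩ := htrans g g'
        rw [map_prod, map_prod]
        refine Finset.prod_eq_zero (Finset.mem_univ τ) ?_
        rw [hτ, hts0]
      rw [← b.sum_repr (∏ τ, σ τ (ts (f τ)))]
      refine Finset.dvd_sum fun i _ => ?_
      rw [Algebra.smul_def]
      apply Dvd.dvd.mul_right
      exact map_dvd _ (dvd_iff_isRoot.mpr (h3 i))
    obtain ⟨w', hw'⟩ := hdvd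
    obtain ⟨i, hi⟩ : ∃ i, b.repr w i ≠ 0 := by
      by_contra hcon
      push Not at hcon
      exact hwne (b.repr.injective (by ext1 i; simpa using hcon i))
    have h4 : b.repr w i = (X - C x) ^ p ^ t * b.repr w' i := by
      rw [hw', ← Algebra.smul_def, map_smul, Finsupp.smul_apply, smul_eq_mul]
    have h5 := natDegree_le_of_dvd ⟨_, h4⟩ hi
    rw [natDegree_pow, natDegree_X_sub_C, mul_one] at h5
    have h6 := hwV i
    omega
  obtain ⟨i, hi⟩ : ∃ i, b.repr G i ≠ 0 := by
    by_contra hcon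
    push Not at hcon
    exact hG0 (b.repr.injective (by ext1 i; simpa using hcon i))
  have : 𝒳 ⊆ (b.repr G i).roots.toFinset := by
    intro x hx
    rw [Multiset.mem_toFinset, mem_roots hi]
    exact hvan x hx i
  have h3 := Finset.card_le_card this
  have h4 := Multiset.toFinset_card_le (b.repr G i).roots
  have h5 := card_roots' (b.repr G i)
  have h6 := hGV i
  omega

end Stepanov

end WB

namespace WB

section Stepanov2

variable {k R ι Γ : Type*} [Field k] [Fintype k] [CommRing R] [IsDomain R] [Algebra k[X] R]
  [Fintype ι] [Fintype Γ]
variable {b : Module.Basis ι k[X] R}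

/-- the constant in Stepanov's bound -/
def stC (c D : ℕ) : ℕ := 2 * D * (c + 2) + 2 * D * c + 1 + D * (4 * c * D + 4 * D + 2 * D * (c + 2) + c + 2)

theorem stepanov_arith {P P' c D x : ℕ} (hP1 : 1 ≤ P) (hPP' : P ≤ P') (hD : 0 < D) (hx : x ≤ P' * P)
    (H : ∀ A B, A * P + P * c + B + c + 1 < D * ((A + 1) * (B + 1)) → D * (A + 2 * c) < P' →
      x ≤ A + c + P' * (B + c)) : D * x ≤ P' * P + stC c D * P' := by
  obtain ⟨K, hK⟩ : ∃ K, K = 2 * D * (c + 2) := ⟨_, rfl⟩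
  obtain ⟨T0, hT0⟩ : ∃ T0, T0 = 4 * c * D + 4 * D + K + c + 2 := ⟨_, rfl⟩
  have hC : stC c D = K + 2 * D * c + 1 + D * T0 := by rw [hT0, hK]; rfl
  rw [hC]
  by_cases hsmall : P' < T0
  · calc D * x ≤ D * (P' * P) := by gcongr
        _ ≤ D * (P' * T0) := by gcongr; omega
        _ = (D * T0) * P' := by ring
        _ ≤ _ := by
          rw [add_mul]; omega
  push Not at hsmall
  obtain ⟨d, hd⟩ : ∃ d, d = (P' - 1) / D := ⟨_, rfl⟩
  have hd1 : D * d ≤ P' - 1 := by rw [hd]; exact Nat.mul_div_le _ _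
  have hd2 : P' - 1 < D * d + D := by
    have := Nat.lt_mul_div_succ (P' - 1) hD
    rw [mul_add, mul_one, ← hd] at this; exact this
  have hcD : 4 * c * D = 4 * (D * c) := by ring
  have hd3 : 2 * c ≤ d := by
    by_contra hcon
    push Not at hcon
    have : D * (d + 1) ≤ D * (2 * c) := by gcongr; omega
    rw [mul_add, mul_one, mul_left_comm] at this
    omega
  obtain ⟨A, rfl⟩ : ∃ A, d = A + 2 * c := ⟨d - 2 * c, by omega⟩
  obtain ⟨B, hB⟩ : ∃ B, B = (P + K) / D := ⟨_, rfl⟩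
  have hB1 : D * B ≤ P + K := by rw [hB]; exact Nat.mul_div_le _ _
  have hB2 : P + K < D * (B + 1) := by rw [hB]; exact Nat.lt_mul_div_succ (P + K) hD
  have hB3 : B ≤ P + K := by rw [hB]; exact Nat.div_le_self _ _
  have hA2 : P' ≤ 2 * (D * (A + 1)) := by
    rw [mul_add, mul_left_comm] at hd2
    rw [mul_add, mul_one]
    omega
  have h1 : A * P + P * c + B + c + 1 < D * ((A + 1) * (B + 1)) := by
    have e1 : (A + 1) * (P + K) ≤ D * ((A + 1) * (B + 1)) := by
      calc (A + 1) * (P + K) ≤ (A + 1) * (D * (B + 1)) := by gcongr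
        _ = _ := by ring
    have e2 : P' * (c + 2) ≤ (A + 1) * K := by
      calc P' * (c + 2) ≤ 2 * (D * (A + 1)) * (c + 2) := by gcongr
        _ = _ := by rw [hK]; ring
    have e3 : P * c ≤ P' * c := by gcongr
    have : (A + 1) * (P + K) = A * P + P + (A + 1) * K := by ring
    rw [mul_add] at e2
    omega
  have := H A B h1 (by omega)
  have e4 : D * A ≤ P' := by
    have : D * A ≤ D * (A + 2 * c) := by gcongr; omega
    omega
  have e5 : D * c ≤ P' * (D * c) := Nat.le_mul_of_pos_left _ (by omega)
  calc D * x ≤ D * (A + c + P' * (B + c)) := by gcongr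
    _ = D * A + D * c + P' * (D * B) + P' * (D * c) := by ring
    _ ≤ P' + P' * (D * c) + P' * (P + K) + P' * (D * c) := by gcongr
    _ = P' * P + (K + 2 * D * c + 1) * P' := by ring
    _ ≤ _ := by rw [add_mul _ (D * T0)]; omega

theorem stepanov2 (p n : ℕ) [Fact p.Prime] [CharP k p] [CharP R p]
    (hcard : Fintype.card k = p ^ n) (c : ℕ)
    (hmul : ∀ i A r, VV b A r → VV b (A + c) (b i * r))
    (hb : ∀ i, VV b 0 (b i))
    (σ : Γ → R →ₐ[k[X]] R) (hσinj : ∀ g, Function.Injective (σ g))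
    (hσV : ∀ g A r, VV b A r → VV b (A + c) (σ g r))
    (htrans : ∀ g g', ∃ τ, ∀ r, σ g' (σ τ r) = σ g r)
    (𝒳 : Finset k) (φ : k → R →+* k) (hφ : ∀ x ∈ 𝒳, ∀ f : k[X], φ x (algebraMap k[X] R f) = f.eval x)
    (hsplit : ∀ x ∈ 𝒳, ∀ r, (∀ g, φ x (σ g r) = 0) → ∀ i, (b.repr r i).eval x = 0)
    (D : ℕ) (hD : 0 < D) (hι : Fintype.card ι = D) (hΓ : Fintype.card Γ = D) :
    ((D * 𝒳.card : ℕ) : ℝ) ≤ Fintype.card k + stC c D * p * Real.sqrt (Fintype.card k) := by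
  have hp := (Fact.out : p.Prime).pos
  set t := n - n / 2 with ht
  set s := n / 2 with hs
  have hst : p ^ n = p ^ t * p ^ s := by rw [← pow_add]; congr 1; omega
  have hP1 : 1 ≤ p ^ s := Nat.one_le_pow _ _ hp
  have hP'1 : 1 ≤ p ^ t := Nat.one_le_pow _ _ hp
  have hPP' : p ^ s ≤ p ^ t := Nat.pow_le_pow_right hp (by omega)
  have hP'P : p ^ t ≤ p * p ^ s := by
    rw [← pow_succ']; exact Nat.pow_le_pow_right hp (by omega)
  have key : D * 𝒳.card ≤ p ^ n + stC c D * p ^ t := by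
    have hx : 𝒳.card ≤ p ^ t * p ^ s := by
      rw [← hst, ← hcard]; exact Finset.card_le_univ _
    rw [hst]
    refine stepanov_arith hP1 hPP' hD hx fun A B h1 h2 => ?_
    exact stepanov p s t (by rw [hcard, hst]) c hmul hb σ hσinj hσV htrans 𝒳 φ hφ hsplit A B
        (by rw [hι]; exact h1) (by rw [hΓ]; exact h2)
  have h3 : ((p ^ t : ℕ) : ℝ) ≤ p * Real.sqrt (Fintype.card k) := by
    rw [hcard]
    have e : ((p ^ t : ℕ) : ℝ) ^ 2 ≤ (p * Real.sqrt ((p ^ n : ℕ) : ℝ)) ^ 2 := by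
      rw [mul_pow, Real.sq_sqrt (by positivity)]
      have : (p ^ t) ^ 2 ≤ p ^ 2 * p ^ n := by
        rw [hst, sq]
        calc p ^ t * p ^ t ≤ p ^ t * (p * p ^ s) := by gcongr
          _ = p * (p ^ t * p ^ s) := by ring
          _ ≤ _ := by gcongr; nlinarith
      exact_mod_cast this
    exact le_of_sq_le_sq e (by positivity)
  calc ((D * 𝒳.card : ℕ) : ℝ) ≤ ((p ^ n + stC c D * p ^ t : ℕ) : ℝ) := by exact_mod_cast key
    _ = Fintype.card k + stC c D * ((p ^ t : ℕ) : ℝ) := by rw [hcard]; push_cast; ring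
    _ ≤ Fintype.card k + stC c D * (p * Real.sqrt (Fintype.card k)) := by gcongr
    _ = _ := by ring

end Stepanov2

end WB

namespace WB

section ringR

theorem exists_adj {A : Type} [CommRing A] [Nontrivial A] (d : ℕ) (hd0 : 0 < d) (g : A[X]) (hg : g.Monic)
    (hd : g.natDegree = d) :
    ∃ (R : Type) (_ : CommRing R) (_ : Algebra A R) (_ : Nontrivial R) (y : R) (b : Module.Basis (Fin d) A R),
      (∀ i, b i = y ^ (i : ℕ)) ∧ aeval y g = 0 ∧
      ∀ (B : Type) [CommRing B] (f : A →+* B) (y' : B), eval₂ f y' g = 0 →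
        ∃ φ : R →+* B, (∀ a, φ (algebraMap A R a) = f a) ∧ φ y = y' := by
  subst hd
  let b : Module.Basis (Fin g.natDegree) A (AdjoinRoot g) := (AdjoinRoot.powerBasis' hg).basis
  refine ⟨AdjoinRoot g, inferInstance, inferInstance, ?_, AdjoinRoot.root g, b, ?_, ?_, ?_⟩
  · exact ⟨b ⟨0, hd0⟩, 0, b.ne_zero _⟩
  · intro i
    exact (AdjoinRoot.powerBasis' hg).basis_eq_pow i
  · simp
  · intro B _ f y' h
    refine ⟨AdjoinRoot.lift f y' h, ?_, ?_⟩
    · intro a; exact AdjoinRoot.lift_of h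
    · exact AdjoinRoot.lift_root h

theorem exists_R {A : Type} [CommRing A] [Nontrivial A] (d p : ℕ) (hd0 : 0 < d) (hp : 2 ≤ p) (S e h : A) :
    ∃ (R : Type) (_ : CommRing R) (_ : Algebra A R) (y z : R) (b : Module.Basis (Fin d × Fin p) A R),
      (∀ i, b i = y ^ (i.1 : ℕ) * z ^ (i.2 : ℕ)) ∧ y ^ d = algebraMap A R S ∧
      z ^ p = algebraMap A R e * z + algebraMap A R h ∧
      ∀ (B : Type) [CommRing B] (f : A →+* B) (y' z' : B), y' ^ d = f S → z' ^ p = f e * z' + f h →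
        ∃ φ : R →+* B, (∀ a, φ (algebraMap A R a) = f a) ∧ φ y = y' ∧ φ z = z' := by
  obtain ⟨R₁, _, _, _, y, b₁, hb₁, hy, hu₁⟩ := exists_adj d hd0 (X ^ d - C S) (monic_X_pow_sub_C S hd0.ne')
    (natDegree_X_pow_sub_C)
  have hdeg : (C (algebraMap A R₁ e) * X + C (algebraMap A R₁ h)).degree < ((p : ℕ) : WithBot ℕ) := by
    refine (degree_linear_le).trans_lt ?_
    exact_mod_cast (by omega : 1 < p)
  obtain ⟨R, _, _, _, z, b₂, hb₂, hz, hu₂⟩ := exists_adj p (by omega)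
    (X ^ p - (C (algebraMap A R₁ e) * X + C (algebraMap A R₁ h)))
    (monic_X_pow_sub (n := p) hdeg)
    (by
      have h1 := natDegree_sub_eq_left_of_natDegree_lt (p := (X ^ p : R₁[X]))
        (q := C (algebraMap A R₁ e) * X + C (algebraMap A R₁ h)) (by
          rw [natDegree_X_pow]
          exact natDegree_linear_le.trans_lt (by omega))
      rw [h1, natDegree_X_pow])
  letI : Algebra A R := Algebra.compHom R (algebraMap A R₁)
  haveI : IsScalarTower A R₁ R := IsScalarTower.of_algebraMap_eq fun x => rfl
  refine ⟨R, inferInstance, inferInstance, algebraMap R₁ R y, z, b₁.smulTower b₂, ?_, ?_, ?_, ?_⟩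
  · intro i
    rw [Module.Basis.smulTower_apply, hb₁, hb₂, Algebra.smul_def, map_pow]
  · simp only [map_sub, aeval_X_pow, aeval_C, sub_eq_zero] at hy
    rw [← map_pow, hy, ← IsScalarTower.algebraMap_apply]
  · simp only [map_sub, map_add, map_mul, aeval_X, aeval_X_pow, aeval_C, sub_eq_zero] at hz
    rw [hz, ← IsScalarTower.algebraMap_apply, ← IsScalarTower.algebraMap_apply]
  · intro B _ f y' z' hy' hz'
    obtain ⟨φ₁, h1, h2⟩ := hu₁ B f y' (by simp [hy'])
    obtain ⟨φ, h3, h4⟩ := hu₂ B φ₁ z' (by simp [hz', h1])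
    refine ⟨φ, ?_, ?_, h4⟩
    · intro a
      rw [IsScalarTower.algebraMap_apply A R₁ R, h3, h1]
    · rw [h3, h2]

/-- one-variable vanishing -/
theorem vand {K : Type*} [Field K] {d : ℕ} (a : Fin d → K) (S : Finset K) (hS : d ≤ S.card)
    (h : ∀ y ∈ S, ∑ i, a i * y ^ (i : ℕ) = 0) : ∀ i, a i = 0 := by
  set P : K[X] := ∑ i : Fin d, C (a i) * X ^ (i : ℕ) with hP
  have hdeg : P.degree < d := by
    rw [hP]; exact degree_sum_fin_lt a
  have h0 : P = 0 := by
    refine eq_zero_of_degree_lt_of_eval_finset_eq_zero S (hdeg.trans_le (by exact_mod_cast hS)) ?_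
    intro y hy
    rw [← h y hy, hP, eval_finsetSum]
    simp
  intro i
  have : P.coeff i = a i := by
    rw [hP, finsetSum_coeff, Finset.sum_eq_single i]
    · simp
    · intro j _ hj
      rw [coeff_C_mul, coeff_X_pow, if_neg (by intro h; exact hj (Fin.ext h.symm)), mul_zero]
    · simp
  rw [← this, h0, coeff_zero]

theorem vand2 {K : Type*} [Field K] {d p : ℕ} (a : Fin d × Fin p → K) (S : Finset K) (hS : d ≤ S.card)
    (h : ∀ y ∈ S, ∃ Z : Finset K, p ≤ Z.card ∧ ∀ z ∈ Z, ∑ i, a i * (y ^ (i.1 : ℕ) * z ^ (i.2 : ℕ)) = 0) :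
    ∀ i, a i = 0 := by
  rintro ⟨i, j⟩
  refine vand (fun i => a (i, j)) S hS (fun y hy => ?_) i
  obtain ⟨Z, hZ, hz⟩ := h y hy
  refine vand (fun j => ∑ i, a (i, j) * y ^ (i : ℕ)) Z hZ (fun z hz' => ?_) j
  rw [← hz z hz', Fintype.sum_prod_type_right]
  refine Finset.sum_congr rfl fun j _ => ?_
  rw [Finset.sum_mul]
  refine Finset.sum_congr rfl fun i _ => ?_
  ring

end ringR
end WB

namespace WB

theorem gal_indep {K L : Type*} [Field K] [Field L] [Algebra K L] [IsGalois K L] (p : ℕ) [Fact p.Prime]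
    [CharP K p] (d : ℕ) (hd : 0 < d) (hdp : ¬ p ∣ d) (ζ₀ : K) (hζ₀ : IsPrimitiveRoot ζ₀ d)
    (S e h : K) (hS : S ≠ 0) (he : e ≠ 0) (y z : L) (hy : y ^ d = algebraMap K L S)
    (hz : z ^ p = algebraMap K L (e ^ (p - 1)) * z + algebraMap K L h)
    (h1 : ∀ ℓ : ℕ, ℓ.Prime → ℓ ∣ d → ∀ w : K, w ^ ℓ ≠ S)
    (h2 : ∀ w : K, w ^ p ≠ e ^ (p - 1) * w + h)
    (a : Fin d × Fin p → K) (ha : ∑ i, algebraMap K L (a i) * (y ^ (i.1 : ℕ) * z ^ (i.2 : ℕ)) = 0) :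
    ∀ i, a i = 0 := by
  have hp := (Fact.out : p.Prime)
  haveI : CharP L p := charP_of_injective_algebraMap (algebraMap K L).injective p
  haveI : NeZero d := ⟨hd.ne'⟩
  letI : Fintype (rootsOfUnity d K) := Fintype.ofFinite _
  have hinj := (algebraMap K L).injective
  have hy0 : y ≠ 0 := by
    rintro rfl
    rw [zero_pow hd.ne'] at hy
    exact hS (hinj (by rw [← hy, map_zero]))
  -- all conjugates of y
  have hconj : ∀ τ : L ≃ₐ[K] L, ∃ u : rootsOfUnity d K, τ y = algebraMap K L ((u : Kˣ) : K) * y := by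
    intro τ
    have h3 : (τ y / y) ^ d = 1 := by
      rw [div_pow, ← map_pow, hy, AlgEquiv.commutes, div_self]
      rw [← hy]; exact pow_ne_zero _ hy0
    obtain ⟨i, -, hi⟩ := (hζ₀.map_of_injective hinj).eq_pow_of_pow_eq_one h3
    refine ⟨hζ₀.toRootsOfUnity ^ i, ?_⟩
    rw [← div_eq_iff hy0, ← hi]
    simp
  let H : Subgroup (rootsOfUnity d K) :=
    { carrier := {u | ∃ τ : L ≃ₐ[K] L, τ y = algebraMap K L ((u : Kˣ) : K) * y}
      mul_mem' := by
        rintro u v ⟨τ, hτ⟩ ⟨τ', hτ'⟩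
        refine ⟨τ * τ', ?_⟩
        rw [AlgEquiv.mul_apply, hτ', map_mul, hτ, AlgEquiv.commutes]
        simp only [Subgroup.coe_mul, Units.val_mul, map_mul]
        ring
      one_mem' := ⟨1, by simp⟩
      inv_mem' := by
        rintro u ⟨τ, hτ⟩
        refine ⟨τ⁻¹, ?_⟩
        have : τ⁻¹ (τ y) = y := by rw [← AlgEquiv.mul_apply, inv_mul_cancel, AlgEquiv.one_apply]
        rw [hτ, map_mul, AlgEquiv.commutes] at this
        have hu : algebraMap K L ((u : Kˣ) : K) ≠ 0 := by simp
        simp only [InvMemClass.coe_inv, Units.val_inv_eq_inv_val, map_inv₀]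
        rw [eq_inv_mul_iff_mul_eq₀ hu]
        exact this }
  have hHd : Nat.card H = d := by
    have hdvd : Nat.card H ∣ d := by
      have := Subgroup.card_subgroup_dvd_card H
      rwa [hζ₀.card_rootsOfUnity] at this
    by_contra hne
    obtain ⟨r, hr⟩ := hdvd
    have hr1 : r ≠ 1 := by rintro rfl; exact hne (by omega)
    obtain ⟨ℓ, hℓ, hℓr⟩ := Nat.exists_prime_and_dvd hr1
    obtain ⟨r', rfl⟩ := hℓr
    have hfix : ∀ τ : L ≃ₐ[K] L, τ (y ^ (Nat.card H)) = y ^ (Nat.card H) := by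
      intro τ
      obtain ⟨u, hu⟩ := hconj τ
      have huH : u ∈ H := ⟨τ, hu⟩
      have h4 : (⟨u, huH⟩ : H) ^ Nat.card H = 1 := pow_card_eq_one'
      have h5 : (((u : Kˣ) : K)) ^ Nat.card H = 1 := by
        have := congrArg (fun v : H => (((v : rootsOfUnity d K) : Kˣ) : K)) h4
        simp only [SubmonoidClass.coe_pow, Units.val_pow_eq_pow_val] at this
        rw [this]; simp
      rw [map_pow, hu, mul_pow, ← map_pow, h5, map_one, one_mul]
    obtain ⟨w, hw⟩ := (InfiniteGalois.mem_range_algebraMap_iff_fixed _).mpr hfix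
    refine h1 ℓ hℓ ⟨Nat.card H * r', hr.trans (by ring)⟩ (w ^ r') ?_
    apply hinj
    rw [map_pow, map_pow, hw, ← hy, ← pow_mul, ← pow_mul]
    congr 1
    refine Eq.trans ?_ hr.symm; ring
  -- an automorphism moving z and fixing y
  have hσ : ∃ σ : L ≃ₐ[K] L, σ z ≠ z := by
    by_contra hcon
    push Not at hcon
    obtain ⟨w, hw⟩ := (InfiniteGalois.mem_range_algebraMap_iff_fixed _).mpr hcon
    refine h2 w (hinj ?_)
    rw [map_pow, hw, hz, map_add, map_mul, hw]
  obtain ⟨σ, hσ⟩ := hσ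
  set E := algebraMap K L e with hE
  have hE0 : E ≠ 0 := by rw [hE]; simpa using he
  obtain ⟨c, hc⟩ : ∃ c : L, σ z = z + c * E := ⟨(σ z - z) / E, by field_simp; ring⟩
  have hc0 : c ≠ 0 := by rintro rfl; exact hσ (by rw [hc]; ring)
  have hcp : c ^ p = c := by
    have h3 := congrArg σ hz
    rw [map_pow, map_add, map_mul, AlgEquiv.commutes, AlgEquiv.commutes, hc, add_pow_char, hz, mul_pow, map_pow,
      ← hE] at h3
    have h4 : c ^ p * E ^ p = c * E ^ p := by
      have : E ^ p = E ^ (p - 1) * E := by rw [← pow_succ]; congr 1; have := hp.pos; omega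
      rw [this] at h3 ⊢
      linear_combination h3
    exact mul_right_cancel₀ (pow_ne_zero _ hE0) h4
  have hcK : ∃ c' : K, algebraMap K L c' = c := by
    have h3 : c ∈ Set.range (algebraMap K L) := by
      have hsub : ∃ n : ℕ, (n : L) = c := by
        -- roots of X^p - X
        have h4 : (X ^ p - X : L[X]).roots.toFinset = (Finset.range p).image (fun n : ℕ => (n : L)) := by
          symm
          apply Finset.eq_of_subset_of_card_le
          · intro x hx
            obtain ⟨n, _, rfl⟩ := Finset.mem_image.mp hx
            rw [Multiset.mem_toFinset, mem_roots (FiniteField.X_pow_card_sub_X_ne_zero L hp.one_lt)]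
            simp only [IsRoot, eval_sub, eval_pow, eval_X]
            rw [← Nat.cast_pow, sub_eq_zero]
            have := ZMod.pow_card (n : ZMod p)
            rw [← Nat.cast_pow, ZMod.natCast_eq_natCast_iff] at this
            exact (CharP.natCast_eq_natCast L p).mpr this
          · rw [Finset.card_image_of_injOn, Finset.card_range]
            · refine (Multiset.toFinset_card_le _).trans ((card_roots' _).trans ?_)
              rw [FiniteField.X_pow_card_sub_X_natDegree_eq L hp.one_lt]
            · intro i hi j hj hij
              have := (CharP.natCast_eq_natCast L p).mp hij
              rw [Nat.ModEq, Nat.mod_eq_of_lt (by simpa using hi), Nat.mod_eq_of_lt (by simpa using hj)] at this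
              exact this
        have h5 : c ∈ (X ^ p - X : L[X]).roots.toFinset := by
          rw [Multiset.mem_toFinset, mem_roots (FiniteField.X_pow_card_sub_X_ne_zero L hp.one_lt)]
          simp [hcp]
        rw [h4] at h5
        obtain ⟨n, _, hn⟩ := Finset.mem_image.mp h5
        exact ⟨n, hn⟩
      obtain ⟨n, hn⟩ := hsub
      exact ⟨n, by rw [map_natCast, hn]⟩
    exact h3
  obtain ⟨c', hc'⟩ := hcK
  have hσc : ∀ τ : L ≃ₐ[K] L, τ (c * E) = c * E := by
    intro τ
    rw [← hc', hE, ← map_mul, AlgEquiv.commutes]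
  have hσn : ∀ n : ℕ, (σ ^ n) z = z + n * (c * E) := by
    intro n
    induction n with
    | zero => simp
    | succ n ih =>
      rw [pow_succ', AlgEquiv.mul_apply, ih, map_add, hc, map_mul, hσc, map_natCast]
      push_cast; ring
  have hσd : ∀ n : ℕ, (σ ^ (d * n)) y = y := by
    intro n
    obtain ⟨u, hu⟩ := hconj σ
    have : ∀ n : ℕ, (σ ^ n) y = algebraMap K L ((u : Kˣ) : K) ^ n * y := by
      intro n
      induction n with
      | zero => simp
      | succ n ih =>
        rw [pow_succ', AlgEquiv.mul_apply, ih, map_mul, map_pow, AlgEquiv.commutes, hu]; ring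
    rw [this, pow_mul]
    have h3 : ((u : Kˣ) : K) ^ d = 1 := by
      have := u.2
      rw [mem_rootsOfUnity] at this
      have := congrArg Units.val this
      simpa only [Units.val_pow_eq_pow_val, Units.val_one] using this
    rw [← map_pow, h3, map_one, one_pow, one_mul]
  -- conclusion
  have key : ∀ τ : L ≃ₐ[K] L, ∑ i, algebraMap K L (a i) * ((τ y) ^ (i.1 : ℕ) * (τ z) ^ (i.2 : ℕ)) = 0 := by
    intro τ
    have := congrArg τ ha
    rw [map_sum, map_zero] at this
    rw [← this]
    refine Finset.sum_congr rfl fun i _ => ?_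
    simp
  have hfin := vand2 (fun i => algebraMap K L (a i))
    ((Finset.univ : Finset H).image fun u : H => algebraMap K L (((u : rootsOfUnity d K) : Kˣ) : K) * y)
    (by
      rw [Finset.card_image_of_injective, Finset.card_univ, ← Nat.card_eq_fintype_card, hHd]
      intro u v huv
      have := mul_right_cancel₀ hy0 huv
      exact Subtype.ext (Subtype.ext (Units.ext (hinj this))))
    (by
      intro y' hy'
      obtain ⟨u, hu', rfl⟩ := Finset.mem_image.mp hy'
      clear hu'
      obtain ⟨τ, hτ⟩ := u.2
      refine ⟨(Finset.range p).image fun n : ℕ => τ ((σ ^ (d * n)) z), ?_, ?_⟩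
      · rw [Finset.card_image_of_injOn, Finset.card_range]
        intro i hi j hj hij
        have h3 := τ.injective hij
        rw [hσn, hσn] at h3
        have h4 := mul_right_cancel₀ (mul_ne_zero hc0 hE0) (add_left_cancel h3)
        rw [Nat.cast_mul, Nat.cast_mul] at h4
        have h5 := mul_left_cancel₀ (by rwa [Ne, CharP.cast_eq_zero_iff L p d]) h4
        have := (CharP.natCast_eq_natCast L p).mp h5
        rw [Nat.ModEq, Nat.mod_eq_of_lt (by simpa using hi), Nat.mod_eq_of_lt (by simpa using hj)] at this
        exact this
      · intro z' hz'
        obtain ⟨n, -, rfl⟩ := Finset.mem_image.mp hz'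
        rw [← key (τ * σ ^ (d * n))]
        refine Finset.sum_congr rfl fun i _ => ?_
        rw [AlgEquiv.mul_apply, AlgEquiv.mul_apply, hσd, hτ])
  intro i
  exact hinj (by rw [hfin i, map_zero])

end WB

namespace WB

/-- the polynomial `β X^{p+1} + γ X^{p-1} - b X^p` -/
noncomputable def hpol {k : Type*} [Field k] (p : ℕ) (β γ b : k) : k[X] :=
  C β * X ^ (p + 1) + C γ * X ^ (p - 1) - C b * X ^ p

theorem hpol_not {k : Type*} [Field k] (p : ℕ) (hp : p.Prime) (β γ b : k) (h : β ≠ 0 ∨ γ ≠ 0) (w : k[X]) :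
    w ^ p ≠ X ^ (p - 1) * w + hpol p β γ b := by
  intro hw
  have hp2 := hp.two_le
  by_cases hβ : β = 0
  · have hγ : γ ≠ 0 := by tauto
    subst hβ
    have e1 : X ^ p = (X ^ (p - 1) * X : k[X]) := by rw [← pow_succ]; congr 1; omega
    have e : w ^ p = X ^ (p - 1) * (w + C γ - C b * X) := by
      rw [hw, hpol, e1]; simp only [map_zero]; ring
    have hXw : (X : k[X]) ∣ w := by
      refine prime_X.dvd_of_dvd_pow (n := p) ?_
      rw [e]
      exact Dvd.dvd.mul_right (dvd_pow_self X (by omega)) _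
    obtain ⟨w', rfl⟩ := hXw
    rw [mul_pow, e1, mul_assoc] at e
    have := mul_left_cancel₀ (pow_ne_zero _ X_ne_zero) e
    have h2 := congrArg (eval 0) this
    simp at h2
    exact hγ h2.symm
  · have hdeg : (hpol p β γ b).natDegree = p + 1 := by
      unfold hpol
      compute_degree!
      · rw [if_neg (by omega)]; simpa using hβ
      · omega
      · omega
    have h1 : hpol p β γ b = w ^ p - X ^ (p - 1) * w := by rw [hw]; ring
    by_cases hwd : w.natDegree ≤ 1
    · have : (w ^ p - X ^ (p - 1) * w).natDegree ≤ p := by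
        refine (natDegree_sub_le _ _).trans (max_le ?_ ?_)
        · rw [natDegree_pow]; nlinarith
        · refine natDegree_mul_le.trans ?_
          rw [natDegree_X_pow]; omega
      rw [← h1, hdeg] at this
      omega
    · push Not at hwd
      have h3 : (w ^ p - X ^ (p - 1) * w).natDegree = p * w.natDegree := by
        rw [natDegree_sub_eq_left_of_natDegree_lt, natDegree_pow]
        refine natDegree_mul_le.trans_lt ?_
        rw [natDegree_X_pow, natDegree_pow]
        obtain ⟨r, hr⟩ : ∃ r, p = r + 1 := ⟨p - 1, by omega⟩
        obtain ⟨t, ht⟩ : ∃ t, w.natDegree = t + 2 := ⟨w.natDegree - 2, by omega⟩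
        rw [ht, hr]
        simp only [Nat.add_sub_cancel]
        nlinarith
      rw [← h1, hdeg] at h3
      have : p ∣ p + 1 := ⟨_, h3⟩
      rw [Nat.dvd_add_right dvd_rfl] at this
      exact hp.one_lt.ne' (Nat.dvd_one.mp this)

theorem R_inj {k : Type} [Field k] [Fintype k] (p : ℕ) [Fact p.Prime] [CharP k p] (d : ℕ) (hd : 0 < d)
    (hdp : ¬ p ∣ d) (ζ₀ : k) (hζ₀ : IsPrimitiveRoot ζ₀ d)
    (S : k[X]) (hS : S ≠ 0) (β γ b : k) (hβγ : β ≠ 0 ∨ γ ≠ 0)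
    (h1 : ∀ ℓ : ℕ, ℓ.Prime → ℓ ∣ d → ∀ w : k[X], w ^ ℓ ≠ S)
    {R : Type} [CommRing R] [Algebra k[X] R] (y z : R) (B : Module.Basis (Fin d × Fin p) k[X] R)
    (hB : ∀ i, B i = y ^ (i.1 : ℕ) * z ^ (i.2 : ℕ))
    (hu : ∀ (B : Type) [CommRing B] (f : k[X] →+* B) (y' z' : B), y' ^ d = f S →
      z' ^ p = f (X ^ (p - 1)) * z' + f (hpol p β γ b) →
        ∃ φ : R →+* B, (∀ a, φ (algebraMap k[X] R a) = f a) ∧ φ y = y' ∧ φ z = z') : IsDomain R := by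
  have hp := (Fact.out : p.Prime)
  let K := FractionRing k[X]
  let L := SeparableClosure K
  have hKi : Function.Injective (algebraMap k[X] K) := IsFractionRing.injective _ _
  haveI : CharP K p := charP_of_injective_algebraMap hKi p
  haveI : CharP L p := charP_of_injective_algebraMap (algebraMap K L).injective p
  haveI : IsGalois K L := IsSepClosure.isGalois
  set S' := algebraMap k[X] K S with hS'
  set h' := algebraMap k[X] K (hpol p β γ b) with hh'
  set e := algebraMap k[X] K X with he
  have hS'0 : S' ≠ 0 := by rw [hS']; simpa using hS
  have he0 : e ≠ 0 := by rw [he]; simp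
  haveI : NeZero (d : L) := ⟨by rwa [Ne, CharP.cast_eq_zero_iff L p d]⟩
  obtain ⟨y', hy'⟩ := IsSepClosed.exists_pow_nat_eq (algebraMap K L S') d
  obtain ⟨z', hz'⟩ : ∃ z' : L, z' ^ p = algebraMap K L (e ^ (p - 1)) * z' + algebraMap K L h' := by
    obtain ⟨z', hz'⟩ := IsSepClosed.exists_root_C_mul_X_pow_add_C_mul_X_add_C' p p (1 : L)
      (-algebraMap K L (e ^ (p - 1))) (-algebraMap K L h') (dvd_refl p) hp.two_le (by rw [neg_ne_zero, Ne, map_eq_zero]; exact pow_ne_zero _ he0)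
    exact ⟨z', by linear_combination hz'⟩
  obtain ⟨φ, hφ, hφy, hφz⟩ := hu L ((algebraMap K L).comp (algebraMap k[X] K)) y' z' (by simpa using hy')
    (by simpa using hz')
  have hinj : Function.Injective φ := by
    rw [injective_iff_map_eq_zero]
    intro r hr
    have := gal_indep p d hd hdp (algebraMap k[X] K (C ζ₀))
      (hζ₀.map_of_injective (f := (algebraMap k[X] K).comp C) (hKi.comp C_injective)) S' e h' hS'0 he0 y' z' hy' hz'
      (by
        intro ℓ hℓ hℓd w hw
        obtain ⟨w', rfl⟩ := IsIntegrallyClosed.exists_algebraMap_eq_of_isIntegral_pow (R := k[X]) (x := w) hℓ.pos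
          (by rw [hw]; exact isIntegral_algebraMap)
        rw [← map_pow] at hw
        exact h1 ℓ hℓ hℓd w' (hKi hw))
      (by
        intro w hw
        have hwInt : IsIntegral k[X] w := by
          refine ⟨X ^ p - (C (X ^ (p - 1)) * X + C (hpol p β γ b)), monic_X_pow_sub ?_, ?_⟩
          · refine (degree_linear_le).trans_lt ?_
            exact_mod_cast hp.one_lt
          · simp [hw, he, hh']
        obtain ⟨w', rfl⟩ := IsIntegrallyClosed.algebraMap_eq_of_integral hwInt
        rw [← map_pow, he, hh', ← map_pow, ← map_mul, ← map_add] at hw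
        exact hpol_not p hp β γ b hβγ w' (hKi hw))
      (fun i => algebraMap k[X] K (B.repr r i))
      (by
        rw [← B.sum_repr r, map_sum] at hr
        rw [← hr]
        refine Finset.sum_congr rfl fun i _ => ?_
        rw [Algebra.smul_def, map_mul, hφ, hB, map_mul, map_pow, map_pow, hφy, hφz]; rfl)
    apply B.repr.injective
    ext1 i
    simpa using hKi ((this i).trans (map_zero _).symm)
  exact hinj.isDomain φ

end WB

namespace WB

theorem hpol_natDegree {k : Type*} [Field k] (p : ℕ) (β γ b : k) : (hpol p β γ b).natDegree ≤ p + 1 := by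
  unfold hpol
  compute_degree
  omega

theorem class_bound {k : Type} [Field k] [Fintype k] (p n : ℕ) [Fact p.Prime] [CharP k p]
    (hcard : Fintype.card k = p ^ n) (d : ℕ) (hd : 0 < d) (hdq : d ∣ Fintype.card k - 1)
    (S : k[X]) (hS : S ≠ 0) (β γ b : k) (hβγ : β ≠ 0 ∨ γ ≠ 0)
    (h1 : ∀ ℓ : ℕ, ℓ.Prime → ℓ ∣ d → ∀ w : k[X], w ^ ℓ ≠ S) (𝒳 : Finset k)
    (hX : ∀ x ∈ 𝒳, x ≠ 0 ∧ (∃ y, y ≠ 0 ∧ y ^ d = S.eval x) ∧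
      ∃ z, z ^ p = x ^ (p - 1) * z + (hpol p β γ b).eval x) :
    ((d * p * 𝒳.card : ℕ) : ℝ) ≤
      Fintype.card k + stC ((d + p) * (S.natDegree + p + 1)) (d * p) * p * Real.sqrt (Fintype.card k) := by
  have hp := (Fact.out : p.Prime)
  have hp2 := hp.two_le
  rcases 𝒳.eq_empty_or_nonempty with rfl | hne
  · simp only [Finset.card_empty, mul_zero, Nat.cast_zero]; positivity
  have hq1 : 0 < Fintype.card k - 1 := by have := Fintype.one_lt_card (α := k); omega
  have hdp : ¬ p ∣ d := by
    intro h
    have h2 : p ∣ Fintype.card k - 1 := h.trans hdq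
    have h3 : p ∣ Fintype.card k := by
      rw [hcard]; refine dvd_pow_self _ ?_
      rintro rfl
      rw [pow_zero] at hcard; omega
    have h4 := Nat.dvd_sub h3 h2
    have : Fintype.card k - (Fintype.card k - 1) = 1 := by omega
    rw [this] at h4
    exact hp.one_lt.ne' (Nat.dvd_one.mp h4)
  obtain ⟨ζ₀, hζ₀⟩ : ∃ ζ₀ : k, IsPrimitiveRoot ζ₀ d := by
    obtain ⟨g, hg⟩ := IsCyclic.exists_generator (α := kˣ)
    have h2 : orderOf g = Fintype.card k - 1 := by
      rw [orderOf_eq_card_of_forall_mem_zpowers hg, Nat.card_eq_fintype_card, Fintype.card_units]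
    obtain ⟨r, hr⟩ := hdq
    have h3 : IsPrimitiveRoot g (Fintype.card k - 1) := by rw [← h2]; exact IsPrimitiveRoot.orderOf g
    have h4 := h3.pow hq1 (a := r) (b := d) (by rw [hr]; ring)
    exact ⟨_, (IsPrimitiveRoot.coe_units_iff).mpr h4⟩
  haveI : NeZero d := ⟨hd.ne'⟩
  letI : Fintype (rootsOfUnity d k) := Fintype.ofFinite _
  obtain ⟨R, _, _, y, z, B, hB, hy, hz, hu⟩ := exists_R (A := k[X]) d p hd hp2 S (X ^ (p - 1)) (hpol p β γ b)
  haveI hdom : IsDomain R := R_inj p d hd hdp ζ₀ hζ₀ S hS β γ b hβγ h1 y z B hB hu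
  have hinjR : Function.Injective (algebraMap k[X] R) := by
    rw [injective_iff_map_eq_zero]
    intro a ha
    by_contra h0
    have h2 : a • B (⟨0, hd⟩, ⟨0, hp.pos⟩) = 0 := by rw [Algebra.smul_def, ha, zero_mul]
    have h3 := congrArg (fun r => B.repr r (⟨0, hd⟩, ⟨0, hp.pos⟩)) h2
    simp at h3
    exact h0 h3
  haveI : CharP R p := charP_of_injective_algebraMap hinjR p
  set δ := S.natDegree + p + 1 with hδ
  set c := (d + p) * δ with hc
  have hB0 : ∀ i, VV B 0 (B i) := by
    intro i j
    rw [B.repr_self, Finsupp.single_apply]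
    split_ifs <;> simp
  have hlift : ∀ w : R, (∀ i, VV B δ (w * B i)) → ∀ A r, VV B A r → VV B (A + δ) (w * r) := by
    intro w hw A r hr
    rw [← B.sum_repr r, Finset.mul_sum]
    refine VV.sum _ _ fun i _ => ?_
    rw [mul_smul_comm]
    exact (hw i).smul _ (hr i)
  have hyV : ∀ A r, VV B A r → VV B (A + δ) (y * r) := by
    refine hlift y ?_
    rintro ⟨i, j⟩
    by_cases hi : (i : ℕ) + 1 < d
    · have : y * B (i, j) = B (⟨i + 1, hi⟩, j) := by
        rw [hB, hB]; simp only; ring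
      rw [this]
      exact (hB0 _).mono (by omega)
    · have hi' : (i : ℕ) + 1 = d := by have := i.2; omega
      have : y * B (i, j) = S • B (⟨0, hd⟩, j) := by
        rw [hB, hB, Algebra.smul_def, ← hy]
        have h2 : y ^ d = y ^ ((i : ℕ) + 1) := by congr 1; exact hi'.symm
        rw [h2]; simp only; ring
      rw [this]
      exact ((hB0 _).smul S le_rfl).mono (by omega)
  have hzV : ∀ A r, VV B A r → VV B (A + δ) (z * r) := by
    refine hlift z ?_
    rintro ⟨i, j⟩
    by_cases hi : (j : ℕ) + 1 < p
    · have : z * B (i, j) = B (i, ⟨j + 1, hi⟩) := by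
        rw [hB, hB]; simp only; ring
      rw [this]
      exact (hB0 _).mono (by omega)
    · have hi' : (j : ℕ) + 1 = p := by have := j.2; omega
      have : z * B (i, j) = (X ^ (p - 1) : k[X]) • B (i, ⟨1, by omega⟩) +
          hpol p β γ b • B (i, ⟨0, by omega⟩) := by
        rw [hB, hB, hB, Algebra.smul_def, Algebra.smul_def]
        simp only [pow_one, pow_zero, mul_one]
        have h2 : z * (y ^ (i : ℕ) * z ^ (j : ℕ)) = y ^ (i : ℕ) * z ^ ((j : ℕ) + 1) := by ring
        rw [h2, hi', hz]
        ring
      rw [this]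
      refine VV.add (((hB0 _).smul _ (natDegree_X_pow_le _)).mono (by omega))
        (((hB0 _).smul _ (hpol_natDegree p β γ b)).mono (by omega))
  have hXV : ∀ t : k, ∀ A r, VV B A r → VV B (A + δ) ((z + algebraMap k[X] R (C t * X)) * r) := by
    intro t A r hr
    rw [add_mul]
    refine VV.add (hzV A r hr) ?_
    rw [← Algebra.smul_def]
    exact (hr.smul (C t * X) (B := 1) (by compute_degree)).mono (by omega)
  have hpw : ∀ w : R, (∀ A r, VV B A r → VV B (A + δ) (w * r)) → ∀ n A r, VV B A r →
      VV B (A + n * δ) (w ^ n * r) := by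
    intro w hw n
    induction n with
    | zero => intro A r hr; simpa using hr
    | succ n ih =>
      intro A r hr
      have := hw _ _ (ih A r hr)
      rw [← mul_assoc, ← pow_succ'] at this
      exact this.mono (by rw [Nat.succ_mul]; omega)
  have hcij : ∀ i : Fin d × Fin p, (i.1 : ℕ) * δ + (i.2 : ℕ) * δ ≤ c := by
    intro i
    rw [hc, ← add_mul]
    have := i.1.2
    have := i.2.2
    exact Nat.mul_le_mul_right _ (by omega)
  have hmul : ∀ i A r, VV B A r → VV B (A + c) (B i * r) := by
    intro i A r hr
    rw [hB, mul_assoc]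
    exact (hpw y hyV _ _ _ (hpw z hzV (i.2 : ℕ) _ _ hr)).mono (by have := hcij i; omega)
  -- the endomorphisms
  let ι' : ZMod p →+* k := ZMod.castHom (dvd_refl p) k
  have hσ : ∀ g : rootsOfUnity d k × ZMod p, ∃ σ : R →ₐ[k[X]] R,
      σ y = algebraMap k[X] R (C ((g.1 : kˣ) : k)) * y ∧
      σ z = z + algebraMap k[X] R (C (ι' g.2) * X) := by
    intro g
    obtain ⟨φ, hφ, hφy, hφz⟩ := hu R (algebraMap k[X] R) (algebraMap k[X] R (C ((g.1 : kˣ) : k)) * y)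
      (z + algebraMap k[X] R (C (ι' g.2) * X)) (by
        rw [mul_pow, hy, ← map_pow, ← map_pow]
        have h2 : ((g.1 : kˣ) : k) ^ d = 1 := by
          have := g.1.2
          rw [mem_rootsOfUnity] at this
          have := congrArg Units.val this
          simpa only [Units.val_pow_eq_pow_val, Units.val_one] using this
        rw [h2]; simp) (by
        rw [add_pow_char, hz, ← map_pow, mul_pow, ← C_pow, ← map_pow ι', ZMod.pow_card]
        have e1 : X ^ p = (X ^ (p - 1) * X : k[X]) := by rw [← pow_succ]; congr 1; omega
        rw [e1]
        simp only [map_mul, map_add]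
        ring)
    exact ⟨{ toRingHom := φ, commutes' := hφ }, hφy, hφz⟩
  choose σ hσy hσz using hσ
  have hext : ∀ f g : R →ₐ[k[X]] R, f y = g y → f z = g z → f = g := by
    intro f g h2 h3
    have : f.toLinearMap = g.toLinearMap := by
      apply B.ext
      intro i
      simp [hB, h2, h3]
    exact AlgHom.toLinearMap_injective this
  have hcomp : ∀ g g', (σ g).comp (σ g') = σ (g.1 * g'.1, g.2 + g'.2) := by
    intro g g'
    apply hext
    · rw [AlgHom.comp_apply, hσy, map_mul, hσy, AlgHom.commutes, hσy]
      simp only [Subgroup.coe_mul, Units.val_mul, map_mul]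
      ring
    · rw [AlgHom.comp_apply, hσz, map_add, hσz, AlgHom.commutes, hσz]
      simp only [map_add, map_mul, add_mul]
      ring
  have hone : σ (1, 0) = AlgHom.id k[X] R := by
    apply hext
    · rw [hσy]; simp
    · rw [hσz]; simp
  have hσinj : ∀ g, Function.Injective (σ g) := by
    intro g
    have h2 := hcomp (g.1⁻¹, -g.2) g
    simp only [inv_mul_cancel, neg_add_cancel] at h2
    rw [hone] at h2
    have : Function.LeftInverse (σ (g.1⁻¹, -g.2)) (σ g) := fun r => by
      rw [← AlgHom.comp_apply, h2]; rfl
    exact this.injective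
  have hσV : ∀ g A r, VV B A r → VV B (A + c) (σ g r) := by
    intro g A r hr
    rw [← B.sum_repr r, map_sum]
    refine VV.sum _ _ fun i _ => ?_
    rw [map_smul, hB, map_mul, map_pow, map_pow, hσy, hσz, mul_pow, mul_assoc, ← map_pow, ← C_pow,
      ← Algebra.smul_def]
    have h2 := hpw y hyV (i.1 : ℕ) _ _ (hpw _ (hXV (ι' g.2)) (i.2 : ℕ) 0 1 (by
      have := hB0 (⟨0, hd⟩, ⟨0, hp.pos⟩)
      rw [hB] at this
      simpa using this))
    rw [mul_one] at h2
    exact ((h2.smul (C _) (natDegree_C _).le).smul _ (hr i)).mono (by have := hcij i; omega)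
  have htrans : ∀ g g', ∃ τ, ∀ r, σ g' (σ τ r) = σ g r := by
    intro g g'
    refine ⟨(g'.1⁻¹ * g.1, -g'.2 + g.2), fun r => ?_⟩
    rw [← AlgHom.comp_apply, hcomp]
    simp
  -- the points
  have hpt : ∀ x ∈ 𝒳, ∃ φ : R →+* k, (∀ f : k[X], φ (algebraMap k[X] R f) = f.eval x) ∧ φ y ≠ 0 := by
    intro x hx
    obtain ⟨hx0, ⟨y0, hy0, hy0'⟩, ⟨z0, hz0⟩⟩ := hX x hx
    obtain ⟨φ, h2, h3, h4⟩ := hu k (evalRingHom x) y0 z0 (by simpa using hy0') (by simpa using hz0)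
    exact ⟨φ, by simpa using h2, by rwa [h3]⟩
  have hpt' : ∀ x : k, ∃ φ : R →+* k, x ∈ 𝒳 → (∀ f : k[X], φ (algebraMap k[X] R f) = f.eval x) ∧ φ y ≠ 0 := by
    intro x
    by_cases hx : x ∈ 𝒳
    · obtain ⟨φ, h⟩ := hpt x hx
      exact ⟨φ, fun _ => h⟩
    · obtain ⟨x', hx'⟩ := hne
      obtain ⟨φ, h⟩ := hpt x' hx'
      exact ⟨φ, fun h => absurd h hx⟩
  choose φ hφ using hpt'
  have hζcard : Fintype.card (rootsOfUnity d k) = d := by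
    rw [← Nat.card_eq_fintype_card, hζ₀.card_rootsOfUnity]
  have hsplit : ∀ x ∈ 𝒳, ∀ r, (∀ g, φ x (σ g r) = 0) → ∀ i, (B.repr r i).eval x = 0 := by
    intro x hx r hr
    have hx0 := (hX x hx).1
    refine vand2 (fun i => (B.repr r i).eval x)
      ((Finset.univ : Finset (rootsOfUnity d k)).image fun u : rootsOfUnity d k => ((u : kˣ) : k) * φ x y) ?_ ?_
    · rw [Finset.card_image_of_injective, Finset.card_univ, hζcard]
      intro u v huv
      exact Subtype.ext (Units.ext (mul_right_cancel₀ (hφ x hx).2 huv))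
    · intro y' hy'
      obtain ⟨u, -, rfl⟩ := Finset.mem_image.mp hy'
      refine ⟨(Finset.univ : Finset (ZMod p)).image fun t => φ x z + ι' t * x, ?_, ?_⟩
      · rw [Finset.card_image_of_injective, Finset.card_univ, ZMod.card]
        intro t t' htt
        exact ι'.injective (mul_right_cancel₀ hx0 (add_left_cancel htt))
      · intro z' hz'
        obtain ⟨t, -, rfl⟩ := Finset.mem_image.mp hz'
        rw [← hr (u, t)]
        conv_rhs => rw [← B.sum_repr r]
        rw [map_sum, map_sum]
        refine Finset.sum_congr rfl fun i _ => ?_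
        rw [map_smul, hB, map_mul, map_pow, map_pow, hσy, hσz, Algebra.smul_def]
        simp only [map_mul, map_pow, map_add, (hφ x hx).1, eval_C, eval_mul, eval_X]
  have hfinal := stepanov2 (b := B) p n hcard c hmul hB0 σ hσinj hσV htrans 𝒳 φ (fun x hx => (hφ x hx).1) hsplit
    (d * p) (Nat.mul_pos hd hp.pos) (by simp) (by rw [Fintype.card_prod, hζcard, ZMod.card])
  exact hfinal

end WB

namespace WB

set_option maxHeartbeats 1600000 in
theorem equidist {k : Type} [Field k] [Fintype k] (p n : ℕ) [Fact p.Prime] [CharP k p]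
    (hcard : Fintype.card k = p ^ n) (d : ℕ) (hd : 0 < d) (hdq : d ∣ Fintype.card k - 1)
    (s : k[X]) (hs : s ≠ 0) (β γ : k) (hβγ : β ≠ 0 ∨ γ ≠ 0)
    (hsl : ∀ a : k, a ≠ 0 → ∀ ℓ : ℕ, ℓ.Prime → ℓ ∣ d → ∀ w : k[X], w ^ ℓ ≠ C a * s)
    (χ : MulChar k ℂ) (hχ : χ ^ d = 1) (ψ : AddChar k ℂ) (hψ : ∀ z, ψ (z ^ p - z) = 1)
    (hnt : χ ≠ 1 ∨ ψ ≠ 1) :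
    ‖∑ x ∈ (Finset.univ : Finset k).filter (fun x => x ≠ 0 ∧ s.eval x ≠ 0),
      χ (s.eval x) * ψ (β * x + γ * x⁻¹)‖ ≤
    (stC ((d + p) * (s.natDegree + p + 1)) (d * p) * p + s.natDegree + 1 : ℝ) * Real.sqrt (Fintype.card k) := by
  have hp := (Fact.out : p.Prime)
  set E : ℝ := stC ((d + p) * (s.natDegree + p + 1)) (d * p) * p with hE
  set q := Fintype.card k with hq
  have hq1 : 1 < q := Fintype.one_lt_card
  set good := (Finset.univ : Finset k).filter (fun x => x ≠ 0 ∧ s.eval x ≠ 0) with hgood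
  set h : k → k := fun x => β * x + γ * x⁻¹ with hh
  set T := ∑ x ∈ good, χ (s.eval x) * ψ (h x) with hT
  let P : k → kˣ → Prop := fun x a => ∃ y, y ≠ 0 ∧ y ^ d = a * s.eval x
  let Q : k → k → Prop := fun x b => ∃ z, z ^ p - z = h x - b
  let N : kˣ → k → ℕ := fun a b => (good.filter fun x => P x a ∧ Q x b).card
  let M : ℕ := ((Finset.univ : Finset kˣ).filter fun u : kˣ => ∃ y : k, y ≠ 0 ∧ y ^ d = u).card
  let M' : ℕ := ((Finset.univ : Finset k).filter fun v => ∃ z, z ^ p - z = v).card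
  have hN : ∀ a b, ((d * p : ℕ) : ℝ) * N a b ≤ q + E * Real.sqrt q := by
    intro a b
    have hdeg : (C (a : k) * s).natDegree = s.natDegree := natDegree_C_mul a.ne_zero
    have := class_bound p n hcard d hd hdq (C (a : k) * s) (mul_ne_zero (by simp) hs) β γ b hβγ
      (hsl a a.ne_zero) (good.filter fun x => P x a ∧ Q x b) (by
        intro x hx
        rw [Finset.mem_filter, hgood, Finset.mem_filter] at hx
        obtain ⟨⟨-, hx0, hsx⟩, ⟨y, hy0, hy⟩, ⟨z, hz⟩⟩ := hx
        refine ⟨hx0, ⟨y, hy0, by simpa using hy⟩, ⟨x * z, ?_⟩⟩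
        have e1 : x ^ p = (x ^ (p - 1) * x) := by rw [← pow_succ]; congr 1; have := hp.pos; omega
        have e2 : z ^ p = z + (β * x + γ * x⁻¹ - b) := by rw [← hz]; ring
        simp only [hpol, eval_add, eval_sub, eval_mul, eval_C, eval_pow, eval_X]
        rw [mul_pow, e2, pow_succ, e1]
        field_simp)
    rw [hdeg] at this
    rw [← Nat.cast_mul]
    exact this
  -- fibres
  have hP : ∀ x ∈ good, ((Finset.univ : Finset kˣ).filter fun a : kˣ => P x a).card = M := by
    intro x hx
    rw [hgood, Finset.mem_filter] at hx
    refine Finset.card_bij (fun a _ => a * Units.mk0 (s.eval x) hx.2.2) ?_ ?_ ?_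
    · intro a ha
      simpa [P] using ha
    · intro a _ a' _ h
      exact mul_right_cancel h
    · intro u hu
      refine ⟨u * (Units.mk0 (s.eval x) hx.2.2)⁻¹, ?_, by simp⟩
      have := hx.2.2
      simpa [P, this] using hu
  have hQ : ∀ x, ((Finset.univ : Finset k).filter fun b => Q x b).card = M' := by
    intro x
    refine Finset.card_bij (fun b _ => h x - b) ?_ ?_ ?_
    · intro b hb
      simpa [Q] using hb
    · intro b _ b' _ h
      exact sub_right_injective h
    · intro v hv
      exact ⟨h x - v, by simpa [Q] using hv, by simp⟩
  have hPχ : ∀ x ∈ good, ∀ a, P x a → χ ((a⁻¹ : kˣ) : k) = χ (s.eval x) := by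
    intro x hx a ⟨y, hy0, hy⟩
    have h1 : χ (y ^ d) = 1 := by
      rw [map_pow, ← MulChar.pow_apply' χ hd.ne', hχ, MulChar.one_apply (IsUnit.mk0 y hy0)]
    have h2 : s.eval x = ((a⁻¹ : kˣ) : k) * y ^ d := by rw [hy]; simp
    rw [h2, map_mul, h1, mul_one]
  have hQψ : ∀ x b, Q x b → ψ b = ψ (h x) := by
    intro x b ⟨z, hz⟩
    have h2 : h x = b + (z ^ p - z) := by rw [hz]; ring
    rw [h2, AddChar.map_add_eq_mul, hψ, mul_one]
  have hNsum : ∀ a b, ((N a b : ℕ) : ℂ) = ∑ x ∈ good, (if P x a then 1 else 0) * (if Q x b then 1 else 0) := by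
    intro a b
    simp only [N]
    rw [Finset.card_filter]
    push_cast
    refine Finset.sum_congr rfl fun x _ => ?_
    by_cases h1 : P x a <;> by_cases h2 : Q x b <;> simp [h1, h2]
  have key1 : ∑ a : kˣ, ∑ b : k, χ ((a⁻¹ : kˣ) : k) * ψ b * N a b = T * M * M' := by
    calc ∑ a : kˣ, ∑ b : k, χ ((a⁻¹ : kˣ) : k) * ψ b * N a b
        = ∑ a : kˣ, ∑ b : k, ∑ x ∈ good, (if P x a then χ ((a⁻¹ : kˣ) : k) else 0) * (if Q x b then ψ b else 0) := by
          refine Finset.sum_congr rfl fun a _ => Finset.sum_congr rfl fun b _ => ?_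
          rw [hNsum, Finset.mul_sum]
          refine Finset.sum_congr rfl fun x _ => ?_
          split_ifs <;> ring
      _ = ∑ x ∈ good, (∑ a : kˣ, if P x a then χ ((a⁻¹ : kˣ) : k) else 0) * (∑ b : k, if Q x b then ψ b else 0) := by
          simp_rw [Finset.sum_mul_sum]
          rw [Finset.sum_comm (s := good)]
          refine Finset.sum_congr rfl fun b _ => ?_
          rw [Finset.sum_comm]
      _ = ∑ x ∈ good, (M * χ (s.eval x)) * (M' * ψ (h x)) := by
          refine Finset.sum_congr rfl fun x hx => ?_
          congr 1
          · rw [← Finset.sum_filter, Finset.sum_congr rfl (g := fun _ => χ (s.eval x)), Finset.sum_const, hP x hx,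
              nsmul_eq_mul]
            intro a ha
            exact hPχ x hx a (Finset.mem_filter.mp ha).2
          · rw [← Finset.sum_filter, Finset.sum_congr rfl (g := fun _ => ψ (h x)), Finset.sum_const, hQ x,
              nsmul_eq_mul]
            intro b hb
            exact hQψ x b (Finset.mem_filter.mp hb).2
      _ = T * M * M' := by
          rw [hT, Finset.sum_mul, Finset.sum_mul]
          refine Finset.sum_congr rfl fun x _ => ?_
          ring
  have key2 : ∑ a : kˣ, ∑ b : k, (N a b : ℝ) = good.card * M * M' := by
    have : ∀ a b, ((N a b : ℕ) : ℝ) = ∑ x ∈ good, (if P x a then 1 else 0) * (if Q x b then 1 else 0) := by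
      intro a b
      exact_mod_cast hNsum a b
    calc ∑ a : kˣ, ∑ b : k, (N a b : ℝ)
        = ∑ x ∈ good, (∑ a : kˣ, if P x a then (1 : ℝ) else 0) * (∑ b : k, if Q x b then (1 : ℝ) else 0) := by
          simp_rw [this, Finset.sum_mul_sum]
          rw [Finset.sum_comm (s := good)]
          refine Finset.sum_congr rfl fun b _ => ?_
          rw [Finset.sum_comm]
      _ = ∑ x ∈ good, (M : ℝ) * M' := by
          refine Finset.sum_congr rfl fun x hx => ?_
          rw [← Finset.sum_filter, ← Finset.sum_filter, Finset.sum_const, Finset.sum_const, hP x hx, hQ x]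
          simp
      _ = _ := by rw [Finset.sum_const, nsmul_eq_mul]; ring
  have key3 : ∑ a : kˣ, ∑ b : k, χ ((a⁻¹ : kˣ) : k) * ψ b = 0 := by
    rw [← Finset.sum_mul_sum]
    rcases hnt with h1 | h1
    · have : ∑ a : kˣ, χ ((a⁻¹ : kˣ) : k) = 0 := by
        refine (Equiv.sum_comp (Equiv.inv kˣ) (fun a : kˣ => χ (a : k))).trans ?_
        refine sum_hom_units_eq_zero (χ.toMonoidHom.comp (Units.coeHom k)) ?_
        intro h2
        apply h1
        ext a
        have := DFunLike.congr_fun h2 a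
        simpa using this
      rw [this, zero_mul]
    · rw [AddChar.sum_eq_zero_of_ne_one h1, mul_zero]
  have hM : q - 1 ≤ d * M := by
    have h1 := Finset.card_le_mul_card_image_of_maps_to (s := (Finset.univ : Finset kˣ))
      (t := (Finset.univ : Finset kˣ).filter fun u : kˣ => ∃ y : k, y ≠ 0 ∧ y ^ d = u) (f := fun u : kˣ => u ^ d) (by
        intro u _
        rw [Finset.mem_filter]
        exact ⟨Finset.mem_univ _, u, u.ne_zero, by simp⟩) d (by
        intro b _
        have : ((Finset.univ : Finset kˣ).filter fun u : kˣ => u ^ d = b).image (fun u : kˣ => (u : k)) ⊆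
            (nthRoots d (b : k)).toFinset := by
          intro x hx
          obtain ⟨u, hu, rfl⟩ := Finset.mem_image.mp hx
          rw [Multiset.mem_toFinset, mem_nthRoots hd, ← (Finset.mem_filter.mp hu).2]
          simp
        have h2 := Finset.card_le_card this
        rw [Finset.card_image_of_injective _ Units.val_injective] at h2
        exact h2.trans ((Multiset.toFinset_card_le _).trans (card_nthRoots d (b : k))))
    rw [Finset.card_univ, Fintype.card_units] at h1
    exact h1
  have hM' : q ≤ p * M' := by
    have h1 := Finset.card_le_mul_card_image_of_maps_to (s := (Finset.univ : Finset k))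
      (t := (Finset.univ : Finset k).filter fun v => ∃ z, z ^ p - z = v) (f := fun z => z ^ p - z) (by
        intro u _
        rw [Finset.mem_filter]
        exact ⟨Finset.mem_univ _, u, rfl⟩) p (by
        intro b _
        have hmon : (X ^ p - (X + C b) : k[X]).Monic := monic_X_pow_sub (by
            rw [degree_X_add_C]; exact_mod_cast hp.one_lt)
        have hdg : (X ^ p - (X + C b) : k[X]).natDegree = p := by
          rw [natDegree_sub_eq_left_of_natDegree_lt, natDegree_X_pow]
          rw [natDegree_X_pow, natDegree_X_add_C]; exact hp.one_lt
        have : ((Finset.univ : Finset k).filter fun z => z ^ p - z = b) ⊆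
            (X ^ p - (X + C b) : k[X]).roots.toFinset := by
          intro z hz
          rw [Multiset.mem_toFinset, mem_roots hmon.ne_zero]
          have := (Finset.mem_filter.mp hz).2
          simp only [IsRoot, eval_sub, eval_pow, eval_X, eval_add, eval_C]
          rw [← this]; ring
        have h2 := Finset.card_le_card this
        refine h2.trans ((Multiset.toFinset_card_le _).trans ((card_roots' _).trans hdg.le)))
    exact h1
  have hgoodcard : q ≤ good.card + (s.natDegree + 1) := by
    have h1 : (Finset.univ : Finset k) ⊆ good ∪ insert 0 s.roots.toFinset := by
      intro x _
      rw [hgood]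
      simp only [Finset.mem_union, Finset.mem_filter, Finset.mem_univ, true_and, Finset.mem_insert,
        Multiset.mem_toFinset, mem_roots hs, IsRoot]
      tauto
    have h2 := Finset.card_le_card h1
    have h3 := Finset.card_union_le good (insert 0 s.roots.toFinset)
    have h4 := Finset.card_insert_le 0 s.roots.toFinset
    have h5 := Multiset.toFinset_card_le s.roots
    have h6 := card_roots' s
    rw [Finset.card_univ] at h2
    omega
  have hdp0 : (0 : ℝ) < ((d * p : ℕ) : ℝ) := by
    exact_mod_cast Nat.mul_pos hd hp.pos
  set μ : ℝ := (q + E * Real.sqrt q) / ((d * p : ℕ) : ℝ) with hμ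
  have hNμ : ∀ a b, (N a b : ℝ) ≤ μ := by
    intro a b
    rw [hμ, le_div_iff₀ hdp0, mul_comm]
    exact hN a b
  have hE0 : 0 ≤ E := by rw [hE]; positivity
  have hμ0 : 0 ≤ μ := by rw [hμ]; positivity
  have hnormχ : ∀ a : kˣ, ‖χ (a : k)‖ = 1 := fun a =>
    Complex.norm_eq_one_of_mem_rootsOfUnity (χ.apply_mem_rootsOfUnity a)
  have key4 : ‖T‖ * (M * M') ≤ (M * M') * (q + E * Real.sqrt q - good.card) := by
    calc ‖T‖ * (M * M') = ‖T * M * M'‖ := by rw [norm_mul, norm_mul]; simp; ring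
      _ = ‖∑ a : kˣ, ∑ b : k, χ ((a⁻¹ : kˣ) : k) * ψ b * ((N a b - μ : ℝ) : ℂ)‖ := by
          rw [← key1]
          congr 1
          have : ∑ a : kˣ, ∑ b : k, χ ((a⁻¹ : kˣ) : k) * ψ b * (μ : ℂ) = 0 := by
            simp_rw [← Finset.sum_mul]; rw [key3, zero_mul]
          rw [← sub_zero (∑ a : kˣ, ∑ b : k, χ ((a⁻¹ : kˣ) : k) * ψ b * (N a b : ℂ)), ← this,
            ← Finset.sum_sub_distrib]
          refine Finset.sum_congr rfl fun a _ => ?_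
          rw [← Finset.sum_sub_distrib]
          refine Finset.sum_congr rfl fun b _ => ?_
          push_cast; ring
      _ ≤ ∑ a : kˣ, ∑ b : k, (μ - N a b) := by
          refine (norm_sum_le _ _).trans (Finset.sum_le_sum fun a _ => ?_)
          refine (norm_sum_le _ _).trans (Finset.sum_le_sum fun b _ => ?_)
          rw [norm_mul, norm_mul, hnormχ, AddChar.norm_apply, one_mul, one_mul, Complex.norm_real, Real.norm_eq_abs,
            abs_sub_comm, abs_of_nonneg]
          linarith [hNμ a b]
      _ = ((q - 1 : ℕ) : ℝ) * q * μ - good.card * M * M' := by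
          simp_rw [Finset.sum_sub_distrib]
          rw [key2]
          congr 1
          rw [Finset.sum_const, Finset.sum_const, Finset.card_univ, Finset.card_univ, Fintype.card_units]
          simp only [nsmul_eq_mul]
          rw [mul_assoc]
      _ ≤ ((d * M : ℕ) : ℝ) * ((p * M' : ℕ) : ℝ) * μ - good.card * M * M' := by
          gcongr
      _ = (M * M') * (q + E * Real.sqrt q - good.card) := by
          have : q + E * Real.sqrt q = ((d * p : ℕ) : ℝ) * μ := by
            rw [hμ]; field_simp
          rw [this]; push_cast; ring
  have hMM : (0 : ℝ) < M * M' := by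
    have h1 : 0 < M := by
      rcases Nat.eq_zero_or_pos M with h | h
      · rw [h] at hM; omega
      · exact h
    have h2 : 0 < M' := by
      rcases Nat.eq_zero_or_pos M' with h | h
      · rw [h] at hM'; omega
      · exact h
    positivity
  have key5 : ‖T‖ ≤ q + E * Real.sqrt q - good.card := by
    rw [mul_comm] at key4
    exact le_of_mul_le_mul_left key4 hMM
  have h6 : (q : ℝ) ≤ good.card + (s.natDegree + 1) := by exact_mod_cast hgoodcard
  have h7 : 1 ≤ Real.sqrt q := by
    rw [Real.one_le_sqrt]; exact_mod_cast hq1.le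
  have h8 : (s.natDegree : ℝ) + 1 ≤ (s.natDegree + 1) * Real.sqrt q := by
    have : (0 : ℝ) ≤ s.natDegree + 1 := by positivity
    nlinarith
  calc ‖T‖ ≤ q + E * Real.sqrt q - good.card := key5
    _ ≤ E * Real.sqrt q + (s.natDegree + 1) := by linarith
    _ ≤ E * Real.sqrt q + (s.natDegree + 1) * Real.sqrt q := by linarith
    _ = _ := by ring

end WB

namespace WB

theorem monic_pow_descent {F k : Type*} [Field F] [Fintype F] [Field k] [Fintype k] [Algebra F k]
    (s : F[X]) (hs : s.Monic) (ℓ : ℕ) (hℓ : ℓ ≠ 0) (a : k) (ha : a ≠ 0) (w : k[X])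
    (hw : w ^ ℓ = C a * s.map (algebraMap F k)) : ∃ g : F[X], g.Monic ∧ g ^ ℓ = s := by
  have hlc : w.leadingCoeff ^ ℓ = a := by
    rw [← leadingCoeff_pow, hw, leadingCoeff_mul, leadingCoeff_C, (hs.map _).leadingCoeff, mul_one]
  have hw0 : w ≠ 0 := by
    rintro rfl
    rw [leadingCoeff_zero, zero_pow hℓ] at hlc
    exact ha hlc.symm
  set g : k[X] := C w.leadingCoeff⁻¹ * w with hg
  have hgm : g.Monic := by
    rw [Monic, hg, leadingCoeff_mul, leadingCoeff_C, inv_mul_cancel₀ (leadingCoeff_ne_zero.mpr hw0)]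
  have hgl : g ^ ℓ = s.map (algebraMap F k) := by
    rw [hg, mul_pow, hw, ← C_pow, ← mul_assoc, ← C_mul, inv_pow, hlc, inv_mul_cancel₀ ha, C_1, one_mul]
  have hfix : ∀ σ : k ≃ₐ[F] k, g.map (σ : k →+* k) = g := by
    intro σ
    have h1 : (g.map (σ : k →+* k)) ^ ℓ = g ^ ℓ := by
      rw [← Polynomial.map_pow, hgl, Polynomial.map_map]
      congr 1
      ext x
      simp
    refine eq_of_monic_of_associated (hgm.map _) hgm ?_
    exact associated_of_dvd_dvd ((IsIntegrallyClosed.pow_dvd_pow_iff hℓ).mp h1.dvd) ((IsIntegrallyClosed.pow_dvd_pow_iff hℓ).mp h1.symm.dvd)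
  have hl : g ∈ lifts (algebraMap F k) := by
    rw [lifts_iff_coeff_lifts]
    intro i
    have : g.coeff i ∈ (⊥ : IntermediateField F k) := by
      rw [IsGalois.mem_bot_iff_fixed]
      intro σ
      have := congrArg (fun P => coeff P i) (hfix σ)
      simpa using this
    exact IntermediateField.mem_bot.mp this
  obtain ⟨g0, hg0, -, hg0m⟩ := lifts_and_natDegree_eq_and_monic hl hgm
  refine ⟨g0, hg0m, ?_⟩
  apply map_injective _ (algebraMap F k).injective
  rw [Polynomial.map_pow, hg0, hgl]

/-- lift of multiplicative character by norm -/
noncomputable def nchar {F : Type*} [Field F] (k : Type*) [Field k] [Algebra F k] (ω : MulChar F ℂ) : MulChar k ℂ :=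
  MulChar.ofUnitHom (ω.toUnitHom.comp (Units.map (Algebra.norm F)))

theorem nchar_apply {F k : Type*} [Field F] [Field k] [Algebra F k] [FiniteDimensional F k] (ω : MulChar F ℂ) (x : k) :
    nchar k ω x = ω (Algebra.norm F x) := by
  by_cases hx : x = 0
  · subst hx
    rw [Algebra.norm_zero, MulChar.map_zero, MulChar.map_zero]
  · obtain ⟨u, rfl⟩ : ∃ u : kˣ, (u : k) = x := ⟨Units.mk0 x hx, rfl⟩
    simp [nchar]


theorem mix_H {F : Type*} [Field F] [Fintype F] (p : ℕ) [Fact p.Prime] [CharP F p]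
    (ω : MulChar F ℂ) (U : F[X]) (hU : U.Monic) (hU0 : U.eval 0 = 0)
    (ψ : AddChar F ℂ) (hψ : ∀ z, ψ (z ^ p - z) = 1) (β γ : F)
    (hnt : ((β ≠ 0 ∨ γ ≠ 0) ∧ ψ ≠ 1) ∨
      (β = 0 ∧ γ = 0 ∧ (∀ w : F[X], w ^ (Fintype.card F - 1) ≠ U) ∧
        (∀ r, ω ^ r = 1 → Fintype.card F - 1 ∣ r))) :
    ∃ C : ℝ, ∀ (k : Type) [Field k] [Fintype k] [Algebra F k],
      ‖∑ x : k, ω (Algebra.norm F (aeval x U)) * ψ (β * Algebra.trace F k x + γ * Algebra.trace F k x⁻¹)‖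
        ≤ C * Real.sqrt (Fintype.card k) := by
  set Q := Fintype.card F with hQ
  have hQ1 : 1 < Q := Fintype.one_lt_card
  let A := (Q - 1).divisors.filter fun e => ∃ s : F[X], s.Monic ∧ s ^ e = U
  have hA : A.Nonempty := ⟨1, by
    rw [Finset.mem_filter, Nat.mem_divisors]
    exact ⟨⟨one_dvd _, by omega⟩, U, hU, pow_one _⟩⟩
  obtain ⟨e, heA, hemax⟩ := A.exists_max_image id hA
  rw [Finset.mem_filter, Nat.mem_divisors] at heA
  obtain ⟨⟨⟨d, hde⟩, hQ0⟩, s, hsm, hsU⟩ := heA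
  have he0 : e ≠ 0 := by rintro rfl; omega
  have hd0 : 0 < d := by
    rcases Nat.eq_zero_or_pos d with h | h
    · subst h; omega
    · exact h
  have hs' : ∀ ℓ : ℕ, ℓ.Prime → ℓ ∣ d → ∀ g : F[X], g.Monic → g ^ ℓ ≠ s := by
    rintro ℓ hℓ ⟨d', rfl⟩ g hg hgs
    have : e * ℓ ∈ A := by
      rw [Finset.mem_filter, Nat.mem_divisors]
      refine ⟨⟨⟨d', by rw [hde]; ring⟩, hQ0⟩, g, hg, ?_⟩
      rw [mul_comm, pow_mul, hgs, hsU]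
    have h2 := hemax _ this
    simp only [id] at h2
    have := hℓ.two_le
    have : e * 2 ≤ e * ℓ := Nat.mul_le_mul_left e this
    omega
  have hs0 : s.eval 0 = 0 := by
    rw [← hsU, eval_pow] at hU0
    exact pow_eq_zero_iff he0 |>.mp hU0
  refine ⟨(stC ((d + p) * (s.natDegree + p + 1)) (d * p) * p + s.natDegree + 1 : ℝ), ?_⟩
  intro k _ _ _
  have hfd : FiniteDimensional F k := inferInstance
  have hchk : CharP k p := charP_of_injective_algebraMap (algebraMap F k).injective p
  obtain ⟨n, -, hcard⟩ := FiniteField.card k p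
  have hdk : d ∣ Fintype.card k - 1 := by
    have h1 : Q - 1 ∣ Fintype.card k - 1 := by
      rw [Module.card_eq_pow_finrank (K := F) (V := k)]
      simpa using Nat.sub_dvd_pow_sub_pow Q 1 (Module.finrank F k)
    exact (Dvd.intro_left e hde.symm).trans h1
  set sk := s.map (algebraMap F k) with hsk
  have hskm : sk.Monic := hsm.map _
  have hdeg : sk.natDegree = s.natDegree := natDegree_map _
  have hsl : ∀ a : k, a ≠ 0 → ∀ ℓ : ℕ, ℓ.Prime → ℓ ∣ d → ∀ w : k[X], w ^ ℓ ≠ C a * sk := by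
    intro a ha ℓ hℓ hℓd w hw
    obtain ⟨g, hg, hgs⟩ := monic_pow_descent s hsm ℓ hℓ.ne_zero a ha w hw
    exact hs' ℓ hℓ hℓd g hg hgs
  set Χ := nchar k ω ^ e with hΧ
  have hΧa : ∀ x : k, Χ x = ω (Algebra.norm F x) ^ e := by
    intro x
    rw [hΧ, MulChar.pow_apply' _ he0, nchar_apply]
  have hcardω : ω ^ (Q - 1) = 1 := by
    rw [hQ, ← Fintype.card_units]; exact MulChar.pow_card_eq_one ω
  have hΧd : Χ ^ d = 1 := by
    ext x
    rw [MulChar.pow_apply' _ hd0.ne', hΧa, ← pow_mul, ← hde, ← MulChar.pow_apply' _ hQ0, hcardω,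
      MulChar.one_apply_coe, MulChar.one_apply]
    exact (Algebra.norm_ne_zero_iff.mpr x.ne_zero).isUnit
  have hsum : ∀ (Ψ : k → ℂ), ∑ x : k, ω (Algebra.norm F (aeval x U)) * Ψ x =
      ∑ x ∈ (Finset.univ : Finset k).filter (fun x => x ≠ 0 ∧ sk.eval x ≠ 0), Χ (sk.eval x) * Ψ x := by
    intro Ψ
    rw [Finset.sum_filter]
    refine Finset.sum_congr rfl fun x _ => ?_
    have h1 : aeval x U = (sk.eval x) ^ e := by
      rw [← hsU, map_pow, hsk, eval_map_algebraMap]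
    rw [h1, map_pow, map_pow, hΧa]
    split_ifs with h2
    · rfl
    · have h3 : sk.eval x = 0 := by
        by_contra h3
        apply h2
        refine ⟨?_, h3⟩
        rintro rfl
        apply h3
        rw [hsk, ← map_zero (algebraMap F k), eval_map_apply, hs0]
      rw [h3, Algebra.norm_zero, MulChar.map_zero, zero_pow he0, zero_mul]
  rcases hnt with ⟨hβγ, hψ1⟩ | ⟨rfl, rfl, hUw, hωo⟩
  · let Ψ : AddChar k ℂ := ψ.compAddMonoidHom (Algebra.trace F k).toAddMonoidHom
    have hΨa : ∀ x, Ψ x = ψ (Algebra.trace F k x) := fun x => rfl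
    have hΨ : ∀ z, Ψ (z ^ p - z) = 1 := by
      intro z
      rw [hΨa, map_sub]
      have : Algebra.trace F k (z ^ p) = (Algebra.trace F k z) ^ p := by
        apply (algebraMap F k).injective
        rw [map_pow (algebraMap F k), FiniteField.algebraMap_trace_eq_sum_pow, FiniteField.algebraMap_trace_eq_sum_pow,
          sum_pow_char]
        refine Finset.sum_congr rfl fun i _ => ?_
        rw [← pow_mul, ← pow_mul, mul_comm]
      rw [this, hψ]
    have hΨ1 : Ψ ≠ 1 := by
      intro h
      apply hψ1
      ext y
      obtain ⟨x, rfl⟩ := Algebra.trace_surjective F k y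
      rw [← hΨa, h]; rfl
    have := equidist p n hcard d hd0 hdk sk hskm.ne_zero (algebraMap F k β) (algebraMap F k γ)
      (by simpa using hβγ) hsl Χ hΧd Ψ hΨ (Or.inr hΨ1)
    rw [hdeg] at this
    rw [hsum]
    refine le_trans (le_of_eq ?_) this
    congr 1
    refine Finset.sum_congr rfl fun x _ => ?_
    rw [hΨa, ← Algebra.smul_def, ← Algebra.smul_def, map_add (Algebra.trace F k), map_smul, map_smul]
    rfl
  · have hΧ1 : Χ ≠ 1 := by
      intro h
      have h1 : ω ^ e = 1 := by
        ext y
        obtain ⟨x, hx⟩ := FiniteField.unitsMap_norm_surjective F k y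
        rw [MulChar.pow_apply' _ he0, ← hx]
        have := hΧa x
        rw [h, MulChar.one_apply_coe] at this
        rw [MulChar.one_apply_coe]
        exact this.symm
      have h2 := hωo e h1
      have h3 : Q - 1 = e := Nat.dvd_antisymm h2 (Dvd.intro d hde.symm)
      exact hUw s (by rw [h3, hsU])
    have := equidist p n hcard d hd0 hdk sk hskm.ne_zero 1 0
      (by simp) hsl Χ hΧd 1 (by simp) (Or.inl hΧ1)
    rw [hdeg] at this
    rw [hsum]
    refine le_trans (le_of_eq ?_) this
    congr 1
    refine Finset.sum_congr rfl fun x _ => ?_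
    simp

end WB

namespace WB

theorem exists_gen (F : Type*) [Field F] [Fintype F] : ∃ ω : MulChar F ℂ,
    (∀ r, ω ^ r = 1 → Fintype.card F - 1 ∣ r) ∧ ∀ χ : MulChar F ℂ, ∃ i, 1 ≤ i ∧ χ = ω ^ i := by
  have hc : 1 < Fintype.card F := Fintype.one_lt_card
  have hu := Fintype.card_units (α := F)
  obtain ⟨ω, hω⟩ := MulChar.exists_mulChar_orderOf_eq_card_units F
    (Complex.isPrimitiveRoot_exp (Fintype.card Fˣ) (by omega))
  refine ⟨ω, fun r hr => by rw [← hu, ← hω]; exact orderOf_dvd_of_pow_eq_one hr, fun χ => ?_⟩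
  have hcard : Nat.card (MulChar F ℂ) = Nat.card Fˣ := by
    have : HasEnoughRootsOfUnity ℂ (Monoid.exponent Fˣ) := inferInstance
    exact MulChar.card_eq_card_units_of_hasEnoughRootsOfUnity F ℂ
  have htop : Subgroup.zpowers ω = ⊤ := by
    apply Subgroup.eq_top_of_card_eq
    rw [Nat.card_zpowers, hω, hcard, Nat.card_eq_fintype_card]
  have hm : χ ∈ Subgroup.zpowers ω := by rw [htop]; trivial
  rw [← mem_powers_iff_mem_zpowers] at hm
  obtain ⟨i, hi⟩ := hm
  refine ⟨i + (Fintype.card Fˣ), by omega, ?_⟩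
  rw [pow_add, ← hω, pow_orderOf_eq_one, mul_one]
  exact hi.symm

theorem ratfunc_root {F : Type*} [Field F] (g i : ℕ) (hg : g ≠ 0) (R : RatFunc F)
    (h : R ^ g * RatFunc.X ^ i = 1) : ∃ (c : F) (r : ℕ), R * RatFunc.X ^ r = RatFunc.C c := by
  have hR : R ≠ 0 := by
    rintro rfl
    simp [hg] at h
  have hd : R.denom ≠ 0 := R.denom_ne_zero
  have hdm := R.monic_denom
  have h1 : R.num ^ g * X ^ i = R.denom ^ g := by
    apply RatFunc.algebraMap_injective F
    rw [map_mul, map_pow, map_pow, map_pow, RatFunc.algebraMap_X]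
    have hd' : algebraMap F[X] (RatFunc F) R.denom ≠ 0 := by simpa using hd
    have h2 := R.num_div_denom
    rw [div_eq_iff hd'] at h2
    rw [h2, mul_pow, mul_right_comm, h, one_mul]
  have hcop := R.isCoprime_num_denom
  have hun : IsUnit R.num := by
    have : R.num ∣ R.denom ^ g := by
      rw [← h1]; exact (dvd_pow_self _ hg).mul_right _
    exact (hcop.pow_right (n := g)).isUnit_of_dvd' dvd_rfl this
  obtain ⟨c, hc, hcn⟩ := Polynomial.isUnit_iff.mp hun
  have hdX : R.denom ∣ X ^ i := by
    have : R.denom ∣ R.num ^ g * X ^ i := by rw [h1]; exact dvd_pow_self _ hg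
    exact (hcop.symm.pow_right (n := g)).dvd_of_dvd_mul_left this
  obtain ⟨r, -, hr⟩ := (dvd_prime_pow prime_X i).mp hdX
  have hr' := eq_of_monic_of_associated hdm (monic_X_pow r) hr
  refine ⟨c, r, ?_⟩
  have h3 := R.num_div_denom
  rw [← h3, ← hcn, hr', map_pow, RatFunc.algebraMap_X, RatFunc.algebraMap_C]
  have : (RatFunc.X : RatFunc F) ^ r ≠ 0 := pow_ne_zero _ RatFunc.X_ne_zero
  field_simp

theorem weil {F : Type*} [Field F] [Fintype F] (p : ℕ) [Fact p.Prime] [CharP F p]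
    (hF2 : 2 < Fintype.card F)
    (χ₁ χ₂ : MulChar F ℂ) (ψ : AddChar F ℂ) (hψ : ∀ z, ψ (z ^ p - z) = 1) (hψ1 : ψ ≠ 1) (β γ : F)
    (f : RatFunc F) (hf : ¬ ExceptionalRatFunc f) (n : ℕ)
    (hdeg : f.num.natDegree + f.denom.natDegree = n)
    (hnt : β ≠ 0 ∨ γ ≠ 0 ∨ χ₁ ≠ 1 ∨ χ₂ ≠ 1) :
    ‖∑ x : F, χ₁ x * χ₂ (RatFunc.eval (RingHom.id F) x f) * ψ (β * x + γ * x⁻¹)‖ ≤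
      (n + 2) * Real.sqrt (Fintype.card F) := by
  set Q := Fintype.card F with hQ
  obtain ⟨ω, hωo, hωg⟩ := exists_gen F
  obtain ⟨i, hi1, hi⟩ := hωg χ₁
  obtain ⟨j, hj1, hj⟩ := hωg χ₂
  obtain ⟨j', hj'1, hj'⟩ := hωg χ₂⁻¹
  have hcardω : ω ^ (Q - 1) = 1 := by
    rw [hQ, ← Fintype.card_units]; exact MulChar.pow_card_eq_one ω
  have hf0 : f ≠ 0 := by
    rintro rfl
    exact hf (Or.inl ⟨0, 0, 0, Q - 1, by omega, dvd_rfl, by simp⟩)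
  have hnum0 : f.num ≠ 0 := by rwa [Ne, RatFunc.num_eq_zero_iff]
  set lc := f.num.leadingCoeff with hlc
  have hlc0 : lc ≠ 0 := leadingCoeff_ne_zero.mpr hnum0
  set u : F[X] := C lc⁻¹ * f.num with hu
  have hum : u.Monic := by
    rw [Monic, hu, leadingCoeff_mul, leadingCoeff_C, inv_mul_cancel₀ hlc0]
  have hnu : f.num = C lc * u := by
    rw [hu, ← mul_assoc, ← C_mul, mul_inv_cancel₀ hlc0, C_1, one_mul]
  have hud : u.natDegree = f.num.natDegree := natDegree_C_mul (inv_ne_zero hlc0)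
  set v := f.denom with hv
  have hvm : v.Monic := f.monic_denom
  set U : F[X] := X ^ i * u ^ j * v ^ j' with hUdef
  have hUm : U.Monic := ((monic_X_pow i).mul (hum.pow j)).mul (hvm.pow j')
  have hU0 : U.eval 0 = 0 := by
    rw [hUdef, eval_mul, eval_mul, eval_pow, eval_X, zero_pow (by omega), zero_mul, zero_mul]
  have hjj : Q - 1 ∣ j + j' := by
    apply hωo
    rw [pow_add, ← hj, ← hj', mul_inv_cancel]
  -- the nontriviality
  have hnt' : ((β ≠ 0 ∨ γ ≠ 0) ∧ ψ ≠ 1) ∨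
      (β = 0 ∧ γ = 0 ∧ (∀ w : F[X], w ^ (Fintype.card F - 1) ≠ U) ∧
        (∀ r, ω ^ r = 1 → Fintype.card F - 1 ∣ r)) := by
    by_cases hβγ : β ≠ 0 ∨ γ ≠ 0
    · exact Or.inl ⟨hβγ, hψ1⟩
    right
    push Not at hβγ
    have hχ : χ₁ ≠ 1 ∨ χ₂ ≠ 1 := by tauto
    refine ⟨hβγ.1, hβγ.2, ?_, hωo⟩
    intro w hw
    rw [← hQ] at hw
    by_cases hχ2 : χ₂ = 1
    · have hχ1 : χ₁ ≠ 1 := by tauto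
      apply hχ1
      obtain ⟨a, ha⟩ := hωo j (by rw [← hj, hχ2])
      obtain ⟨b, hb⟩ := hωo j' (by rw [← hj', hχ2, inv_one])
      have h1 := congrArg natDegree hw
      rw [hUdef, natDegree_pow, ((monic_X_pow i).mul (hum.pow j)).natDegree_mul (hvm.pow j'),
        (monic_X_pow i).natDegree_mul (hum.pow j), natDegree_X_pow, natDegree_pow, natDegree_pow] at h1
      have h2 : Q - 1 ∣ i := by
        have h3 : Q - 1 ∣ i + j * u.natDegree + j' * v.natDegree := by rw [← h1]; exact dvd_mul_right _ _
        have h4 : Q - 1 ∣ j' * v.natDegree := (Dvd.intro _ hb.symm).mul_right _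
        have h5 : Q - 1 ∣ j * u.natDegree := (Dvd.intro _ ha.symm).mul_right _
        exact (Nat.dvd_add_left h5).mp ((Nat.dvd_add_left h4).mp h3)
      obtain ⟨r, hr⟩ := h2
      rw [hi, hr, pow_mul, hcardω, one_pow]
    · apply hf
      left
      obtain ⟨t, ht⟩ := hjj
      have hQ0 : 0 < Q - 1 := by omega
      set g := Nat.gcd j (Q - 1) with hg
      have hg0 : 0 < g := Nat.gcd_pos_of_pos_right _ hQ0
      obtain ⟨d, hd⟩ := Nat.gcd_dvd_right j (Q - 1)
      obtain ⟨j0, hj0⟩ := Nat.gcd_dvd_left j (Q - 1)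
      rw [← hg] at hd hj0
      have hcop : Nat.Coprime j0 d := by
        have h1 : g * Nat.gcd j0 d = g * 1 := by
          rw [← Nat.gcd_mul_left, ← hj0, ← hd, mul_one]
        exact Nat.eq_of_mul_eq_mul_left hg0 h1
      have hd1 : 1 < d := by
        have h0 : d ≠ 0 := by rintro rfl; omega
        have h1 : d ≠ 1 := by
          rintro rfl
          apply hχ2
          rw [hj, hj0, ← mul_one g, ← hd, pow_mul, hcardω, one_pow]
        omega
      let φ := algebraMap F[X] (RatFunc F)
      have hφv : φ v ≠ 0 := by simpa [φ] using hvm.ne_zero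
      have hφu : φ u ≠ 0 := by simpa [φ] using hum.ne_zero
      set h : RatFunc F := φ u / φ v with hh
      have hh0 : h ≠ 0 := div_ne_zero hφu hφv
      have hfh : f = RatFunc.C lc * h := by
        have := f.num_div_denom
        rw [hnu, map_mul, RatFunc.algebraMap_C, mul_div_assoc] at this
        exact this.symm
      set Wd : RatFunc F := φ w / (φ v) ^ t with hWd
      have hrel : RatFunc.X ^ i * h ^ j = Wd ^ (Q - 1) := by
        have h1 := congrArg φ hw
        rw [hUdef, map_mul, map_mul, map_pow, map_pow, map_pow, map_pow] at h1
        have h2 : φ X = RatFunc.X := RatFunc.algebraMap_X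
        rw [h2] at h1
        rw [hWd, div_pow (φ w), h1, ← pow_mul, mul_comm t, ← ht, hh, div_pow, pow_add]
        field_simp
      have hWd0 : Wd ≠ 0 := by
        intro h0
        rw [h0, zero_pow hQ0.ne'] at hrel
        exact (mul_ne_zero (pow_ne_zero _ RatFunc.X_ne_zero) (pow_ne_zero _ hh0)) hrel
      obtain ⟨c, r, hcr⟩ := ratfunc_root g i hg0.ne' (h ^ j0 / Wd ^ d) (by
        rw [div_pow, ← pow_mul, ← pow_mul, mul_comm j0, ← hj0, mul_comm d, ← hd, ← hrel]
        have : (RatFunc.X : RatFunc F) ≠ 0 := RatFunc.X_ne_zero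
        field_simp)
      have hX0 : (RatFunc.X : RatFunc F) ≠ 0 := RatFunc.X_ne_zero
      have hc0 : (RatFunc.C c : RatFunc F) ≠ 0 := by
        rw [← hcr]
        exact mul_ne_zero (div_ne_zero (pow_ne_zero _ hh0) (pow_ne_zero _ hWd0)) (pow_ne_zero _ hX0)
      have hj0eq : h ^ j0 = RatFunc.C c * RatFunc.X ^ (-(r : ℤ)) * Wd ^ d := by
        rw [← hcr, zpow_neg, zpow_natCast]
        field_simp
      have hbez : (1 : ℤ) = j0 * Nat.gcdA j0 d + d * Nat.gcdB j0 d := by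
        rw [← Nat.gcd_eq_gcd_ab, hcop.gcd_eq_one]; rfl
      set A := Nat.gcdA j0 d
      set B := Nat.gcdB j0 d
      refine ⟨lc * c ^ A, -(r : ℤ) * A, Wd ^ A * h ^ B, d, hd1, Dvd.intro_left _ hd.symm, ?_⟩
      rw [hfh]
      have : h = (h ^ j0) ^ A * (h ^ B) ^ d := by
        conv_lhs => rw [← zpow_one h, hbez, zpow_add₀ hh0, zpow_mul, zpow_natCast, mul_comm (d : ℤ), zpow_mul, zpow_natCast]
      conv_lhs => rw [this, hj0eq]
      rw [mul_zpow, mul_zpow, ← zpow_mul, map_mul, map_zpow₀, mul_pow, ← zpow_natCast (Wd ^ A), ← zpow_natCast Wd,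
        ← zpow_mul, ← zpow_mul, mul_comm A]
      ring
  obtain ⟨Cc, hC⟩ := mix_H p ω U hUm hU0 ψ hψ β γ hnt'
  have hmain := mixSum_bound χ₁ χ₂ χ₂⁻¹ ψ u v β γ hum hvm n (by rw [hud]; exact hdeg) Cc (by
    intro k _ _ _
    refine le_trans (le_of_eq ?_) (hC k)
    unfold mixSum
    congr 1
    refine Finset.sum_congr rfl fun x _ => ?_
    rw [hj', hi, hj, MulChar.pow_apply' _ (by omega), MulChar.pow_apply' _ (by omega), MulChar.pow_apply' _ (by omega),
      hUdef]
    simp only [map_mul, map_pow, aeval_X])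
  have hval : ∑ x : F, χ₁ x * χ₂ (RatFunc.eval (RingHom.id F) x f) * ψ (β * x + γ * x⁻¹) =
      χ₂ lc * mixSum χ₁ χ₂ χ₂⁻¹ ψ u v β γ F := by
    unfold mixSum
    rw [Finset.mul_sum]
    refine Finset.sum_congr rfl fun x _ => ?_
    have e1 : RatFunc.eval (RingHom.id F) x f = lc * u.eval x * (v.eval x)⁻¹ := by
      unfold RatFunc.eval
      rw [eval₂_id, eval₂_id, hnu, eval_mul, eval_C, div_eq_mul_inv]
    rw [e1, map_mul, map_mul, ← MulChar.inv_apply']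
    simp only [Algebra.norm_self, Algebra.trace_self, coe_aeval_eq_eval, MonoidHom.id_apply, LinearMap.id_apply]
    ring
  rw [hval, norm_mul, show ‖χ₂ lc‖ = 1 from
    Complex.norm_eq_one_of_mem_rootsOfUnity (χ₂.apply_mem_rootsOfUnity (Units.mk0 lc hlc0)), one_mul]
  exact hmain

end WB

namespace WB

/-- `A` lies in `B` times the absolutely convex hull of `S` (dual formulation). -/
def Rep {F : Type*} (S : Set (F → ℂ)) (B : ℝ) (A : F → ℂ) : Prop :=
  ∀ (L : (F → ℂ) →ₗ[ℂ] ℂ) (M : ℝ), (∀ h ∈ S, ‖L h‖ ≤ M) → ‖L A‖ ≤ B * M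

theorem Rep.mul {F : Type*} {S S' S'' : Set (F → ℂ)} {B B' : ℝ} {A A' : F → ℂ} (h : Rep S B A) (h' : Rep S' B' A')
    (hS : ∀ a ∈ S, ∀ b ∈ S', a * b ∈ S'') : Rep S'' (B * B') (A * A') := by
  intro L M hM
  have h1 := h (L.comp (LinearMap.mulRight ℂ A')) (B' * M) (by
    intro a ha
    have h2 := h' (L.comp (LinearMap.mulLeft ℂ a)) M (by
      intro b hb
      exact hM _ (hS a ha b hb))
    exact h2)
  rw [mul_assoc]
  exact h1

theorem Rep.comp {F : Type*} {S S' : Set (F → ℂ)} {B : ℝ} {A : F → ℂ} (h : Rep S B A) (f : F → F)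
    (hS : ∀ a ∈ S, a ∘ f ∈ S') : Rep S' B (A ∘ f) := by
  intro L M hM
  exact h (L.comp (LinearMap.funLeft ℂ ℂ f)) M (fun a ha => hM _ (hS a ha))

theorem Rep.mono {F : Type*} {S S' : Set (F → ℂ)} {B : ℝ} {A : F → ℂ} (h : Rep S B A)
    (hS : ∀ a ∈ S, a ∈ S') : Rep S' B A :=
  fun L M hM => h L M (fun a ha => hM _ (hS a ha))

theorem Rep.add {F : Type*} {S : Set (F → ℂ)} {B B' : ℝ} {A A' : F → ℂ} (h : Rep S B A) (h' : Rep S B' A') :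
    Rep S (B + B') (A + A') := by
  intro L M hM
  rw [map_add, add_mul]
  exact (norm_add_le _ _).trans (add_le_add (h L M hM) (h' L M hM))

theorem Rep.sum {F ι : Type*} {S : Set (F → ℂ)} (s : Finset ι) (c : ι → ℂ) (h : ι → F → ℂ)
    (hS : ∀ i ∈ s, h i ∈ S) : Rep S (∑ i ∈ s, ‖c i‖) (∑ i ∈ s, c i • h i) := by
  intro L M hM
  rw [map_sum, Finset.sum_mul]
  refine (norm_sum_le _ _).trans (Finset.sum_le_sum fun i hi => ?_)
  rw [map_smul, smul_eq_mul, norm_mul]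
  exact mul_le_mul_of_nonneg_left (hM _ (hS i hi)) (norm_nonneg _)

theorem Rep.single {F : Type*} {S : Set (F → ℂ)} (c : ℝ) (hc : 0 ≤ c) (h : F → ℂ) (hS : h ∈ S) :
    Rep S c ((c : ℂ) • h) := by
  intro L M hM
  rw [map_smul, smul_eq_mul, norm_mul, Complex.norm_real, Real.norm_eq_abs, abs_of_nonneg hc]
  exact mul_le_mul_of_nonneg_left (hM _ hS) hc

section mult
variable {F : Type*} [Field F] [Fintype F]

/-- indicator of not being an `ℓ`-th power, on the units -/
noncomputable def aInd (ℓ : ℕ) (x : F) : ℂ := if x ≠ 0 ∧ ¬ ∃ v, x = v ^ ℓ then 1 else 0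

theorem aInd_rep (ℓ : ℕ) (hℓ : ℓ.Prime) (hd : ℓ ∣ Fintype.card F - 1) :
    Rep {h : F → ℂ | ∃ χ : MulChar F ℂ, h = χ ∧ χ ^ ℓ = 1 ∧ χ ≠ 1} (1 - 1 / ℓ)
      (aInd ℓ - ((1 - 1 / ℓ : ℝ) : ℂ) • ((1 : MulChar F ℂ) : F → ℂ)) := by
  obtain ⟨χ, hχ⟩ := MulChar.exists_mulChar_orderOf F hd (Complex.isPrimitiveRoot_exp ℓ hℓ.ne_zero)
  have hχℓ : χ ^ ℓ = 1 := by rw [← hχ]; exact pow_orderOf_eq_one χ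
  have hχ1 : χ ≠ 1 := by
    rintro rfl
    rw [orderOf_one] at hχ
    exact hℓ.ne_one hχ.symm
  have hℓ0 : (ℓ : ℂ) ≠ 0 := by exact_mod_cast hℓ.ne_zero
  have hℓ0' : (ℓ : ℝ) ≠ 0 := by exact_mod_cast hℓ.ne_zero
  -- characterise powers
  have hpow : ∀ x : F, x ≠ 0 → ((∃ v, x = v ^ ℓ) ↔ χ x = 1) := by
    intro x hx
    constructor
    · rintro ⟨v, rfl⟩
      have hv : v ≠ 0 := by rintro rfl; exact hx (zero_pow hℓ.ne_zero)
      rw [map_pow, ← MulChar.pow_apply' _ hℓ.ne_zero, hχℓ, MulChar.one_apply hv.isUnit]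
    · intro h1
      obtain ⟨g, hg⟩ := IsCyclic.exists_generator (α := Fˣ)
      obtain ⟨a, ha⟩ := (mem_powers_iff_mem_zpowers (x := g)).mpr (hg (Units.mk0 x hx))
      have ha : g ^ a = Units.mk0 x hx := ha
      have hxa : x = (g : F) ^ a := by
        have := congrArg Units.val ha
        simpa using this.symm
      have hgχ : χ g ≠ 1 := by
        intro h2
        apply hχ1
        rw [MulChar.eq_iff hg, h2, MulChar.one_apply_coe]
      have hgℓ : χ g ^ ℓ = 1 := by
        rw [← MulChar.pow_apply_coe, hχℓ, MulChar.one_apply_coe]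
      have ho : orderOf (χ g) = ℓ := orderOf_eq_prime_iff (hp := ⟨hℓ⟩) |>.mpr ⟨hgℓ, hgχ⟩
      rw [hxa, map_pow] at h1
      obtain ⟨b, rfl⟩ : ℓ ∣ a := by rw [← ho]; exact orderOf_dvd_of_pow_eq_one h1
      exact ⟨g ^ b, by rw [hxa, mul_comm, pow_mul]⟩
  have hval : aInd ℓ - ((1 - 1 / ℓ : ℝ) : ℂ) • ((1 : MulChar F ℂ) : F → ℂ) =
      ∑ i ∈ Finset.Ico 1 ℓ, (-(1 / ℓ) : ℂ) • ((χ ^ i : MulChar F ℂ) : F → ℂ) := by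
    funext x
    rw [Finset.sum_apply]
    simp only [Pi.sub_apply, Pi.smul_apply, smul_eq_mul]
    rw [← Finset.mul_sum]
    by_cases hx : x = 0
    · subst hx
      simp [aInd, MulChar.map_zero]
    have e1 : ∑ i ∈ Finset.Ico 1 ℓ, (χ ^ i) x = (∑ i ∈ Finset.range ℓ, (χ x) ^ i) - 1 := by
      rw [Finset.sum_Ico_eq_sub _ hℓ.one_lt.le]
      congr 1
      · refine Finset.sum_congr rfl fun i _ => ?_
        exact MulChar.pow_apply_coe χ i (Units.mk0 x hx)
      · simp [MulChar.one_apply (IsUnit.mk0 x hx)]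
    rw [e1, MulChar.one_apply (IsUnit.mk0 x hx)]
    unfold aInd
    by_cases h1 : χ x = 1
    · rw [if_neg (by rw [hpow x hx]; tauto), h1]
      simp
      field_simp
      ring
    · rw [if_pos ⟨hx, by rw [hpow x hx]; exact h1⟩]
      have : ∑ i ∈ Finset.range ℓ, (χ x) ^ i = 0 := by
        rw [geom_sum_eq h1, ← MulChar.pow_apply' _ hℓ.ne_zero, hχℓ, MulChar.one_apply (IsUnit.mk0 x hx)]
        simp
      rw [this]
      push_cast
      ring
  rw [hval]
  have hB : (1 - 1 / ℓ : ℝ) = ∑ i ∈ Finset.Ico 1 ℓ, ‖(-(1 / ℓ) : ℂ)‖ := by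
    rw [Finset.sum_const, Nat.card_Ico, nsmul_eq_mul, norm_neg, norm_div, norm_one, Complex.norm_natCast,
      Nat.cast_sub hℓ.one_lt.le]
    field_simp
    simp
  rw [hB]
  refine Rep.sum _ _ _ ?_
  intro i hi
  rw [Finset.mem_Ico] at hi
  refine ⟨χ ^ i, rfl, by rw [← pow_mul, mul_comm, pow_mul, hχℓ, one_pow], ?_⟩
  intro h
  have := Nat.le_of_dvd (by omega) (orderOf_dvd_of_pow_eq_one h)
  omega

/-- indicator of `l`-free -/
noncomputable def AInd (l : ℕ) (x : F) : ℂ := if IsUFree l x then 1 else 0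

theorem isUFree_iff (l : ℕ) (hl : l ≠ 0) (x : F) :
    IsUFree l x ↔ x ≠ 0 ∧ ∀ ℓ ∈ l.primeFactors, ¬ ∃ v, x = v ^ ℓ := by
  constructor
  · rintro ⟨hx, h⟩
    refine ⟨hx, ?_⟩
    rintro ℓ hℓ ⟨v, hv⟩
    have h1 := Nat.prime_of_mem_primeFactors hℓ
    exact h1.ne_one (h v ℓ h1.pos (Nat.dvd_of_mem_primeFactors hℓ) hv)
  · rintro ⟨hx, h⟩
    refine ⟨hx, ?_⟩
    intro v d hd hdl hxd
    by_contra hd1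
    obtain ⟨ℓ, hℓ, r, rfl⟩ := Nat.exists_prime_and_dvd hd1
    exact h ℓ (Nat.mem_primeFactors.mpr ⟨hℓ, (Dvd.intro _ rfl).trans hdl, hl⟩)
      ⟨v ^ r, by rw [hxd, mul_comm, pow_mul]⟩

theorem AInd_eq (l : ℕ) (hl : l ≠ 0) :
    (AInd l : F → ℂ) = ((1 : MulChar F ℂ) : F → ℂ) * ∏ ℓ ∈ l.primeFactors, aInd ℓ := by
  funext x
  simp only [AInd, Pi.mul_apply, Finset.prod_apply]
  rw [isUFree_iff l hl]
  by_cases hx : x = 0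
  · simp [hx, MulChar.map_zero]
  rw [MulChar.one_apply (IsUnit.mk0 x hx), one_mul]
  by_cases h : ∀ ℓ ∈ l.primeFactors, ¬ ∃ v, x = v ^ ℓ
  · rw [if_pos ⟨hx, h⟩, Finset.prod_eq_one]
    intro ℓ hℓ
    rw [aInd, if_pos ⟨hx, h ℓ hℓ⟩]
  · rw [if_neg (by tauto)]
    push Not at h
    obtain ⟨ℓ, hℓ, v, hv⟩ := h
    rw [Finset.prod_eq_zero hℓ]
    rw [aInd, if_neg]
    push Not
    exact fun _ => ⟨v, hv⟩

theorem one_mul_aInd (ℓ : ℕ) : ((1 : MulChar F ℂ) : F → ℂ) * aInd ℓ = aInd ℓ := by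
  funext x
  by_cases hx : x = 0
  · simp [hx, MulChar.map_zero, aInd]
  · simp [MulChar.one_apply (IsUnit.mk0 x hx)]

theorem AInd_rep (l : ℕ) (hl : l ∣ Fintype.card F - 1) :
    Rep {h : F → ℂ | ∃ χ : MulChar F ℂ, h = χ ∧ χ ^ l = 1}
      (((l.totient : ℝ) / l) * (2 : ℝ) ^ l.primeFactors.card) (AInd l) := by
  have hc : 1 < Fintype.card F := Fintype.one_lt_card
  have hl0 : l ≠ 0 := by rintro rfl; rw [zero_dvd_iff] at hl; omega
  rw [AInd_eq l hl0]
  have hθ : ((l.totient : ℝ) / l) * (2 : ℝ) ^ l.primeFactors.card = ∏ ℓ ∈ l.primeFactors, ((1 - 1 / (ℓ : ℝ)) + (1 - 1 / (ℓ : ℝ))) := by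
    have h1 := Nat.totient_eq_mul_prod_factors l
    have h2 : (l.totient : ℝ) = l * ∏ ℓ ∈ l.primeFactors, (1 - (ℓ : ℝ)⁻¹) := by
      have h3 := congrArg (Rat.cast : ℚ → ℝ) h1
      push_cast at h3
      exact h3
    rw [h2, mul_div_cancel_left₀ _ (by exact_mod_cast hl0), ← Finset.prod_const, ← Finset.prod_mul_distrib]
    refine Finset.prod_congr rfl fun ℓ _ => ?_
    rw [one_div]; ring
  rw [hθ]
  have key : ∀ s ⊆ l.primeFactors, Rep {h : F → ℂ | ∃ χ : MulChar F ℂ, h = χ ∧ χ ^ l = 1}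
      (∏ ℓ ∈ s, ((1 - 1 / (ℓ : ℝ)) + (1 - 1 / (ℓ : ℝ)))) (((1 : MulChar F ℂ) : F → ℂ) * ∏ ℓ ∈ s, aInd ℓ) := by
    intro s
    induction s using Finset.induction_on with
    | empty =>
      intro _
      simpa using Rep.single (S := {h : F → ℂ | ∃ χ : MulChar F ℂ, h = χ ∧ χ ^ l = 1}) 1 zero_le_one
        ((1 : MulChar F ℂ) : F → ℂ) ⟨1, rfl, one_pow _⟩
    | insert ℓ s hℓs ih =>
      intro hs
      have hℓ := hs (Finset.mem_insert_self _ _)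
      have hℓp := Nat.prime_of_mem_primeFactors hℓ
      have hℓl := Nat.dvd_of_mem_primeFactors hℓ
      have ih' := ih ((Finset.subset_insert _ _).trans hs)
      rw [Finset.prod_insert hℓs, Finset.prod_insert hℓs, ← mul_assoc, mul_comm _ (aInd ℓ), mul_assoc]
      have hle : (1 : ℝ) / ℓ ≤ 1 := by
        rw [div_le_one (by exact_mod_cast hℓp.pos)]; exact_mod_cast hℓp.one_lt.le
      have h1 : Rep {h : F → ℂ | ∃ χ : MulChar F ℂ, h = χ ∧ χ ^ l = 1}
          ((1 - 1 / (ℓ : ℝ)) + (1 - 1 / (ℓ : ℝ))) (aInd ℓ) := by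
        have h2 := (aInd_rep (F := F) ℓ hℓp (hℓl.trans hl)).mono (S' := {h : F → ℂ | ∃ χ : MulChar F ℂ, h = χ ∧ χ ^ l = 1}) (by
          rintro a ⟨χ, rfl, hχ, -⟩
          obtain ⟨r, rfl⟩ := hℓl
          exact ⟨χ, rfl, by rw [pow_mul, hχ, one_pow]⟩)
        have h3 := h2.add (Rep.single (1 - 1 / (ℓ : ℝ)) (by linarith) ((1 : MulChar F ℂ) : F → ℂ) ⟨1, rfl, one_pow _⟩)
        rwa [sub_add_cancel] at h3
      refine h1.mul ih' ?_
      rintro _ ⟨χ, rfl, hχ⟩ _ ⟨χ', rfl, hχ'⟩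
      exact ⟨χ * χ', by rw [MulChar.coeToFun_mul], by rw [mul_pow, hχ, hχ', one_mul]⟩
  exact key _ (Finset.Subset.refl _)

theorem AInd_diff_rep (c l : ℕ) (hc : c.Prime) (hcl : ¬ c ∣ l) (hl : l ∣ Fintype.card F - 1)
    (hcd : c ∣ Fintype.card F - 1) :
    Rep {h : F → ℂ | ∃ χ : MulChar F ℂ, h = χ ∧ χ ≠ 1}
      (((c.totient : ℝ) / c) * (((l.totient : ℝ) / l) * (2 : ℝ) ^ l.primeFactors.card))
      (AInd (c * l) - (((c.totient : ℝ) / c : ℝ) : ℂ) • AInd l) := by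
  have hc1 : 1 < Fintype.card F := Fintype.one_lt_card
  have hl0 : l ≠ 0 := by rintro rfl; rw [zero_dvd_iff] at hl; omega
  have hθ : (c.totient : ℝ) / c = 1 - 1 / c := by
    rw [Nat.totient_prime hc, Nat.cast_sub hc.one_lt.le, sub_div, div_self (by exact_mod_cast hc.ne_zero)]
    simp
  have h1 := aInd_rep (F := F) c hc hcd
  have h2 := AInd_rep (F := F) l hl
  have e : AInd (c * l) - (((c.totient : ℝ) / c : ℝ) : ℂ) • AInd l =
      (aInd c - ((1 - 1 / c : ℝ) : ℂ) • ((1 : MulChar F ℂ) : F → ℂ)) * AInd l := by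
    rw [hθ, AInd_eq (c * l) (mul_ne_zero hc.ne_zero hl0), AInd_eq l hl0, Nat.primeFactors_mul hc.ne_zero hl0,
      hc.primeFactors, Finset.singleton_union, Finset.prod_insert (by
        intro h; exact hcl (Nat.dvd_of_mem_primeFactors h))]
    funext x
    by_cases hx : x = 0
    · simp [hx, MulChar.map_zero]
    · simp [MulChar.one_apply (IsUnit.mk0 x hx)]
      ring
  rw [e, hθ]
  refine h1.mul h2 ?_
  rintro _ ⟨χ, rfl, hχ, hχ1⟩ _ ⟨χ', rfl, hχ'⟩
  refine ⟨χ * χ', by rw [MulChar.coeToFun_mul], ?_⟩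
  intro h
  apply hχ1
  have h3 : χ ^ l = 1 := by
    have : (χ * χ') ^ l = 1 := by rw [h, one_pow]
    rwa [mul_pow, hχ', mul_one] at this
  have h4 : orderOf χ ∣ Nat.gcd c l := Nat.dvd_gcd (orderOf_dvd_of_pow_eq_one hχ) (orderOf_dvd_of_pow_eq_one h3)
  rw [(Nat.Prime.coprime_iff_not_dvd hc).mpr hcl, Nat.dvd_one, orderOf_eq_one_iff] at h4
  exact h4

end mult
end WB

namespace WB
section tot
variable {K : Type*} [Field K] [DecidableEq K] [Fintype K]

theorem card_quot (g : K[X]) (hg : g ≠ 0) : Nat.card (K[X] ⧸ Ideal.span {g}) = Fintype.card K ^ g.natDegree := by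
  have : Module.Finite K (K[X] ⧸ Ideal.span {g}) := (AdjoinRoot.powerBasis hg).finite
  rw [Module.natCard_eq_pow_finrank (K := K), finrank_quotient_span_eq_natDegree, Nat.card_eq_fintype_card]

theorem finite_quot (g : K[X]) (hg : g ≠ 0) : Finite (K[X] ⧸ Ideal.span {g}) := by
  have : Module.Finite K (K[X] ⧸ Ideal.span {g}) := (AdjoinRoot.powerBasis hg).finite
  exact Module.finite_of_finite K

theorem isUnit_mk (g f : K[X]) : IsUnit (Ideal.Quotient.mk (Ideal.span {g}) f) ↔ IsCoprime f g := by
  constructor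
  · rintro h
    obtain ⟨y, hy⟩ := h.exists_right_inv
    obtain ⟨b, rfl⟩ := Ideal.Quotient.mk_surjective y
    rw [← map_mul, ← map_one (Ideal.Quotient.mk _), Ideal.Quotient.eq, Ideal.mem_span_singleton] at hy
    obtain ⟨c, hc⟩ := hy
    exact ⟨b, -c, by linear_combination hc⟩
  · rintro ⟨a, b, h⟩
    refine IsUnit.of_mul_eq_one (Ideal.Quotient.mk _ a) ?_
    rw [← map_mul, ← map_one (Ideal.Quotient.mk _), Ideal.Quotient.eq, Ideal.mem_span_singleton]
    exact ⟨-b, by linear_combination h⟩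

theorem polyTotient_prime_pow (P : K[X]) (hP : Irreducible P) (k : ℕ) (hk : k ≠ 0) :
    (polyTotient (P ^ k) : ℝ) = (Fintype.card K : ℝ) ^ (P ^ k).natDegree * (1 - 1 / (Fintype.card K : ℝ) ^ P.natDegree) := by
  have hP0 : P ^ k ≠ 0 := pow_ne_zero _ hP.ne_zero
  have := finite_quot (P ^ k) hP0
  have := finite_quot P hP.ne_zero
  set R := K[X] ⧸ Ideal.span {P ^ k}
  have hle : Ideal.span {P ^ k} ≤ Ideal.span {P} := by
    rw [Ideal.span_singleton_le_span_singleton]; exact dvd_pow_self _ hk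
  let π : R →+* K[X] ⧸ Ideal.span {P} := Ideal.Quotient.factor hle
  have hπ : Function.Surjective π := Ideal.Quotient.factor_surjective hle
  have hunit : ∀ x : R, IsUnit x ↔ π x ≠ 0 := by
    intro x
    obtain ⟨f, rfl⟩ := Ideal.Quotient.mk_surjective x
    rw [isUnit_mk, Ideal.Quotient.factor_mk, Ne, Ideal.Quotient.eq_zero_iff_mem, Ideal.mem_span_singleton,
      IsCoprime.pow_right_iff (Nat.pos_of_ne_zero hk), isCoprime_comm, hP.coprime_iff_not_dvd]
  have h1 : Nat.card R = Nat.card (K[X] ⧸ Ideal.span {P}) * Nat.card π.toAddMonoidHom.ker := by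
    rw [AddSubgroup.card_eq_card_quotient_mul_card_addSubgroup π.toAddMonoidHom.ker,
      Nat.card_congr (QuotientAddGroup.quotientKerEquivOfSurjective π.toAddMonoidHom hπ).toEquiv]
  have h2 : Nat.card R = Nat.card Rˣ + Nat.card π.toAddMonoidHom.ker := by
    have e1 : Nat.card Rˣ = Nat.card {x : R // IsUnit x} :=
      Nat.card_congr ⟨fun u => ⟨u, u.isUnit⟩, fun x => x.2.unit, fun u => by ext; simp, fun x => by ext; simp⟩
    have e2 : Nat.card π.toAddMonoidHom.ker = Nat.card {x : R // ¬ IsUnit x} := by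
      refine Nat.card_congr (Equiv.subtypeEquivRight fun x => ?_)
      rw [hunit, not_not]; rfl
    rw [e1, e2, ← Nat.card_sum]
    exact Nat.card_congr (Equiv.sumCompl _).symm
  rw [card_quot _ hP0] at h1 h2
  rw [card_quot _ hP.ne_zero] at h1
  have hq : (0 : ℝ) < Fintype.card K := by exact_mod_cast Fintype.card_pos
  have h1' : (Fintype.card K : ℝ) ^ (P ^ k).natDegree = (Fintype.card K : ℝ) ^ P.natDegree * (Nat.card π.toAddMonoidHom.ker : ℝ) := by exact_mod_cast h1
  have h2' : (Fintype.card K : ℝ) ^ (P ^ k).natDegree = (polyTotient (P ^ k) : ℝ) + (Nat.card π.toAddMonoidHom.ker : ℝ) := by exact_mod_cast h2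
  have : (polyTotient (P ^ k) : ℝ) = (Fintype.card K : ℝ) ^ (P ^ k).natDegree - (Nat.card π.toAddMonoidHom.ker : ℝ) := by linarith
  rw [this, h1']
  field_simp

theorem polyTotient_unit (g : K[X]) (hg : IsUnit g) : polyTotient g = 1 := by
  unfold polyTotient
  have : Subsingleton (K[X] ⧸ Ideal.span {g}) := by
    rw [Ideal.Quotient.subsingleton_iff, Ideal.span_singleton_eq_top]; exact hg
  simp

theorem polyTotient_mul (x y : K[X]) (h : IsCoprime x y) : polyTotient (x * y) = polyTotient x * polyTotient y := by
  unfold polyTotient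
  have hc : IsCoprime (Ideal.span {x}) (Ideal.span {y}) := by
    rw [Ideal.isCoprime_span_singleton_iff]; exact h
  rw [← Ideal.span_singleton_mul_span_singleton]
  rw [Nat.card_congr (Units.mapEquiv (Ideal.quotientMulEquivQuotientProd _ _ hc).toMulEquiv).toEquiv,
    Nat.card_congr (MulEquiv.prodUnits).toEquiv, Nat.card_prod]

theorem Theta_formula (g : K[X]) (hg : g ≠ 0) :
    (polyTotient g : ℝ) / (Fintype.card K : ℝ) ^ g.natDegree =
      ∏ P ∈ (normalizedFactors g).toFinset, (1 - 1 / (Fintype.card K : ℝ) ^ P.natDegree) := by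
  have hq : (Fintype.card K : ℝ) ≠ 0 := by exact_mod_cast Fintype.card_ne_zero
  revert hg
  refine induction_on_coprime g ?_ ?_ ?_ ?_
  · intro h; exact absurd rfl h
  · intro x hx _
    rw [polyTotient_unit x hx, normalizedFactors_of_isUnit hx, natDegree_eq_zero_of_isUnit hx]
    simp
  · intro P k hP _
    by_cases hk : k = 0
    · subst hk
      rw [pow_zero, polyTotient_unit 1 isUnit_one, normalizedFactors_one]
      simp
    · rw [normalizedFactors_of_irreducible_pow hP.irreducible, Multiset.toFinset_replicate, if_neg hk, Finset.prod_singleton,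
        polyTotient_prime_pow P hP.irreducible k hk]
      have : (normalize P).natDegree = P.natDegree := natDegree_eq_of_degree_eq degree_normalize
      rw [this]
      field_simp
  · intro x y hxy ihx ihy h0
    have hx : x ≠ 0 := left_ne_zero_of_mul h0
    have hy : y ≠ 0 := right_ne_zero_of_mul h0
    have hc : IsCoprime x y := hxy.isCoprime
    rw [polyTotient_mul x y hc, natDegree_mul hx hy, pow_add, Nat.cast_mul, mul_div_mul_comm, ihx hx, ihy hy,
      normalizedFactors_mul hx hy, Multiset.toFinset_add, Finset.prod_union]
    rw [Finset.disjoint_left]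
    intro P h1 h2
    rw [Multiset.mem_toFinset] at h1 h2
    exact (irreducible_of_normalized_factor P h1).not_isUnit (hxy (dvd_of_mem_normalizedFactors h1) (dvd_of_mem_normalizedFactors h2))

end tot
end WB

namespace WB
section
variable {K F : Type*} [Field K] [Field F] [Fintype K] [Fintype F] [Algebra K F]

/-- the action of a polynomial through Frobenius -/
noncomputable def TT (g : K[X]) : F →ₗ[K] F := aeval (FiniteField.frobeniusAlgHom K F).toLinearMap g

theorem frob_pow (i : ℕ) (α : F) : ((FiniteField.frobeniusAlgHom K F).toLinearMap ^ i) α = α ^ (Fintype.card K ^ i) := by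
  induction i with
  | zero => simp
  | succ i ih =>
    rw [pow_succ', Module.End.mul_apply, ih]
    simp [FiniteField.coe_frobeniusAlgHom, pow_succ, pow_mul]

theorem polyAct_eq (g : K[X]) (α : F) : polyAct (Fintype.card K) g α = TT g α := by
  unfold polyAct TT
  rw [aeval_eq_sum_range, LinearMap.sum_apply, sum_over_range]
  · refine Finset.sum_congr rfl fun i _ => ?_
    rw [LinearMap.smul_apply, frob_pow]
  · intro i; simp

theorem TT_mul (g h : K[X]) (α : F) : TT (g * h) α = TT g (TT h α) := by
  unfold TT; rw [map_mul]; rfl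

theorem ker_le (g : K[X]) (hg : g ≠ 0) : Nat.card (LinearMap.ker (TT g : F →ₗ[K] F)) ≤ Fintype.card K ^ g.natDegree := by
  set q := Fintype.card K
  have hq : 1 < q := Fintype.one_lt_card
  let Lg : F[X] := ∑ i ∈ Finset.range (g.natDegree + 1), C (algebraMap K F (g.coeff i)) * X ^ (q ^ i)
  have hcoeff : Lg.coeff (q ^ g.natDegree) = algebraMap K F g.leadingCoeff := by
    simp only [Lg, finset_sum_coeff, coeff_C_mul, coeff_X_pow]
    rw [Finset.sum_eq_single g.natDegree]
    · simp
    · intro i _ hi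
      rw [if_neg, mul_zero]
      intro h
      exact hi (Nat.pow_right_injective hq h).symm
    · simp
  have hLg0 : Lg ≠ 0 := by
    intro h
    rw [h, coeff_zero] at hcoeff
    have := hcoeff.symm
    rw [map_eq_zero] at this
    exact hg (leadingCoeff_eq_zero.mp this)
  have hdeg : Lg.natDegree ≤ q ^ g.natDegree := by
    apply natDegree_sum_le_of_forall_le
    intro i hi
    refine (natDegree_C_mul_X_pow_le _ _).trans ?_
    exact Nat.pow_le_pow_right hq.le (by rw [Finset.mem_range] at hi; omega)
  have hev : ∀ α : F, Lg.eval α = TT g α := by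
    intro α
    simp only [Lg, eval_finset_sum, eval_mul, eval_C, eval_pow, eval_X]
    unfold TT
    rw [aeval_eq_sum_range, LinearMap.sum_apply]
    refine Finset.sum_congr rfl fun i _ => ?_
    rw [LinearMap.smul_apply, frob_pow, Algebra.smul_def]
  have h1 : Nat.card (LinearMap.ker (TT g : F →ₗ[K] F)) ≤ Lg.roots.toFinset.card := by
    have h2 : ∀ α : LinearMap.ker (TT g : F →ₗ[K] F), (α : F) ∈ Lg.roots.toFinset := by
      intro α
      rw [Multiset.mem_toFinset, mem_roots hLg0, IsRoot, hev]
      exact LinearMap.mem_ker.mp α.2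
    have h3 := Nat.card_le_card_of_injective
      (fun α : LinearMap.ker (TT g : F →ₗ[K] F) => (⟨(α : F), h2 α⟩ : {x // x ∈ Lg.roots.toFinset})) (by
        intro x y hxy
        exact Subtype.ext (Subtype.mk.inj hxy))
    rwa [Nat.card_eq_fintype_card (α := {x // x ∈ Lg.roots.toFinset}), Fintype.card_coe] at h3
  exact h1.trans ((Multiset.toFinset_card_le _).trans ((card_roots' _).trans hdeg))

theorem TT_X_pow_sub_one (m : ℕ) (hF : Fintype.card F = Fintype.card K ^ m) (α : F) : TT (X ^ m - 1 : K[X]) α = 0 := by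
  unfold TT
  rw [map_sub, map_pow, aeval_X, map_one, LinearMap.sub_apply, frob_pow, ← hF, FiniteField.pow_card]
  simp

theorem ker_card (m : ℕ) (hm : m ≠ 0) (hF : Fintype.card F = Fintype.card K ^ m) (g : K[X]) (hg : g ∣ X ^ m - 1) :
    Nat.card (LinearMap.ker (TT g : F →ₗ[K] F)) = Fintype.card K ^ g.natDegree := by
  obtain ⟨R, hR⟩ := hg
  have h0 : (X ^ m - 1 : K[X]) ≠ 0 := (monic_X_pow_sub_C (1 : K) hm).ne_zero
  have hg0 : g ≠ 0 := by rintro rfl; rw [zero_mul] at hR; exact h0 hR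
  have hR0 : R ≠ 0 := by rintro rfl; rw [mul_zero] at hR; exact h0 hR
  have hd : g.natDegree + R.natDegree = m := by
    rw [← natDegree_mul hg0 hR0, ← hR]
    exact natDegree_X_pow_sub_C
  have h1 := ker_le (F := F) g hg0
  have h2 := ker_le (F := F) R hR0
  have h3 : Nat.card (LinearMap.range (TT R : F →ₗ[K] F)) ≤ Nat.card (LinearMap.ker (TT g : F →ₗ[K] F)) := by
    refine Nat.card_le_card_of_injective (Submodule.inclusion (p := LinearMap.range (TT R : F →ₗ[K] F)) ?_) (Submodule.inclusion_injective _)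
    rintro _ ⟨y, rfl⟩
    rw [LinearMap.mem_ker, ← TT_mul, ← hR, TT_X_pow_sub_one m hF]
  have h4 : Nat.card F = Nat.card (LinearMap.ker (TT R : F →ₗ[K] F)) * Nat.card (LinearMap.range (TT R : F →ₗ[K] F)) := by
    rw [Submodule.card_eq_card_quotient_mul_card (LinearMap.ker (TT R : F →ₗ[K] F)),
      Nat.card_congr (TT R : F →ₗ[K] F).quotKerEquivRange.toEquiv]
  rw [Nat.card_eq_fintype_card, hF, ← hd, pow_add] at h4
  have hq : 0 < Fintype.card K := Fintype.card_pos
  refine le_antisymm h1 ?_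
  by_contra hlt
  push Not at hlt
  have h5 : Nat.card (LinearMap.ker (TT R : F →ₗ[K] F)) * Nat.card (LinearMap.range (TT R : F →ₗ[K] F)) ≤
      Fintype.card K ^ R.natDegree * Nat.card (LinearMap.ker (TT g : F →ₗ[K] F)) := Nat.mul_le_mul h2 h3
  have h6 : Fintype.card K ^ R.natDegree * Nat.card (LinearMap.ker (TT g : F →ₗ[K] F)) < Fintype.card K ^ R.natDegree * Fintype.card K ^ g.natDegree :=
    Nat.mul_lt_mul_of_pos_left hlt (pow_pos hq _)
  rw [mul_comm (Fintype.card K ^ g.natDegree)] at h4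
  omega

/-- the image subgroup -/
noncomputable def VVg (g : K[X]) : AddSubgroup F := (LinearMap.range (TT g : F →ₗ[K] F)).toAddSubgroup

theorem VVg_index (m : ℕ) (hm : m ≠ 0) (hF : Fintype.card F = Fintype.card K ^ m) (g : K[X]) (hg : g ∣ X ^ m - 1) :
    (VVg g : AddSubgroup F).index = Fintype.card K ^ g.natDegree := by
  rw [← ker_card m hm hF g hg]
  have h4 : Nat.card F = Nat.card (LinearMap.ker (TT g : F →ₗ[K] F)) * Nat.card (LinearMap.range (TT g : F →ₗ[K] F)) := by
    rw [Submodule.card_eq_card_quotient_mul_card (LinearMap.ker (TT g : F →ₗ[K] F)),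
      Nat.card_congr (TT g : F →ₗ[K] F).quotKerEquivRange.toEquiv]
  have h5 := (VVg g : AddSubgroup F).index_mul_card
  have h6 : Nat.card (VVg g : AddSubgroup F) = Nat.card (LinearMap.range (TT g : F →ₗ[K] F)) := rfl
  have h7 : 0 < Nat.card (LinearMap.range (TT g : F →ₗ[K] F)) := Nat.card_pos
  rw [h4, h6] at h5
  exact Nat.eq_of_mul_eq_mul_right h7 h5

/-- indicator of the complement of a subgroup -/
noncomputable def bInd (V : AddSubgroup F) (x : F) : ℂ := if x ∈ V then 0 else 1

theorem ind_eq (V : AddSubgroup F) (y : F) :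
    (if y ∈ V then (1 : ℂ) else 0) = ∑ φ : AddChar (F ⧸ V) ℂ, (1 / (V.index : ℂ)) * φ (y : F ⧸ V) := by
  have hN : (V.index : ℂ) ≠ 0 := by exact_mod_cast V.index_ne_zero_of_finite
  rw [← Finset.mul_sum, AddChar.sum_apply_eq_ite]
  rw [AddSubgroup.index, Nat.card_eq_fintype_card] at *
  simp only [QuotientAddGroup.eq_zero_iff]
  split_ifs
  · field_simp
  · simp

/-- pull back a character -/
noncomputable def pb (V : AddSubgroup F) (φ : AddChar (F ⧸ V) ℂ) : AddChar F ℂ :=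
  φ.compAddMonoidHom (QuotientAddGroup.mk' V)

theorem pb_apply (V : AddSubgroup F) (φ : AddChar (F ⧸ V) ℂ) (x : F) : pb V φ x = φ (x : F ⧸ V) := rfl

theorem card_char (V : AddSubgroup F) : Fintype.card (AddChar (F ⧸ V) ℂ) = V.index := by
  rw [AddChar.card_eq, AddSubgroup.index, Nat.card_eq_fintype_card]

theorem bInd_rep (V : AddSubgroup F) :
    Rep {h : F → ℂ | ∃ η : AddChar F ℂ, h = η ∧ (∀ y ∈ V, η y = 1) ∧ η ≠ 1} (1 - 1 / V.index)
      (bInd V - ((1 - 1 / V.index : ℝ) : ℂ) • ((1 : AddChar F ℂ) : F → ℂ)) := by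
  have hN : (V.index : ℝ) ≠ 0 := by exact_mod_cast V.index_ne_zero_of_finite
  have hN' : 1 ≤ V.index := Nat.one_le_iff_ne_zero.mpr V.index_ne_zero_of_finite
  have hval : bInd V - ((1 - 1 / V.index : ℝ) : ℂ) • ((1 : AddChar F ℂ) : F → ℂ) =
      ∑ φ ∈ (Finset.univ : Finset (AddChar (F ⧸ V) ℂ)).erase 1, (-(1 / V.index) : ℂ) • (pb V φ : F → ℂ) := by
    funext y
    rw [Finset.sum_apply]
    simp only [Pi.sub_apply, Pi.smul_apply, smul_eq_mul, pb_apply, AddChar.one_apply]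
    have h1 := ind_eq V y
    rw [← Finset.add_sum_erase _ _ (Finset.mem_univ (1 : AddChar (F ⧸ V) ℂ)), AddChar.one_apply] at h1
    have h2 : bInd V y = 1 - if y ∈ V then (1 : ℂ) else 0 := by
      unfold bInd; split_ifs <;> simp
    rw [h2, h1]
    simp only [neg_mul, Finset.sum_neg_distrib]
    push_cast
    ring
  have hB : (1 - 1 / V.index : ℝ) = ∑ φ ∈ (Finset.univ : Finset (AddChar (F ⧸ V) ℂ)).erase 1, ‖(-(1 / V.index) : ℂ)‖ := by
    rw [Finset.sum_const, Finset.card_erase_of_mem (Finset.mem_univ _), Finset.card_univ, card_char, nsmul_eq_mul,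
      norm_neg, norm_div, norm_one, Complex.norm_natCast, Nat.cast_sub hN']
    field_simp
    simp
  rw [hval]
  conv_lhs => rw [hB]
  refine Rep.sum _ _ _ ?_
  intro φ hφ
  refine ⟨pb V φ, rfl, ?_, ?_⟩
  · intro y hy
    rw [pb_apply, (QuotientAddGroup.eq_zero_iff y).mpr hy, AddChar.map_zero_eq_one]
  · intro h
    apply (Finset.mem_erase.mp hφ).1
    ext z
    obtain ⟨y, rfl⟩ := QuotientAddGroup.mk_surjective z
    rw [← pb_apply, h]
    rfl

theorem coset_rep (V : AddSubgroup F) (y0 : F) :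
    Rep {h : F → ℂ | ∃ η : AddChar F ℂ, h = η} 1 (fun y => if y - y0 ∈ V then (1 : ℂ) else 0) := by
  have hN : (V.index : ℝ) ≠ 0 := by exact_mod_cast V.index_ne_zero_of_finite
  have hval : (fun y => if y - y0 ∈ V then (1 : ℂ) else 0) =
      ∑ φ : AddChar (F ⧸ V) ℂ, (1 / (V.index : ℂ) * φ (((-y0 : F)) : F ⧸ V)) • (pb V φ : F → ℂ) := by
    funext y
    rw [ind_eq, Finset.sum_apply]
    refine Finset.sum_congr rfl fun φ _ => ?_
    rw [Pi.smul_apply, smul_eq_mul, pb_apply, mul_assoc, ← AddChar.map_add_eq_mul]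
    congr 2
    rw [sub_eq_neg_add]; rfl
  have hB : (1 : ℝ) = ∑ φ : AddChar (F ⧸ V) ℂ, ‖(1 / (V.index : ℂ) * φ (((-y0 : F)) : F ⧸ V))‖ := by
    simp only [norm_mul, AddChar.norm_apply, mul_one, norm_div, norm_one, Complex.norm_natCast]
    rw [Finset.sum_const, Finset.card_univ, card_char, nsmul_eq_mul]
    field_simp
  rw [hval]
  conv_lhs => rw [hB]
  exact Rep.sum _ _ _ (fun φ _ => ⟨pb V φ, rfl⟩)

end
end WB

namespace WB
section
variable {K F : Type*} [Field K] [DecidableEq K] [Field F] [Fintype K] [Fintype F] [Algebra K F]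

theorem mem_VVg (g : K[X]) (x : F) : x ∈ (VVg g : AddSubgroup F) ↔ ∃ β, x = TT g β := by
  constructor
  · rintro ⟨y, hy⟩; exact ⟨y, hy.symm⟩
  · rintro ⟨y, hy⟩; exact ⟨y, hy.symm⟩

theorem VVg_mono {g h : K[X]} (hgh : g ∣ h) (x : F) (hx : x ∈ (VVg h : AddSubgroup F)) : x ∈ (VVg g : AddSubgroup F) := by
  obtain ⟨r, rfl⟩ := hgh
  rw [mem_VVg] at hx ⊢
  obtain ⟨β, rfl⟩ := hx
  exact ⟨TT r β, TT_mul _ _ _⟩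

theorem isGFree_iff (g : K[X]) (hg : g ≠ 0) (x : F) :
    IsGFree (Fintype.card K) g x ↔ ∀ P ∈ (normalizedFactors g).toFinset, x ∉ (VVg P : AddSubgroup F) := by
  simp only [Multiset.mem_toFinset, Polynomial.mem_normalizedFactors_iff hg]
  constructor
  · rintro h P ⟨hP, hPm, hPg⟩ hx
    rw [mem_VVg] at hx
    obtain ⟨β, hβ⟩ := hx
    have := h P hPm hPg ⟨β, by rw [polyAct_eq, hβ]⟩
    exact hP.ne_one this
  · rintro h H hH hHg ⟨β, hβ⟩
    by_contra h1
    have hnu : ¬ IsUnit H := fun hu => h1 (hH.eq_one_of_isUnit hu)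
    obtain ⟨P, hPm, hP, hPH⟩ := Polynomial.exists_monic_irreducible_factor H hnu
    refine h P ⟨hP, hPm, hPH.trans hHg⟩ (VVg_mono hPH x ?_)
    rw [mem_VVg]
    exact ⟨β, by rw [← polyAct_eq, hβ]⟩

/-- indicator of `g`-free -/
noncomputable def DInd (g : K[X]) (x : F) : ℂ := if IsGFree (Fintype.card K) g x then 1 else 0

theorem DInd_eq (g : K[X]) (hg : g ≠ 0) :
    (DInd g : F → ℂ) = ∏ P ∈ (normalizedFactors g).toFinset, bInd (VVg P : AddSubgroup F) := by
  funext x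
  simp only [DInd, Finset.prod_apply]
  rw [isGFree_iff g hg]
  by_cases h : ∀ P ∈ (normalizedFactors g).toFinset, x ∉ (VVg P : AddSubgroup F)
  · rw [if_pos h, Finset.prod_eq_one]
    intro P hP
    rw [bInd, if_neg (h P hP)]
  · rw [if_neg h]
    push Not at h
    obtain ⟨P, hP, hx⟩ := h
    rw [Finset.prod_eq_zero hP]
    rw [bInd, if_pos hx]

theorem DInd_rep (m : ℕ) (hm : m ≠ 0) (hF : Fintype.card F = Fintype.card K ^ m) (g : K[X]) (hg : g ∣ X ^ m - 1) :
    Rep {h : F → ℂ | ∃ η : AddChar F ℂ, h = η ∧ ∀ y ∈ (VVg g : AddSubgroup F), η y = 1}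
      (((polyTotient g : ℝ) / (Fintype.card K : ℝ) ^ g.natDegree) * (2 : ℝ) ^ (normalizedFactors g).toFinset.card)
      (DInd g) := by
  have h0 : (X ^ m - 1 : K[X]) ≠ 0 := (monic_X_pow_sub_C (1 : K) hm).ne_zero
  have hg0 : g ≠ 0 := by rintro rfl; exact h0 (zero_dvd_iff.mp hg)
  rw [DInd_eq g hg0, Theta_formula g hg0, ← Finset.prod_const, ← Finset.prod_mul_distrib]
  have key : ∀ s ⊆ (normalizedFactors g).toFinset,
      Rep {h : F → ℂ | ∃ η : AddChar F ℂ, h = η ∧ ∀ y ∈ (VVg g : AddSubgroup F), η y = 1}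
      (∏ P ∈ s, (1 - 1 / (Fintype.card K : ℝ) ^ P.natDegree) * 2) (∏ P ∈ s, bInd (VVg P : AddSubgroup F)) := by
    intro s
    induction s using Finset.induction_on with
    | empty =>
      intro _
      have := Rep.single (S := {h : F → ℂ | ∃ η : AddChar F ℂ, h = η ∧ ∀ y ∈ (VVg g : AddSubgroup F), η y = 1}) 1 zero_le_one
        ((1 : AddChar F ℂ) : F → ℂ) ⟨1, rfl, fun _ _ => rfl⟩
      simpa using this
    | insert P s hPs ih =>
      intro hs
      have hP := hs (Finset.mem_insert_self _ _)
      rw [Multiset.mem_toFinset, Polynomial.mem_normalizedFactors_iff hg0] at hP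
      have ih' := ih ((Finset.subset_insert _ _).trans hs)
      rw [Finset.prod_insert hPs, Finset.prod_insert hPs]
      have hidx := VVg_index (F := F) m hm hF P (hP.2.2.trans hg)
      have hidx' : ((VVg P : AddSubgroup F).index : ℝ) = (Fintype.card K : ℝ) ^ P.natDegree := by
        rw [hidx]; push_cast; rfl
      have hpos : (1 : ℝ) ≤ (Fintype.card K : ℝ) ^ P.natDegree := by
        apply one_le_pow₀
        exact_mod_cast Fintype.card_pos
      have hle : (1 : ℝ) / (Fintype.card K : ℝ) ^ P.natDegree ≤ 1 := by
        rw [div_le_one (by linarith)]; exact hpos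
      have h1 : Rep {h : F → ℂ | ∃ η : AddChar F ℂ, h = η ∧ ∀ y ∈ (VVg g : AddSubgroup F), η y = 1}
          ((1 - 1 / (Fintype.card K : ℝ) ^ P.natDegree) * 2) (bInd (VVg P : AddSubgroup F)) := by
        have h2 := (bInd_rep (F := F) (VVg P)).mono (S' := {h : F → ℂ | ∃ η : AddChar F ℂ, h = η ∧ ∀ y ∈ (VVg g : AddSubgroup F), η y = 1}) (by
          rintro a ⟨η, rfl, hη, -⟩
          exact ⟨η, rfl, fun y hy => hη y (VVg_mono hP.2.2 y hy)⟩)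
        rw [hidx'] at h2
        have h3 := h2.add (Rep.single (1 - 1 / (Fintype.card K : ℝ) ^ P.natDegree) (by linarith)
          ((1 : AddChar F ℂ) : F → ℂ) ⟨1, rfl, fun _ _ => rfl⟩)
        rwa [sub_add_cancel, ← mul_two] at h3
      refine h1.mul ih' ?_
      rintro _ ⟨χ, rfl, hχ⟩ _ ⟨χ', rfl, hχ'⟩
      exact ⟨χ * χ', by rw [AddChar.coe_mul], fun y hy => by rw [AddChar.mul_apply, hχ y hy, hχ' y hy, one_mul]⟩
  exact key _ (Finset.Subset.refl _)

theorem DInd_diff_rep (m : ℕ) (hm : m ≠ 0) (hF : Fintype.card F = Fintype.card K ^ m) (g : K[X]) (hg : g ∣ X ^ m - 1)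
    (e : K[X]) (he : Irreducible e) (hem : e.Monic) (hed : e ∣ X ^ m - 1) (heg : ¬ e ∣ g) :
    Rep {h : F → ℂ | ∃ η : AddChar F ℂ, h = η ∧ η ≠ 1}
      (((polyTotient e : ℝ) / (Fintype.card K : ℝ) ^ e.natDegree) *
        (((polyTotient g : ℝ) / (Fintype.card K : ℝ) ^ g.natDegree) * (2 : ℝ) ^ (normalizedFactors g).toFinset.card))
      (DInd (e * g) - (((polyTotient e : ℝ) / (Fintype.card K : ℝ) ^ e.natDegree : ℝ) : ℂ) • DInd g) := by
  have h0 : (X ^ m - 1 : K[X]) ≠ 0 := (monic_X_pow_sub_C (1 : K) hm).ne_zero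
  have hg0 : g ≠ 0 := by rintro rfl; exact h0 (zero_dvd_iff.mp hg)
  have hfe : normalizedFactors e = {e} := by
    rw [normalizedFactors_irreducible he, hem.normalize_eq_self]
  have hΘ : (polyTotient e : ℝ) / (Fintype.card K : ℝ) ^ e.natDegree = 1 - 1 / (Fintype.card K : ℝ) ^ e.natDegree := by
    rw [Theta_formula e he.ne_zero, hfe, Multiset.toFinset_singleton, Finset.prod_singleton]
  have h1 := bInd_rep (F := F) (VVg e)
  have hidx' : ((VVg e : AddSubgroup F).index : ℝ) = (Fintype.card K : ℝ) ^ e.natDegree := by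
    rw [VVg_index (F := F) m hm hF e hed]; push_cast; rfl
  rw [hidx'] at h1
  have h2 := DInd_rep (F := F) m hm hF g hg
  have hE : DInd (e * g) - (((1 - 1 / (Fintype.card K : ℝ) ^ e.natDegree : ℝ)) : ℂ) • DInd g =
      (bInd (VVg e : AddSubgroup F) - ((1 - 1 / (Fintype.card K : ℝ) ^ e.natDegree : ℝ) : ℂ) • ((1 : AddChar F ℂ) : F → ℂ)) * DInd g := by
    rw [DInd_eq (e * g) (mul_ne_zero he.ne_zero hg0), DInd_eq g hg0, normalizedFactors_mul he.ne_zero hg0,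
      hfe, Multiset.toFinset_add, Multiset.toFinset_singleton, Finset.singleton_union, Finset.prod_insert (by
        intro h
        rw [Multiset.mem_toFinset, Polynomial.mem_normalizedFactors_iff hg0] at h
        exact heg h.2.2)]
    funext x
    simp
    ring
  rw [hΘ, hE]
  refine h1.mul h2 ?_
  rintro _ ⟨χ, rfl, hχ, hχ1⟩ _ ⟨χ', rfl, hχ'⟩
  refine ⟨χ * χ', by rw [AddChar.coe_mul], ?_⟩
  intro h
  apply hχ1
  ext x
  obtain ⟨u, v, huv⟩ : IsCoprime e g := (he.coprime_iff_not_dvd).mpr heg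
  have hx : x = TT e (TT u x) + TT g (TT v x) := by
    rw [← TT_mul, ← TT_mul, mul_comm e, mul_comm g, ← LinearMap.add_apply]
    have : (TT (u * e) + TT (v * g) : F →ₗ[K] F) = TT (u * e + v * g) := by
      unfold TT; rw [map_add]
    rw [this, huv]
    unfold TT
    simp
  have hb : χ (TT g (TT v x)) = 1 := by
    have h3 : (χ * χ') (TT g (TT v x)) = 1 := by rw [h]; rfl
    rwa [AddChar.mul_apply, hχ' _ ((mem_VVg _ _).mpr ⟨_, rfl⟩), mul_one] at h3
  rw [hx, AddChar.map_add_eq_mul, hχ _ ((mem_VVg _ _).mpr ⟨_, rfl⟩), hb]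
  simp

end
end WB

namespace WB
section
variable {F : Type*} [Field F] [Fintype F]

theorem exists_std (p : ℕ) [Fact p.Prime] [CharP F p] :
    ∃ ψ : AddChar F ℂ, ψ ≠ 1 ∧ ∀ z, ψ (z ^ p - z) = 1 := by
  letI := ZMod.algebra F p
  let ψ : AddChar F ℂ := (ZMod.stdAddChar (N := p)).compAddMonoidHom (Algebra.trace (ZMod p) F).toAddMonoidHom
  have hψ : ∀ x, ψ x = ZMod.stdAddChar (Algebra.trace (ZMod p) F x) := fun _ => rfl
  refine ⟨ψ, ?_, ?_⟩
  · intro h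
    obtain ⟨x, hx⟩ := Algebra.trace_surjective (ZMod p) F 1
    have h1 : ψ x = 1 := by rw [h]; rfl
    rw [hψ, hx, ← AddChar.map_zero_eq_one (ZMod.stdAddChar (N := p))] at h1
    exact one_ne_zero (ZMod.injective_stdAddChar h1)
  · intro z
    have h := Algebra.trace_eq_of_algEquiv (FiniteField.frobeniusAlgEquiv (ZMod p) F p) z
    rw [FiniteField.frobeniusAlgEquiv_apply, ZMod.card] at h
    rw [hψ, map_sub, h, sub_self, AddChar.map_zero_eq_one]

theorem exists_shift (ψ : AddChar F ℂ) (hψ : ψ ≠ 1) (η : AddChar F ℂ) : ∃ β : F, ∀ x, η x = ψ (β * x) := by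
  have hinj := AddChar.to_mulShift_inj_of_isPrimitive (AddChar.IsPrimitive.of_ne_one hψ)
  have hb := (Fintype.bijective_iff_injective_and_card _).mpr ⟨hinj, (AddChar.card_eq (α := F)).symm⟩
  obtain ⟨β, hβ⟩ := hb.2 η
  exact ⟨β, fun x => by rw [← hβ, AddChar.mulShift_apply]⟩

variable {K : Type*} [Field K] [DecidableEq K] [Fintype K] [Algebra K F]

/-- trace condition indicator -/
noncomputable def TInd (a : K) (y : F) : ℂ := if Algebra.trace K F y = a then 1 else 0

theorem TInd_rep (a : K) : Rep {h : F → ℂ | ∃ η : AddChar F ℂ, h = η} 1 (TInd a) := by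
  obtain ⟨y0, hy0⟩ := Algebra.trace_surjective K F a
  have := coset_rep (F := F) (LinearMap.ker (Algebra.trace K F)).toAddSubgroup y0
  convert this using 2 with y
  unfold TInd
  congr 1
  rw [Submodule.mem_toAddSubgroup, LinearMap.mem_ker, map_sub, hy0, sub_eq_zero]

/-- The evaluation of `f` as a function. -/
noncomputable def fev (f : RatFunc F) (x : F) : F := RatFunc.eval (RingHom.id F) x f

/-- summation functional -/
noncomputable def sumL : (F → ℂ) →ₗ[ℂ] ℂ := ∑ x : F, LinearMap.proj x

theorem sumL_apply (h : F → ℂ) : sumL h = ∑ x, h x := by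
  simp [sumL]

theorem Ncount_eq (f : RatFunc F) (a : K) (l₁ l₂ : ℕ) (g : K[X]) :
    (Ncount (Fintype.card K) f a l₁ l₂ g : ℂ) =
      sumL (AInd l₁ * (AInd l₂ ∘ fev f) * (DInd g * (TInd a ∘ fun x : F => x⁻¹))) := by
  rw [sumL_apply, Ncount, Nat.card_eq_fintype_card, Fintype.card_subtype, Finset.card_filter]
  push_cast
  refine Finset.sum_congr rfl fun x _ => ?_
  simp only [Pi.mul_apply, Function.comp_apply, AInd, DInd, TInd, fev]
  by_cases c1 : IsUFree l₁ x <;> by_cases c2 : IsGFree (Fintype.card K) g x <;>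
    by_cases c3 : IsUFree l₂ (RatFunc.eval (RingHom.id F) x f) <;> by_cases c4 : Algebra.trace K F x⁻¹ = a <;>
    simp only [c1, c2, c3, c4, and_true, and_false, and_self, if_true, if_false, mul_zero, mul_one, zero_mul]

theorem main_bound {p : ℕ} [Fact p.Prime] [CharP F p] (hF2 : 2 < Fintype.card F) (f : RatFunc F) (hf : ¬ ExceptionalRatFunc f)
    (n : ℕ) (hdeg : f.num.natDegree + f.denom.natDegree = n)
    (S1 S2 S3 : Set (F → ℂ)) (B1 B2 B3 : ℝ) (A1 A2 A3 : F → ℂ) (h1 : Rep S1 B1 A1) (h2 : Rep S2 B2 A2) (h3 : Rep S3 B3 A3)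
    (a : K)
    (H : ∀ u ∈ S1, ∀ v ∈ S2, ∀ w ∈ S3, ∃ (χ₁ χ₂ : MulChar F ℂ) (η : AddChar F ℂ), u = χ₁ ∧ v = χ₂ ∧ w = η ∧
      (χ₁ ≠ 1 ∨ χ₂ ≠ 1 ∨ η ≠ 1)) :
    ‖sumL (A1 * (A2 ∘ fev f) * (A3 * (TInd a ∘ fun x : F => x⁻¹)))‖ ≤ B1 * B2 * B3 * ((n + 2) * Real.sqrt (Fintype.card F)) := by
  obtain ⟨ψ, hψ1, hψ⟩ := exists_std (F := F) p
  have r12 := h1.mul (h2.comp (S' := {h | ∃ v ∈ S2, h = v ∘ fev f}) (fev f) (fun v hv => ⟨v, hv, rfl⟩))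
    (S'' := {h | ∃ u ∈ S1, ∃ v ∈ S2, h = u * (v ∘ fev f)}) (by
      rintro u hu _ ⟨v, hv, rfl⟩; exact ⟨u, hu, v, hv, rfl⟩)
  have r34 := h3.mul ((TInd_rep (F := F) a).comp (S' := {h | ∃ η : AddChar F ℂ, h = η ∘ fun x : F => x⁻¹}) (fun x => x⁻¹)
      (by rintro _ ⟨η, rfl⟩; exact ⟨η, rfl⟩))
    (S'' := {h | ∃ w ∈ S3, ∃ η : AddChar F ℂ, h = w * (η ∘ fun x : F => x⁻¹)}) (by
      rintro u hu _ ⟨v, rfl⟩; exact ⟨u, hu, v, rfl⟩)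
  have r := r12.mul r34 (S'' := {h | ∃ u ∈ S1, ∃ v ∈ S2, ∃ w ∈ S3, ∃ η : AddChar F ℂ,
      h = u * (v ∘ fev f) * (w * (η ∘ fun x : F => x⁻¹))}) (by
    rintro _ ⟨u, hu, v, hv, rfl⟩ _ ⟨w, hw, η, rfl⟩
    exact ⟨u, hu, v, hv, w, hw, η, rfl⟩)
  have := r sumL ((n + 2) * Real.sqrt (Fintype.card F)) ?_
  · rwa [mul_one] at this
  rintro _ ⟨u, hu, v, hv, w, hw, η', rfl⟩
  obtain ⟨χ₁, χ₂, η, rfl, rfl, rfl, hne⟩ := H u hu v hv w hw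
  obtain ⟨β, hβ⟩ := exists_shift ψ hψ1 η
  obtain ⟨γ, hγ⟩ := exists_shift ψ hψ1 η'
  have hnt : β ≠ 0 ∨ γ ≠ 0 ∨ χ₁ ≠ 1 ∨ χ₂ ≠ 1 := by
    by_cases hb : β = 0
    · have : η = 1 := by
        ext x; rw [hβ, hb, zero_mul, AddChar.map_zero_eq_one]; rfl
      tauto
    · exact Or.inl hb
  have hw := weil p hF2 χ₁ χ₂ ψ hψ hψ1 β γ f hf n hdeg hnt
  rw [sumL_apply]
  convert hw using 2
  refine Finset.sum_congr rfl fun x _ => ?_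
  simp only [Pi.mul_apply, Function.comp_apply, fev, hβ, hγ, AddChar.map_add_eq_mul]

end
end WB

/-- The sieving error bounds: for `l ∣ q^m − 1`, `g ∣ x^m − 1`, a prime `c ∣ q^m − 1` with
`c ∤ l`, and a monic irreducible `e ∣ x^m − 1` with `e ∤ g`,
`|N(cl,l,g) − θ(c)N(l,l,g)| ≤ (n+2)θ(c)θ(l)²Θ(g)W(l)²W(g)q^{m/2}`, and the analogous
bounds for `N(l,cl,g)` and `N(l,l,eg)` (with `Θ(e)` in place of `θ(c)`). -/
theorem Ncount_sieve_error_bounds {K F : Type*} [Field K] [DecidableEq K] [Field F]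
    [Fintype K] [Fintype F] [Algebra K F]
    (q m n : ℕ) (p t : ℕ) (hp : p.Prime) (hq : q = p ^ t) (ht : 0 < t)
    (hm : 3 ≤ m) (hn : 0 < n) (hK : Fintype.card K = q) (hF : Fintype.card F = q ^ m)
    (f : RatFunc F) (hf : ¬ ExceptionalRatFunc f)
    (hdeg : f.num.natDegree + f.denom.natDegree = n) (a : K)
    (l : ℕ) (hl : l ∣ q ^ m - 1) (g : K[X]) (hg : g ∣ X ^ m - 1)
    (c : ℕ) (hc : c.Prime) (hcdvd : c ∣ q ^ m - 1) (hcl : ¬ c ∣ l)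
    (e : K[X]) (he : Irreducible e) (hemonic : e.Monic) (hedvd : e ∣ X ^ m - 1)
    (heg : ¬ e ∣ g)
    (θ : ℕ → ℝ) (hθ : θ = fun u : ℕ => (u.totient : ℝ) / u)
    (Θ : K[X] → ℝ) (hΘ : Θ = fun h : K[X] => (polyTotient h : ℝ) / (q : ℝ) ^ h.natDegree)
    (W : ℕ → ℝ) (hW : W = fun u : ℕ => (2 : ℝ) ^ u.primeFactors.card)
    (Wp : K[X] → ℝ) (hWp : Wp = fun h : K[X] => (2 : ℝ) ^ (normalizedFactors h).toFinset.card) :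
    |(Ncount q f a (c * l) l g : ℝ) - θ c * Ncount q f a l l g| ≤
        (n + 2) * θ c * (θ l) ^ 2 * Θ g * (W l) ^ 2 * Wp g * (q : ℝ) ^ ((m : ℝ) / 2) ∧
    |(Ncount q f a l (c * l) g : ℝ) - θ c * Ncount q f a l l g| ≤
        (n + 2) * θ c * (θ l) ^ 2 * Θ g * (W l) ^ 2 * Wp g * (q : ℝ) ^ ((m : ℝ) / 2) ∧
    |(Ncount q f a l l (e * g) : ℝ) - Θ e * Ncount q f a l l g| ≤
        (n + 2) * Θ e * (θ l) ^ 2 * Θ g * (W l) ^ 2 * Wp g * (q : ℝ) ^ ((m : ℝ) / 2) := by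
  have hp' : Fact p.Prime := ⟨hp⟩
  have hcardF : Fintype.card F = p ^ (t * m) := by rw [hF, hq, pow_mul]
  have hFp : CharP F p := by
    obtain ⟨r, hr⟩ := CharP.exists F
    haveI := hr
    haveI : Fact r.Prime := ⟨CharP.char_is_prime F r⟩
    obtain ⟨k, hk, hk2⟩ := FiniteField.card F r
    have h1 : r ∣ p ^ (t * m) := by
      rw [← hcardF, hk2]; exact dvd_pow_self r k.ne_zero
    have h2 := (Nat.prime_dvd_prime_iff_eq hk hp).mp (hk.dvd_of_dvd_pow h1)
    rw [← h2]; exact hr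
  have hm0 : m ≠ 0 := by omega
  have hq2 : 2 ≤ q := by rw [← hK]; exact Fintype.one_lt_card
  have hF2 : 2 < Fintype.card F := by
    rw [hF]
    calc 2 < 2 ^ 3 := by norm_num
      _ ≤ q ^ 3 := Nat.pow_le_pow_left hq2 3
      _ ≤ q ^ m := Nat.pow_le_pow_right (by omega) hm
  have hsqrt : Real.sqrt (Fintype.card F) = (q : ℝ) ^ ((m : ℝ) / 2) := by
    rw [hF, Real.sqrt_eq_rpow]
    push_cast
    rw [← Real.rpow_natCast, ← Real.rpow_mul (by positivity)]
    congr 1; ring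
  subst hK
  rw [← hF] at hl hcdvd
  subst hθ hΘ hW hWp
  have rl := WB.AInd_rep (F := F) l hl
  have rc := WB.AInd_diff_rep (F := F) c l hc hcl hl hcdvd
  have rg := WB.DInd_rep (F := F) m hm0 hF g hg
  have re := WB.DInd_diff_rep (F := F) m hm0 hF g hg e he hemonic hedvd heg
  refine ⟨?_, ?_, ?_⟩
  · have h := WB.main_bound (p := p) hF2 f hf n hdeg _ _ _ _ _ _ _ _ _ rc rl rg a (by
      rintro _ ⟨χ₁, rfl, h1⟩ _ ⟨χ₂, rfl, h2⟩ _ ⟨η, rfl, h3⟩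
      exact ⟨χ₁, χ₂, η, rfl, rfl, rfl, Or.inl h1⟩)
    rw [sub_mul, sub_mul, map_sub, smul_mul_assoc, smul_mul_assoc, map_smul, smul_eq_mul,
      ← WB.Ncount_eq, ← WB.Ncount_eq, hsqrt] at h
    have e1 : ∀ x y z : ℝ, |x - y * z| = ‖(x : ℂ) - (y : ℂ) * (z : ℂ)‖ := by
      intro x y z
      rw [← Complex.ofReal_mul, ← Complex.ofReal_sub, Complex.norm_real, Real.norm_eq_abs]
    rw [e1]
    refine le_trans (le_of_eq ?_) (h.trans (le_of_eq ?_))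
    · simp only [Complex.ofReal_natCast]
    · ring
  · have h := WB.main_bound (p := p) hF2 f hf n hdeg _ _ _ _ _ _ _ _ _ rl rc rg a (by
      rintro _ ⟨χ₁, rfl, h1⟩ _ ⟨χ₂, rfl, h2⟩ _ ⟨η, rfl, h3⟩
      exact ⟨χ₁, χ₂, η, rfl, rfl, rfl, Or.inr (Or.inl h2)⟩)
    have e0 : ∀ (z : ℂ) (A B : F → ℂ), (A - z • B) ∘ WB.fev f = A ∘ WB.fev f - z • (B ∘ WB.fev f) := fun _ _ _ => rfl
    rw [e0, mul_sub, sub_mul, map_sub, mul_smul_comm, smul_mul_assoc, map_smul, smul_eq_mul,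
      ← WB.Ncount_eq, ← WB.Ncount_eq, hsqrt] at h
    have e1 : ∀ x y z : ℝ, |x - y * z| = ‖(x : ℂ) - (y : ℂ) * (z : ℂ)‖ := by
      intro x y z
      rw [← Complex.ofReal_mul, ← Complex.ofReal_sub, Complex.norm_real, Real.norm_eq_abs]
    rw [e1]
    refine le_trans (le_of_eq ?_) (h.trans (le_of_eq ?_))
    · simp only [Complex.ofReal_natCast]
    · ring
  · have h := WB.main_bound (p := p) hF2 f hf n hdeg _ _ _ _ _ _ _ _ _ rl rl re a (by
      rintro _ ⟨χ₁, rfl, h1⟩ _ ⟨χ₂, rfl, h2⟩ _ ⟨η, rfl, h3⟩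
      exact ⟨χ₁, χ₂, η, rfl, rfl, rfl, Or.inr (Or.inr h3)⟩)
    rw [sub_mul, mul_sub, map_sub, smul_mul_assoc, mul_smul_comm, map_smul, smul_eq_mul,
      ← WB.Ncount_eq, ← WB.Ncount_eq, hsqrt] at h
    have e1 : ∀ x y z : ℝ, |x - y * z| = ‖(x : ℂ) - (y : ℂ) * (z : ℂ)‖ := by
      intro x y z
      rw [← Complex.ofReal_mul, ← Complex.ofReal_sub, Complex.norm_real, Real.norm_eq_abs]
    rw [e1]
    refine le_trans (le_of_eq ?_) (h.trans (le_of_eq ?_))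
    · simp only [Complex.ofReal_natCast]
    · ring
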